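/- arXiv:quant-ph/0308088 — 4 statements merged into one kernel-verified Lean document; each statement's English description precedes it below -/
import Mathlib

section
/- If a state ρ^{AB} on H_A ⊗ H_B admits an extension ρ^{ABE} on H_A ⊗ H_B ⊗ H_E with H_E finite-dimensional such that the quantum conditional mutual information vanishes, I(A;B|E) = 0, then ρ^{AB} is separable, i.e. ρ^{AB} = ∑_i p_i |ψ_i⟩⟨ψ_i| ⊗ |φ_i⟩⟨φ_i| for some finite probability distribution (p_i) and unit vectors |ψ_i⟩ ∈ H_A, |φ_i⟩ ∈ H_B. -/
open Matrix BigOperators Kronecker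
open scoped Classical ComplexOrder

noncomputable section

/-- A (quantum) state: positive semidefinite matrix of trace 1. -/
def IsState {n : Type*} [Fintype n] (ρ : Matrix n n ℂ) : Prop :=
  ρ.PosSemidef ∧ ρ.trace = 1

/-- Von Neumann entropy (base 2), via the eigenvalues of a Hermitian matrix. -/
def vonNeumannEntropy {n : Type*} [Fintype n] (ρ : Matrix n n ℂ) : ℝ :=
  if h : ρ.IsHermitian then ∑ i, -(h.eigenvalues i * Real.logb 2 (h.eigenvalues i)) else 0

/-- Partial trace over the second (right) factor. -/
def ptraceR {A B : Type*} [Fintype A] [Fintype B]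
    (ρ : Matrix (A × B) (A × B) ℂ) : Matrix A A ℂ :=
  fun i j => ∑ b, ρ (i, b) (j, b)

/-- Partial trace over the first (left) factor. -/
def ptraceL {A B : Type*} [Fintype A] [Fintype B]
    (ρ : Matrix (A × B) (A × B) ℂ) : Matrix B B ℂ :=
  fun i j => ∑ a, ρ (a, i) (a, j)

variable {A B E : Type*} [Fintype A] [Fintype B] [Fintype E]

/-- Marginal of a tripartite state on `A × E` (trace out `B`). -/
def margAE (ρ : Matrix (A × B × E) (A × B × E) ℂ) : Matrix (A × E) (A × E) ℂ :=
  fun x y => ∑ b, ρ (x.1, b, x.2) (y.1, b, y.2)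

/-- Marginal of a tripartite state on `B × E` (trace out `A`). -/
def margBE (ρ : Matrix (A × B × E) (A × B × E) ℂ) : Matrix (B × E) (B × E) ℂ :=
  fun x y => ∑ a, ρ (a, x.1, x.2) (a, y.1, y.2)

/-- Marginal of a tripartite state on `E` (trace out `A` and `B`). -/
def margE (ρ : Matrix (A × B × E) (A × B × E) ℂ) : Matrix E E ℂ :=
  fun x y => ∑ a, ∑ b, ρ (a, b, x) (a, b, y)

/-- Marginal of a tripartite state on `A × B` (trace out `E`). -/
def margAB (ρ : Matrix (A × B × E) (A × B × E) ℂ) : Matrix (A × B) (A × B) ℂ :=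
  fun x y => ∑ e, ρ (x.1, x.2, e) (y.1, y.2, e)

/-- Quantum conditional mutual information `I(A;B|E) = S(AE)+S(BE)-S(ABE)-S(E)`. -/
def condMutualInfo (ρ : Matrix (A × B × E) (A × B × E) ℂ) : ℝ :=
  vonNeumannEntropy (margAE ρ) + vonNeumannEntropy (margBE ρ)
    - vonNeumannEntropy ρ - vonNeumannEntropy (margE ρ)

/-- Squashed entanglement: infimum of `(1/2) I(A;B|E)` over all finite-dimensional
extensions of `ρ`. -/
def Esq {A B : Type*} [Fintype A] [Fintype B] (ρ : Matrix (A × B) (A × B) ℂ) : ℝ :=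
  sInf { x : ℝ | ∃ (d : ℕ) (ρE : Matrix (A × B × Fin d) (A × B × Fin d) ℂ),
    IsState ρE ∧ margAB ρE = ρ ∧ x = (1 / 2) * condMutualInfo ρE }

/-- Outer product `|ψ⟩⟨ψ|`. -/
def outer {n : Type*} (ψ : n → ℂ) : Matrix n n ℂ :=
  Matrix.vecMulVec ψ (star ψ)

/-- Trace norm of a Hermitian matrix: sum of the absolute values of its eigenvalues. -/
def traceNorm {n : Type*} [Fintype n] (X : Matrix n n ℂ) : ℝ :=
  if h : X.IsHermitian then ∑ i, |h.eigenvalues i| else 0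

/-- Entanglement of formation: infimum of average entanglement entropy over all
finite pure-state ensembles for `ρ`. -/
def EoF {A B : Type*} [Fintype A] [Fintype B] (ρ : Matrix (A × B) (A × B) ℂ) : ℝ :=
  sInf { x : ℝ | ∃ (n : ℕ) (p : Fin n → ℝ) (ψ : Fin n → A × B → ℂ),
    (∀ k, 0 ≤ p k) ∧ (∑ k, p k) = 1 ∧ (∀ k, ∑ i, ‖ψ k i‖ ^ 2 = 1) ∧
    (∑ k, (p k : ℂ) • outer (ψ k)) = ρ ∧
    x = ∑ k, p k * vonNeumannEntropy (ptraceR (outer (ψ k))) }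

/-- The function `η` : `η(x) = -x log₂ x` for `x ≤ 1/4`, `1/2` otherwise. -/
def eta (x : ℝ) : ℝ := if x ≤ 1 / 4 then -(x * Real.logb 2 x) else 1 / 2

lemma interp_cauchy (S : Finset ℝ) (hS : ∀ x ∈ S, 0 < x) (h : ℝ → ℝ) :
    ∃ c : ℝ → ℝ, ∀ x ∈ S, ∑ t ∈ S, c t / (x + t) = h x := by
  set v : ℝ → ℝ := fun s => -s with hv
  set D : ℝ → ℝ := fun x => Polynomial.eval x (Lagrange.nodal S v) with hD
  set P := Lagrange.interpolate S id (fun x => h x * D x) with hP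
  have hinj : Set.InjOn (id : ℝ → ℝ) S := Set.injOn_id _
  have hinj2 : Set.InjOn v S := fun a _ b _ hab => neg_injective hab
  have hdeg : P.degree < S.card := Lagrange.degree_interpolate_lt _ hinj
  have hPeq : P = Lagrange.interpolate S v (fun s => P.eval (v s)) :=
    Lagrange.eq_interpolate hinj2 hdeg
  refine ⟨fun s => Lagrange.nodalWeight S v s * P.eval (v s), fun x hx => ?_⟩
  have hne : ∀ s ∈ S, x ≠ v s := by
    intro s hs hxs
    have h1 := hS x hx
    have h2 := hS s hs
    simp only [hv] at hxs
    linarith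
  have h1 : P.eval x = h x * D x := Lagrange.eval_interpolate_at_node _ hinj hx
  have h2 : P.eval x = D x * ∑ i ∈ S, Lagrange.nodalWeight S v i * (x - v i)⁻¹ * P.eval (v i) := by
    conv_lhs => rw [hPeq]
    exact Lagrange.eval_interpolate_not_at_node _ hne
  have hDx : D x ≠ 0 := Lagrange.eval_nodal_not_at_node hne
  have h3 : D x * ∑ i ∈ S, Lagrange.nodalWeight S v i * (x - v i)⁻¹ * P.eval (v i) = D x * h x := by
    rw [← h2, h1, mul_comm]
  rw [← mul_left_cancel₀ hDx h3]
  refine Finset.sum_congr rfl fun s _ => ?_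
  simp only [hv, sub_neg_eq_add]
  ring

lemma spectral_ex {n : Type*} [Fintype n] [DecidableEq n] (ρ : Matrix n n ℂ) (h : ρ.PosSemidef) :
    ∃ (U : Matrix n n ℂ) (p : n → ℝ), Uᴴ * U = 1 ∧ U * Uᴴ = 1 ∧ (∀ i, 0 ≤ p i) ∧
      ρ = U * diagonal (fun i => (p i : ℂ)) * Uᴴ ∧
      vonNeumannEntropy ρ * Real.log 2 = -∑ i, p i * Real.log (p i) := by
  have hinst : (fun a b => Classical.propDecidable (a = b) : DecidableEq n) = ‹DecidableEq n› :=
    Subsingleton.elim _ _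
  subst hinst
  refine ⟨h.1.eigenvectorUnitary, h.1.eigenvalues, ?_, ?_, h.eigenvalues_nonneg, ?_, ?_⟩
  · exact Unitary.coe_star_mul_self _
  · exact Unitary.coe_mul_star_self _
  · have := h.1.spectral_theorem
    rw [Unitary.conjStarAlgAut_apply] at this
    exact this
  · rw [vonNeumannEntropy, dif_pos h.1, Finset.sum_mul, ← Finset.sum_neg_distrib]
    refine Finset.sum_congr rfl fun i _ => ?_
    have : Real.log 2 ≠ 0 := (Real.log_pos one_lt_two).ne'
    rw [Real.logb]
    field_simp

lemma psd_factor {n : Type*} [Fintype n] (X : Matrix n n ℂ) (hX : X.PosSemidef) :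
    ∃ B : Matrix n n ℂ, X = Bᴴ * B := by
  obtain ⟨U, p, -, -, hp, hX, -⟩ := spectral_ex X hX
  refine ⟨diagonal (fun i => ((Real.sqrt (p i) : ℝ) : ℂ)) * Uᴴ, ?_⟩
  rw [conjTranspose_mul, conjTranspose_conjTranspose, diagonal_conjTranspose,
    Matrix.mul_assoc, ← Matrix.mul_assoc (diagonal _) (diagonal _), diagonal_mul_diagonal,
    ← Matrix.mul_assoc, hX]
  congr 3
  ext i
  simp only [Pi.star_apply, RCLike.star_def, Complex.conj_ofReal]
  rw [← Complex.ofReal_mul, Real.mul_self_sqrt (hp i)]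

lemma psd_mul_eq_zero {m n : Type*} [Fintype m] [Fintype n] (X : Matrix n n ℂ) (hX : X.PosSemidef)
    (N : Matrix n m ℂ) (h : (Nᴴ * X * N).trace = 0) : X * N = 0 := by
  obtain ⟨B, rfl⟩ := psd_factor X hX
  have : (B * N)ᴴ * (B * N) = Nᴴ * (Bᴴ * B) * N := by
    simp [conjTranspose_mul, Matrix.mul_assoc]
  rw [← this, trace_conjTranspose_mul_self_eq_zero_iff] at h
  rw [Matrix.mul_assoc, h, Matrix.mul_zero]

/-- Diagonalisation data for a pair of psd matrices with `supp ρ ⊆ supp σ`. -/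
structure PairSys {n : Type*} [Fintype n] [DecidableEq n] (ρ σ U V : Matrix n n ℂ) (p q : n → ℝ) :
    Prop where
  UU : Uᴴ * U = 1
  UU' : U * Uᴴ = 1
  VV : Vᴴ * V = 1
  VV' : V * Vᴴ = 1
  p0 : ∀ i, 0 ≤ p i
  q0 : ∀ i, 0 ≤ q i
  hρ : ρ = U * diagonal (fun i => (p i : ℂ)) * Uᴴ
  hσ : σ = V * diagonal (fun i => (q i : ℂ)) * Vᴴ
  supp : ∀ j i, q j = 0 → (p i : ℂ) * (Vᴴ * U) j i = 0

namespace PairSys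

variable {n : Type*} [Fintype n] [DecidableEq n] {ρ σ U V : Matrix n n ℂ} {p q : n → ℝ}

lemma rho_entry (H : PairSys ρ σ U V p q) (j i : n) :
    (Vᴴ * ρ * U) j i = (p i : ℂ) * (Vᴴ * U) j i := by
  have : Vᴴ * ρ * U = (Vᴴ * U) * diagonal (fun i => (p i : ℂ)) := by
    rw [H.hρ]
    simp only [Matrix.mul_assoc, H.UU, Matrix.mul_one]
  rw [this, mul_diagonal, mul_comm]

lemma lhs_entry (H : PairSys ρ σ U V p q) (Y : Matrix n n ℂ) (T : ℝ) (j i : n) :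
    (Vᴴ * (σ * Y + (T : ℂ) • (Y * ρ)) * U) j i =
      ((q j + T * p i : ℝ) : ℂ) * (Vᴴ * Y * U) j i := by
  have h1 : Vᴴ * (σ * Y + (T : ℂ) • (Y * ρ)) * U =
      diagonal (fun i => (q i : ℂ)) * (Vᴴ * Y * U) +
        (T : ℂ) • ((Vᴴ * Y * U) * diagonal (fun i => (p i : ℂ))) := by
    rw [Matrix.mul_add, Matrix.add_mul, Matrix.mul_smul, Matrix.smul_mul]
    congr 1
    · rw [H.hσ]
      simp only [← Matrix.mul_assoc, H.VV, Matrix.one_mul]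
    · rw [H.hρ]
      simp only [Matrix.mul_assoc, H.UU, Matrix.mul_one]
  rw [h1, Matrix.add_apply, Matrix.smul_apply, diagonal_mul, mul_diagonal]
  push_cast
  simp only [smul_eq_mul]
  ring

lemma eq_of_conj (H : PairSys ρ σ U V p q) {X X' : Matrix n n ℂ}
    (h : ∀ j i, (Vᴴ * X * U) j i = (Vᴴ * X' * U) j i) : X = X' := by
  have h : Vᴴ * X * U = Vᴴ * X' * U := by ext j i; exact h j i
  have h2 := congrArg (fun M => V * M * Uᴴ) h
  simp only [Matrix.mul_assoc, H.UU', Matrix.mul_one] at h2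
  simpa only [← Matrix.mul_assoc, H.VV', Matrix.one_mul] using h2

/-- The solution of `σ Y + T Y ρ = ρ`. -/
def ysol (U V : Matrix n n ℂ) (p q : n → ℝ) (T : ℝ) : Matrix n n ℂ :=
  V * (Matrix.of fun j i => (p i : ℂ) * (Vᴴ * U) j i / ((q j + T * p i : ℝ) : ℂ)) * Uᴴ

lemma ysol_entry (H : PairSys ρ σ U V p q) (T : ℝ) (j i : n) :
    (Vᴴ * ysol U V p q T * U) j i =
      (p i : ℂ) * (Vᴴ * U) j i / ((q j + T * p i : ℝ) : ℂ) := by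
  have : Vᴴ * ysol U V p q T * U =
      (Matrix.of fun j i => (p i : ℂ) * (Vᴴ * U) j i / ((q j + T * p i : ℝ) : ℂ)) := by
    rw [ysol]
    simp only [Matrix.mul_assoc, H.UU, Matrix.mul_one]
    simp only [← Matrix.mul_assoc, H.VV, Matrix.one_mul]
  rw [this, Matrix.of_apply]

lemma ysol_solves (H : PairSys ρ σ U V p q) {T : ℝ} (hT : 0 < T) :
    σ * ysol U V p q T + (T : ℂ) • (ysol U V p q T * ρ) = ρ := by
  refine H.eq_of_conj fun j i => ?_
  rw [H.lhs_entry, H.rho_entry, H.ysol_entry]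
  by_cases h : q j + T * p i = 0
  · have h1 := H.q0 j
    have h2 := mul_nonneg hT.le (H.p0 i)
    have hq : q j = 0 := by linarith
    rw [H.supp j i hq]
    simp
  · have : ((q j + T * p i : ℝ) : ℂ) ≠ 0 := by exact_mod_cast h
    field_simp

lemma trace_ysol (H : PairSys ρ σ U V p q) (T : ℝ) :
    (ρ * ysol U V p q T).trace = ((∑ k : n × n,
      p k.1 * Complex.normSq ((Vᴴ * U) k.2 k.1) * p k.1 / (q k.2 + T * p k.1) : ℝ) : ℂ) := by
  have h1 : (ρ * ysol U V p q T).trace =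
      (diagonal (fun i => (p i : ℂ)) * ((Vᴴ * U)ᴴ * (Vᴴ * ysol U V p q T * U))).trace := by
    conv_lhs => rw [H.hρ]
    rw [Matrix.mul_assoc, Matrix.mul_assoc, trace_mul_comm, Matrix.mul_assoc]
    congr 2
    rw [conjTranspose_mul, conjTranspose_conjTranspose]
    simp only [Matrix.mul_assoc]
    rw [← Matrix.mul_assoc V, H.VV', Matrix.one_mul]
  rw [h1, Fintype.sum_prod_type, trace]
  push_cast
  refine Finset.sum_congr rfl fun i _ => ?_
  rw [diag_apply, diagonal_mul, Matrix.mul_apply, Finset.mul_sum]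
  refine Finset.sum_congr rfl fun j _ => ?_
  rw [H.ysol_entry, conjTranspose_apply, Complex.normSq_eq_conj_mul_self]
  push_cast
  simp only [RCLike.star_def]
  ring

lemma weight_pos (H : PairSys ρ σ U V p q) (k : n × n)
    (h : p k.1 * Complex.normSq ((Vᴴ * U) k.2 k.1) ≠ 0) : 0 < p k.1 ∧ 0 < q k.2 := by
  have hp : p k.1 ≠ 0 := left_ne_zero_of_mul h
  have hc : (Vᴴ * U) k.2 k.1 ≠ 0 := by
    intro h0
    exact h (by rw [h0]; simp)
  refine ⟨lt_of_le_of_ne (H.p0 _) (Ne.symm hp), lt_of_le_of_ne (H.q0 _) fun hq => ?_⟩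
  have := H.supp k.2 k.1 hq.symm
  rcases mul_eq_zero.1 this with h | h
  · exact hp (by exact_mod_cast h)
  · exact hc h

lemma sum_normSq (H : PairSys ρ σ U V p q) (i : n) :
    ∑ j, Complex.normSq ((Vᴴ * U) j i) = 1 := by
  have h : (Vᴴ * U)ᴴ * (Vᴴ * U) = 1 := by
    rw [conjTranspose_mul, conjTranspose_conjTranspose, Matrix.mul_assoc, ← Matrix.mul_assoc V,
      H.VV', Matrix.one_mul, H.UU]
  have h2 := congrFun (congrFun h i) i
  rw [Matrix.mul_apply, one_apply_eq] at h2
  have h3 : ((∑ j, Complex.normSq ((Vᴴ * U) j i) : ℝ) : ℂ) = 1 := by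
    rw [← h2]
    push_cast
    refine Finset.sum_congr rfl fun j _ => ?_
    rw [Complex.normSq_eq_conj_mul_self, conjTranspose_apply, RCLike.star_def]
  exact_mod_cast h3

lemma sum_weight_p (H : PairSys ρ σ U V p q) (f : ℝ → ℝ) :
    ∑ k : n × n, p k.1 * Complex.normSq ((Vᴴ * U) k.2 k.1) * f (p k.1) = ∑ i, p i * f (p i) := by
  rw [Fintype.sum_prod_type]
  refine Finset.sum_congr rfl fun i _ => ?_
  have : ∀ j, p i * Complex.normSq ((Vᴴ * U) j i) * f (p i) =
    p i * f (p i) * Complex.normSq ((Vᴴ * U) j i) := fun j => by ring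
  simp only [this]
  rw [← Finset.mul_sum, H.sum_normSq, mul_one]

lemma sum_weight_q (H : PairSys ρ σ U V p q) (f : ℝ → ℝ) :
    ((∑ k : n × n, p k.1 * Complex.normSq ((Vᴴ * U) k.2 k.1) * f (q k.2) : ℝ) : ℂ) =
      (ρ * (V * diagonal (fun j => (f (q j) : ℂ)) * Vᴴ)).trace := by
  have h1 : (ρ * (V * diagonal (fun j => (f (q j) : ℂ)) * Vᴴ)).trace =
      (diagonal (fun i => (p i : ℂ)) *
        ((Vᴴ * U)ᴴ * (diagonal (fun j => (f (q j) : ℂ)) * (Vᴴ * U)))).trace := by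
    conv_lhs => rw [H.hρ]
    rw [Matrix.mul_assoc, Matrix.mul_assoc, trace_mul_comm, Matrix.mul_assoc]
    congr 2
    rw [conjTranspose_mul, conjTranspose_conjTranspose]
    simp only [Matrix.mul_assoc]
  rw [h1, Fintype.sum_prod_type, trace]
  push_cast
  refine Finset.sum_congr rfl fun i _ => ?_
  rw [diag_apply, diagonal_mul, Matrix.mul_apply, Finset.mul_sum]
  refine Finset.sum_congr rfl fun j _ => ?_
  rw [diagonal_mul, conjTranspose_apply, Complex.normSq_eq_conj_mul_self]
  simp only [RCLike.star_def]
  ring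

/-- Interpolated square root identity. -/
lemma sqrt_identity (H : PairSys ρ σ U V p q) (S : Finset ℝ) (hS : ∀ x ∈ S, 0 < x) (c : ℝ → ℝ)
    (hc : ∀ i j, 0 < p i → 0 < q j →
      ∑ t ∈ S, c t / (q j / p i + t) = Real.sqrt (p i / q j))
    (Y : ℝ → Matrix n n ℂ) (hY : ∀ t ∈ S, σ * Y t + (t : ℂ) • (Y t * ρ) = ρ) :
    (V * diagonal (fun j => ((Real.sqrt (q j) : ℝ) : ℂ)) * Vᴴ) * (∑ t ∈ S, (c t : ℂ) • Y t) =
      U * diagonal (fun j => ((Real.sqrt (p j) : ℝ) : ℂ)) * Uᴴ := by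
  refine H.eq_of_conj fun j i => ?_
  have hl : Vᴴ * ((V * diagonal (fun j => ((Real.sqrt (q j) : ℝ) : ℂ)) * Vᴴ) *
      (∑ t ∈ S, (c t : ℂ) • Y t)) * U =
      diagonal (fun j => ((Real.sqrt (q j) : ℝ) : ℂ)) *
        (∑ t ∈ S, (c t : ℂ) • (Vᴴ * Y t * U)) := by
    simp only [← Matrix.mul_assoc, H.VV, Matrix.one_mul]
    simp only [Matrix.mul_assoc, Finset.mul_sum, Finset.sum_mul, Matrix.mul_smul, Matrix.smul_mul]
  have hr : Vᴴ * (U * diagonal (fun j => ((Real.sqrt (p j) : ℝ) : ℂ)) * Uᴴ) * U =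
      (Vᴴ * U) * diagonal (fun j => ((Real.sqrt (p j) : ℝ) : ℂ)) := by
    simp only [Matrix.mul_assoc, H.UU, Matrix.mul_one]
  have key : ∀ t ∈ S, ((q j + t * p i : ℝ) : ℂ) * (Vᴴ * Y t * U) j i =
      (p i : ℂ) * (Vᴴ * U) j i := by
    intro t ht
    rw [← H.lhs_entry, hY t ht, H.rho_entry]
  rw [hl, hr, diagonal_mul, mul_diagonal, Matrix.sum_apply]
  simp only [Matrix.smul_apply, smul_eq_mul]
  rcases (H.q0 j).eq_or_lt with hq | hq
  · rw [← hq, Real.sqrt_zero, Complex.ofReal_zero, zero_mul]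
    rcases mul_eq_zero.1 (H.supp j i hq.symm) with h | h
    · have h : p i = 0 := by exact_mod_cast h
      rw [h]; simp
    · rw [h, zero_mul]
  · rcases (H.p0 i).eq_or_lt with hp | hp
    · rw [← hp, Real.sqrt_zero, Complex.ofReal_zero, mul_zero]
      rw [Finset.sum_eq_zero, mul_zero]
      intro t ht
      have h := key t ht
      rw [← hp] at h
      have hq' : (q j : ℂ) ≠ 0 := by exact_mod_cast hq.ne'
      have h2 : (Vᴴ * Y t * U) j i = 0 := by simpa [hq.ne'] using h
      rw [h2, mul_zero]
    · have hent : ∀ t ∈ S, (c t : ℂ) * (Vᴴ * Y t * U) j i =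
          ((c t / (q j / p i + t) : ℝ) : ℂ) * (Vᴴ * U) j i := by
        intro t ht
        have ht0 := hS t ht
        have hpos : 0 < q j + t * p i := by positivity
        have hne : ((q j + t * p i : ℝ) : ℂ) ≠ 0 := by exact_mod_cast hpos.ne'
        have h1 : (Vᴴ * Y t * U) j i = ((p i / (q j + t * p i) : ℝ) : ℂ) * (Vᴴ * U) j i := by
          apply mul_left_cancel₀ hne
          rw [key t ht, Complex.ofReal_div]
          field_simp
        rw [h1, ← mul_assoc, ← Complex.ofReal_mul]
        congr 2
        field_simp
      rw [Finset.sum_congr rfl hent, ← Finset.sum_mul, ← Complex.ofReal_sum, hc i j hp hq,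
        ← mul_assoc, ← Complex.ofReal_mul, ← Real.sqrt_mul hq.le, mul_div_cancel₀ _ hq.ne', mul_comm]

end PairSys

section analysis

lemma logsum_deriv {ι : Type*} [Fintype ι] (w p q : ι → ℝ)
    (h : ∀ k, w k ≠ 0 → 0 < p k ∧ 0 < q k) (T : ℝ) (hT : 0 ≤ T) :
    HasDerivAt (fun T => ∑ k, w k * Real.log (q k + T * p k))
      (∑ k, w k * p k / (q k + T * p k)) T := by
  refine HasDerivAt.fun_sum fun k _ => ?_
  by_cases hw : w k = 0
  · simp only [hw, zero_mul, zero_div]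
    exact hasDerivAt_const _ _
  · obtain ⟨hp, hq⟩ := h k hw
    have hpos : q k + T * p k ≠ 0 := by positivity
    have h1 : HasDerivAt (fun T => q k + T * p k) (p k) T := by
      simpa using ((hasDerivAt_id T).mul_const (p k)).const_add (q k)
    have := (h1.log hpos).const_mul (w k)
    rwa [← mul_div_assoc] at this

lemma logsum_tendsto {ι : Type*} [Fintype ι] (w p q : ι → ℝ)
    (h : ∀ k, w k ≠ 0 → 0 < p k ∧ 0 < q k) :
    Filter.Tendsto (fun T => (∑ k, w k * Real.log (q k + T * p k)) - (∑ k, w k) * Real.log T)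
      Filter.atTop (nhds (∑ k, w k * Real.log (p k))) := by
  have h1 : ∀ k, Filter.Tendsto (fun T => w k * Real.log (q k / T + p k)) Filter.atTop
      (nhds (w k * Real.log (p k))) := by
    intro k
    by_cases hw : w k = 0
    · simp [hw]
    · obtain ⟨hp, hq⟩ := h k hw
      refine Filter.Tendsto.const_mul _ ?_
      have h2 : Filter.Tendsto (fun T : ℝ => q k / T + p k) Filter.atTop (nhds (0 + p k)) :=
        (Filter.Tendsto.div_atTop tendsto_const_nhds Filter.tendsto_id).add tendsto_const_nhds
      rw [zero_add] at h2
      exact h2.log hp.ne'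
  have h3 := tendsto_finsetSum Finset.univ fun k _ => h1 k
  refine h3.congr' ?_
  filter_upwards [Filter.eventually_gt_atTop 0] with T hT
  rw [Finset.sum_mul, ← Finset.sum_sub_distrib]
  refine Finset.sum_congr rfl fun k _ => ?_
  by_cases hw : w k = 0
  · simp [hw]
  · obtain ⟨hp, hq⟩ := h k hw
    have : q k + T * p k = (q k / T + p k) * T := by field_simp
    rw [this, Real.log_mul (by positivity) hT.ne']
    ring

lemma logsum_eq {ι κ : Type*} [Fintype ι] [Fintype κ] (w p q : ι → ℝ) (w' p' q' : κ → ℝ)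
    (h : ∀ k, w k ≠ 0 → 0 < p k ∧ 0 < q k) (h' : ∀ k, w' k ≠ 0 → 0 < p' k ∧ 0 < q' k)
    (hw : ∑ k, w k = ∑ k, w' k)
    (hle : ∀ T, 0 < T → ∑ k, w' k * p' k / (q' k + T * p' k) ≤ ∑ k, w k * p k / (q k + T * p k))
    (heq : ∑ k, w k * Real.log (q k) - ∑ k, w' k * Real.log (q' k) =
      ∑ k, w k * Real.log (p k) - ∑ k, w' k * Real.log (p' k)) (T : ℝ) (hT : 0 < T) :
    ∑ k, w k * p k / (q k + T * p k) = ∑ k, w' k * p' k / (q' k + T * p' k) := by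
  set G : ℝ → ℝ := fun T => (∑ k, w k * Real.log (q k + T * p k)) -
    ∑ k, w' k * Real.log (q' k + T * p' k) with hG
  have hd : ∀ T, 0 ≤ T → HasDerivAt G ((∑ k, w k * p k / (q k + T * p k)) -
      ∑ k, w' k * p' k / (q' k + T * p' k)) T := fun T hT =>
    (logsum_deriv w p q h T hT).sub (logsum_deriv w' p' q' h' T hT)
  have hmono : MonotoneOn G (Set.Ici 0) := by
    refine monotoneOn_of_deriv_nonneg (convex_Ici 0)
      (fun x hx => (hd x hx).continuousAt.continuousWithinAt)
      (fun x hx => ?_) fun x hx => ?_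
    · rw [interior_Ici] at hx
      exact (hd x (le_of_lt hx)).differentiableAt.differentiableWithinAt
    · rw [interior_Ici] at hx
      rw [(hd x (le_of_lt hx)).deriv]
      exact sub_nonneg.2 (hle x hx)
  have hlim : Filter.Tendsto G Filter.atTop (nhds (G 0)) := by
    have := (logsum_tendsto w p q h).sub (logsum_tendsto w' p' q' h')
    have h0 : G 0 = ∑ k, w k * Real.log (p k) - ∑ k, w' k * Real.log (p' k) := by
      rw [← heq]; simp [hG]
    rw [h0]
    refine this.congr fun T => ?_
    simp only [hG, hw]
    ring
  have hconst : ∀ x, 0 ≤ x → G x = G 0 := by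
    intro x hx
    refine le_antisymm ?_ (hmono (by simp) hx hx)
    refine ge_of_tendsto hlim ?_
    filter_upwards [Filter.eventually_ge_atTop x] with y hy
    exact hmono hx (hx.trans hy) hy
  have hd2 : HasDerivAt G 0 T := by
    refine (hasDerivAt_const T (G 0)).congr_of_eventuallyEq ?_
    filter_upwards [lt_mem_nhds hT] with y hy
    exact hconst y hy.le
  have := (hd T hT.le).unique hd2
  linarith

end analysis

set_option linter.unusedSectionVars false

section hat

variable {A B E F m : Type*} [Fintype A] [Fintype B] [Fintype E] [Fintype F] [Fintype m]

/-- The embedding `Y ↦ Y ⊗ 1_B` of operators on `AE` into operators on `ABE`. -/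
def hatM (B : Type*) {A E : Type*} (Y : Matrix (A × E) (A × E) ℂ) :
    Matrix (A × B × E) (A × B × E) ℂ :=
  fun x y => if x.2.1 = y.2.1 then Y (x.1, x.2.2) (y.1, y.2.2) else 0

lemma hatM_mul (Y Z : Matrix (A × E) (A × E) ℂ) : hatM B (Y * Z) = hatM B Y * hatM B Z := by
  ext ⟨a, b, e⟩ ⟨a', b', e'⟩
  simp only [hatM, Matrix.mul_apply, Fintype.sum_prod_type]
  by_cases h : b = b'
  · subst h
    simp only [if_true]
    refine Finset.sum_congr rfl fun x _ => ?_
    rw [Finset.sum_eq_single b]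
    · simp
    · intro c _ hc
      simp [hc]
    · simp
  · simp only [h, if_false]
    symm
    refine Finset.sum_eq_zero fun x _ => Finset.sum_eq_zero fun c _ => Finset.sum_eq_zero fun f _ => ?_
    by_cases h1 : b = c
    · subst h1; simp [h]
    · simp [h1]

lemma hatM_add (Y Z : Matrix (A × E) (A × E) ℂ) : hatM B (Y + Z) = hatM B Y + hatM B Z := by
  ext x y
  simp only [hatM, Matrix.add_apply]
  split_ifs <;> simp

lemma hatM_smul (c : ℂ) (Z : Matrix (A × E) (A × E) ℂ) : hatM B (c • Z) = c • hatM B Z := by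
  ext x y
  simp only [hatM, Matrix.smul_apply]
  split_ifs <;> simp

lemma hatM_zero : hatM B (0 : Matrix (A × E) (A × E) ℂ) = 0 := by
  ext x y
  simp [hatM]

lemma hatM_sum {ι : Type*} (s : Finset ι) (Y : ι → Matrix (A × E) (A × E) ℂ) :
    hatM B (∑ i ∈ s, Y i) = ∑ i ∈ s, hatM B (Y i) := by
  induction s using Finset.induction_on with
  | empty => simp [hatM_zero]
  | insert a s ha ih => rw [Finset.sum_insert ha, Finset.sum_insert ha, hatM_add, ih]

lemma hatM_conjTranspose (Y : Matrix (A × E) (A × E) ℂ) : hatM B Yᴴ = (hatM B Y)ᴴ := by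
  ext x y
  simp only [hatM, conjTranspose_apply]
  by_cases h : x.2.1 = y.2.1
  · simp [h]
  · simp [h, Ne.symm h]

lemma hatM_psd {Y : Matrix (A × E) (A × E) ℂ} (h : Y.PosSemidef) : (hatM B Y).PosSemidef := by
  obtain ⟨X, rfl⟩ := psd_factor Y h
  rw [hatM_mul, hatM_conjTranspose]
  exact posSemidef_conjTranspose_mul_self _

lemma hatM_kronecker (N : Matrix A A ℂ) (S : Matrix E E ℂ) :
    hatM B (N ⊗ₖ S) = N ⊗ₖ ((1 : Matrix B B ℂ) ⊗ₖ S) := by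
  ext ⟨a, b, e⟩ ⟨a', b', e'⟩
  simp only [hatM, kroneckerMap_apply, Matrix.one_apply]
  split_ifs <;> simp

lemma trace_mul_hatM (X : Matrix (A × B × E) (A × B × E) ℂ) (Y : Matrix (A × E) (A × E) ℂ) :
    (X * hatM B Y).trace = (margAE X * Y).trace := by
  simp only [trace, diag_apply, Matrix.mul_apply, Fintype.sum_prod_type, margAE, hatM]
  refine Finset.sum_congr rfl fun a _ => ?_
  rw [Finset.sum_comm]
  refine Finset.sum_congr rfl fun e _ => ?_
  rw [Finset.sum_comm]
  refine Finset.sum_congr rfl fun a' _ => ?_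
  have : ∀ b : B, (∑ b' : B, ∑ e' : E, X (a, b, e) (a', b', e') *
      if b' = b then Y (a', e') (a, e) else 0) = ∑ e', X (a, b, e) (a', b, e') * Y (a', e') (a, e) := by
    intro b
    rw [Finset.sum_eq_single b]
    · simp
    · intro c _ hc
      simp [hc]
    · simp
  simp only [this]
  rw [Finset.sum_comm]
  refine Finset.sum_congr rfl fun e' _ => ?_
  rw [Finset.sum_mul]

lemma margAE_kronecker (N : Matrix A A ℂ) (S : Matrix (B × E) (B × E) ℂ) :
    margAE (N ⊗ₖ S) = N ⊗ₖ ptraceL S := by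
  ext ⟨a, e⟩ ⟨a', e'⟩
  simp only [margAE, ptraceL, kroneckerMap_apply, Finset.mul_sum]

lemma trace_mul_one_kronecker (X : Matrix (A × F) (A × F) ℂ) (S : Matrix F F ℂ) :
    (X * ((1 : Matrix A A ℂ) ⊗ₖ S)).trace = (ptraceL X * S).trace := by
  simp only [trace, diag_apply, Matrix.mul_apply, Fintype.sum_prod_type, ptraceL,
    kroneckerMap_apply, Matrix.one_apply]
  have : ∀ (a : A) (f : F), (∑ a' : A, ∑ f' : F, X (a, f) (a', f') *
      ((if a' = a then 1 else 0) * S f' f)) = ∑ f', X (a, f) (a, f') * S f' f := by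
    intro a f
    rw [Finset.sum_eq_single a]
    · simp
    · intro c _ hc
      simp [hc]
    · simp
  simp only [this]
  rw [Finset.sum_comm]
  refine Finset.sum_congr rfl fun f _ => ?_
  rw [Finset.sum_comm]
  refine Finset.sum_congr rfl fun f' _ => ?_
  rw [Finset.sum_mul]

lemma ptraceL_psd {X : Matrix (A × F) (A × F) ℂ} (h : X.PosSemidef) : (ptraceL X).PosSemidef := by
  have : ptraceL X = ∑ a : A, X.submatrix (fun f => (a, f)) (fun f => (a, f)) := by
    ext f f'
    simp [ptraceL, Matrix.sum_apply]
  rw [this]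
  exact posSemidef_sum _ fun a _ => h.submatrix _

lemma margAE_psd {X : Matrix (A × B × E) (A × B × E) ℂ} (h : X.PosSemidef) :
    (margAE X).PosSemidef := by
  have : margAE X = ∑ b : B, X.submatrix (fun x => (x.1, b, x.2)) (fun x => (x.1, b, x.2)) := by
    ext f f'
    simp [margAE, Matrix.sum_apply]
  rw [this]
  exact posSemidef_sum _ fun a _ => h.submatrix _

lemma margAB_psd {X : Matrix (A × B × E) (A × B × E) ℂ} (h : X.PosSemidef) :
    (margAB X).PosSemidef := by
  have : margAB X = ∑ b : E, X.submatrix (fun x => (x.1, x.2, b)) (fun x => (x.1, x.2, b)) := by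
    ext f f'
    simp [margAB, Matrix.sum_apply]
  rw [this]
  exact posSemidef_sum _ fun a _ => h.submatrix _

lemma margBE_eq (X : Matrix (A × B × E) (A × B × E) ℂ) : margBE X = ptraceL X := rfl

lemma ptraceL_margAE (X : Matrix (A × B × E) (A × B × E) ℂ) : ptraceL (margAE X) = margE X := rfl

lemma ptraceL_margBE (X : Matrix (A × B × E) (A × B × E) ℂ) : ptraceL (margBE X) = margE X := by
  ext e e'
  exact Finset.sum_comm

lemma trace_margAE (X : Matrix (A × B × E) (A × B × E) ℂ) : (margAE X).trace = X.trace := by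
  simp only [trace, diag_apply, Fintype.sum_prod_type, margAE]
  exact Finset.sum_congr rfl fun a _ => Finset.sum_comm

/-- Kernel of a marginal. -/
lemma kernel_marginal {X : Matrix (A × F) (A × F) ℂ} (hX : X.PosSemidef) (W : Matrix F m ℂ)
    (h : ptraceL X * W = 0) : X * ((1 : Matrix A A ℂ) ⊗ₖ W) = 0 := by
  apply psd_mul_eq_zero _ hX
  rw [Matrix.mul_assoc, trace_mul_comm, Matrix.mul_assoc, conjTranspose_kronecker,
    ← mul_kronecker_mul, conjTranspose_one, Matrix.one_mul, trace_mul_one_kronecker,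
    ← Matrix.mul_assoc, h, Matrix.zero_mul, trace_zero]

lemma mk_pairSys [DecidableEq F] {X U : Matrix (A × F) (A × F) ℂ} {V : Matrix F F ℂ} {p : A × F → ℝ} {q : F → ℝ}
    (hX : X.PosSemidef) (UU : Uᴴ * U = 1) (UU' : U * Uᴴ = 1) (VV : Vᴴ * V = 1) (VV' : V * Vᴴ = 1)
    (p0 : ∀ i, 0 ≤ p i) (q0 : ∀ i, 0 ≤ q i)
    (hρ : X = U * diagonal (fun i => (p i : ℂ)) * Uᴴ)
    (hσ : ptraceL X = V * diagonal (fun i => (q i : ℂ)) * Vᴴ) :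
    PairSys X ((1 : Matrix A A ℂ) ⊗ₖ ptraceL X) U ((1 : Matrix A A ℂ) ⊗ₖ V) p (fun x => q x.2) where
  UU := UU
  UU' := UU'
  VV := by
    rw [conjTranspose_kronecker, ← mul_kronecker_mul, VV, conjTranspose_one, Matrix.one_mul,
      one_kronecker_one]
  VV' := by
    rw [conjTranspose_kronecker, ← mul_kronecker_mul, VV', conjTranspose_one, Matrix.one_mul,
      one_kronecker_one]
  p0 := p0
  q0 := fun x => q0 x.2
  hρ := hρ
  hσ := by
    have : diagonal (fun i : A × F => (q i.2 : ℂ)) =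
        (1 : Matrix A A ℂ) ⊗ₖ diagonal (fun i => (q i : ℂ)) := by
      rw [← diagonal_one, diagonal_kronecker_diagonal]
      simp
    rw [this, conjTranspose_kronecker, ← mul_kronecker_mul, ← mul_kronecker_mul,
      conjTranspose_one, Matrix.one_mul, Matrix.one_mul, ← hσ]
  supp := by
    intro j i hj
    have e1 : (((1 : Matrix A A ℂ) ⊗ₖ V)ᴴ * X * U) j i =
        (p i : ℂ) * (((1 : Matrix A A ℂ) ⊗ₖ V)ᴴ * U) j i := by
      have : ((1 : Matrix A A ℂ) ⊗ₖ V)ᴴ * X * U =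
          (((1 : Matrix A A ℂ) ⊗ₖ V)ᴴ * U) * diagonal (fun i => (p i : ℂ)) := by
        conv_lhs => rw [hρ]
        simp only [Matrix.mul_assoc, UU, Matrix.mul_one]
      rw [this, mul_diagonal, mul_comm]
    rw [← e1]
    set d : F → ℂ := fun f => if q f = 0 then 1 else 0 with hd
    have hW : ptraceL X * (V * diagonal d) = 0 := by
      have h0 : diagonal (fun i => (q i : ℂ)) * diagonal d = 0 := by
        rw [diagonal_mul_diagonal, ← diagonal_zero]
        congr 1
        ext f
        simp only [hd]
        split_ifs with h
        · simp [h]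
        · simp
      rw [hσ, Matrix.mul_assoc, ← Matrix.mul_assoc Vᴴ, VV, Matrix.one_mul, Matrix.mul_assoc, h0,
        Matrix.mul_zero]
    have hk := kernel_marginal hX _ hW
    have h2 : X * ((1 : Matrix A A ℂ) ⊗ₖ V) * ((1 : Matrix A A ℂ) ⊗ₖ diagonal d) = 0 := by
      rw [Matrix.mul_assoc, ← mul_kronecker_mul, Matrix.one_mul, hk]
    have h3 : ∀ x, (X * ((1 : Matrix A A ℂ) ⊗ₖ V)) x j = 0 := by
      intro x
      have h4 := congrFun (congrFun h2 x) j
      rw [← diagonal_one, diagonal_kronecker_diagonal, mul_diagonal] at h4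
      simpa [hd, hj] using h4
    have h5 : ((1 : Matrix A A ℂ) ⊗ₖ V)ᴴ * X = (X * ((1 : Matrix A A ℂ) ⊗ₖ V))ᴴ := by
      rw [conjTranspose_mul, hX.1.eq]
    rw [h5, Matrix.mul_apply]
    refine Finset.sum_eq_zero fun x _ => ?_
    rw [conjTranspose_apply, h3 x, star_zero, zero_mul]

/-- The quadratic identity behind monotonicity. -/
lemma quad_identity {ρ σ Y : Matrix (A × B × E) (A × B × E) ℂ} {Z : Matrix (A × E) (A × E) ℂ}
    {T : ℝ} (hρ : ρ.PosSemidef) (hσ : σ.PosSemidef)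
    (hY : σ * Y + (T : ℂ) • (Y * ρ) = ρ)
    (hZ : margAE σ * Z + (T : ℂ) • (Z * margAE ρ) = margAE ρ) :
    ((Y - hatM B Z)ᴴ * σ * (Y - hatM B Z)).trace +
      (T : ℂ) * ((Y - hatM B Z) * ρ * (Y - hatM B Z)ᴴ).trace =
      star (ρ * Y).trace - (margAE ρ * Z).trace := by
  set D := Y - hatM B Z with hD
  set W := hatM B Z with hW
  have hρs := (margAE_psd hρ).1.eq
  have h1 : (Dᴴ * σ * D).trace + (T : ℂ) * (D * ρ * Dᴴ).trace =
      (Dᴴ * (σ * D + (T : ℂ) • (D * ρ))).trace := by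
    rw [Matrix.mul_add, trace_add, Matrix.mul_smul, trace_smul, smul_eq_mul, Matrix.mul_assoc,
      trace_mul_comm (D * ρ) Dᴴ]
  have h2 : σ * D + (T : ℂ) • (D * ρ) = ρ - (σ * W + (T : ℂ) • (W * ρ)) := by
    have e : σ * D + (T : ℂ) • (D * ρ) =
        (σ * Y + (T : ℂ) • (Y * ρ)) - (σ * W + (T : ℂ) • (W * ρ)) := by
      rw [hD, Matrix.mul_sub, Matrix.sub_mul, smul_sub]
      abel
    rw [e, hY]
  have h3 : (Yᴴ * (σ * W + (T : ℂ) • (W * ρ))).trace = (ρ * W).trace := by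
    have : ρ = Yᴴ * σ + (T : ℂ) • (ρ * Yᴴ) := by
      have := congrArg conjTranspose hY
      simp only [conjTranspose_add, conjTranspose_smul, conjTranspose_mul, hσ.1.eq, hρ.1.eq,
        RCLike.star_def, Complex.conj_ofReal] at this
      exact this.symm
    conv_rhs => rw [this]
    rw [Matrix.mul_add, Matrix.add_mul, trace_add, trace_add, Matrix.mul_smul, Matrix.smul_mul,
      trace_smul, trace_smul, Matrix.mul_assoc, ← Matrix.mul_assoc Yᴴ W ρ,
      trace_mul_comm (Yᴴ * W) ρ, Matrix.mul_assoc]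
  have h4 : (Wᴴ * ρ).trace = (Zᴴ * margAE ρ).trace := by
    rw [trace_mul_comm, hW, ← hatM_conjTranspose, trace_mul_hatM, trace_mul_comm]
  have h5 : (Wᴴ * (σ * W + (T : ℂ) • (W * ρ))).trace = (Zᴴ * margAE ρ).trace := by
    conv_rhs => rw [← hZ]
    rw [Matrix.mul_add, Matrix.mul_add, trace_add, trace_add, Matrix.mul_smul, Matrix.mul_smul,
      trace_smul, trace_smul]
    congr 2
    · rw [trace_mul_comm, Matrix.mul_assoc, hW, ← hatM_conjTranspose, ← hatM_mul, trace_mul_hatM,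
        trace_mul_comm Zᴴ, Matrix.mul_assoc]
    · rw [← Matrix.mul_assoc, trace_mul_comm, hW, ← hatM_conjTranspose, ← hatM_mul, trace_mul_hatM,
        ← Matrix.mul_assoc Zᴴ, trace_mul_comm (Zᴴ * Z)]
  have h6 : (Yᴴ * ρ).trace = star (ρ * Y).trace := by
    rw [← trace_conjTranspose, conjTranspose_mul, hρ.1.eq]
  have h7 : (ρ * W).trace = (margAE ρ * Z).trace := by rw [hW, trace_mul_hatM]
  have hDc : Dᴴ = Yᴴ - Wᴴ := by rw [hD, conjTranspose_sub]
  rw [h1, h2, hDc, Matrix.sub_mul, Matrix.mul_sub, Matrix.mul_sub, trace_sub, trace_sub, trace_sub,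
    h3, h4, h5, h6, h7]
  ring

lemma quad_le {ρ σ Y : Matrix (A × B × E) (A × B × E) ℂ} {Z : Matrix (A × E) (A × E) ℂ}
    {T : ℝ} (hT : 0 < T) (hρ : ρ.PosSemidef) (hσ : σ.PosSemidef)
    (hY : σ * Y + (T : ℂ) • (Y * ρ) = ρ)
    (hZ : margAE σ * Z + (T : ℂ) • (Z * margAE ρ) = margAE ρ) {x y : ℝ}
    (hx : (ρ * Y).trace = (x : ℂ)) (hy : (margAE ρ * Z).trace = (y : ℂ)) :
    y ≤ x ∧ (x = y → σ * hatM B Z + (T : ℂ) • (hatM B Z * ρ) = ρ) := by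
  have key := quad_identity hρ hσ hY hZ
  set D := Y - hatM B Z with hD
  have n1 : 0 ≤ (Dᴴ * σ * D).trace := (hσ.conjTranspose_mul_mul_same D).trace_nonneg
  have n2 : 0 ≤ (D * ρ * Dᴴ).trace := (hρ.mul_mul_conjTranspose_same D).trace_nonneg
  rw [hx, hy, RCLike.star_def, Complex.conj_ofReal] at key
  rw [Complex.nonneg_iff] at n1 n2
  have kre := congrArg Complex.re key
  simp only [Complex.add_re, Complex.sub_re, Complex.ofReal_re, Complex.re_ofReal_mul] at kre
  have n3 := mul_nonneg hT.le n2.1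
  refine ⟨by linarith [n1.1], fun hxy => ?_⟩
  have z1 : (Dᴴ * σ * D).trace = 0 := by
    apply Complex.ext
    · simp only [Complex.zero_re]; linarith [n1.1]
    · exact n1.2.symm
  have z2 : (D * ρ * Dᴴ).trace = 0 := by
    apply Complex.ext
    · simp only [Complex.zero_re]
      have : T * (D * ρ * Dᴴ).trace.re = 0 := by linarith [n1.1]
      exact (mul_eq_zero.1 this).resolve_left hT.ne'
    · exact n2.2.symm
  have d1 : σ * D = 0 := psd_mul_eq_zero _ hσ _ z1
  have d2 : ρ * Dᴴ = 0 := psd_mul_eq_zero _ hρ _ (by rwa [conjTranspose_conjTranspose])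
  have d3 : D * ρ = 0 := by
    have := congrArg conjTranspose d2
    rwa [conjTranspose_mul, conjTranspose_conjTranspose, hρ.1.eq, conjTranspose_zero] at this
  rw [hD, Matrix.mul_sub, sub_eq_zero] at d1
  rw [hD, Matrix.sub_mul, sub_eq_zero] at d3
  rw [← d1, ← d3, hY]

end hat

section recovery

variable {A B E F : Type*} [Fintype A] [Fintype B] [Fintype E] [Fintype F]

/-- `V diag(d) Vᴴ` for a real vector `d`. -/
def fdiag {n : Type*} [Fintype n] [DecidableEq n] (V : Matrix n n ℂ) (d : n → ℝ) : Matrix n n ℂ :=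
  V * diagonal (fun j => (d j : ℂ)) * Vᴴ

lemma fdiag_mul {n : Type*} [Fintype n] [DecidableEq n] {V : Matrix n n ℂ} (hV : Vᴴ * V = 1)
    (d d' : n → ℝ) : fdiag V d * fdiag V d' = fdiag V (fun j => d j * d' j) := by
  have h : diagonal (fun j => ((d j * d' j : ℝ) : ℂ)) =
      diagonal (fun j => (d j : ℂ)) * diagonal (fun j => (d' j : ℂ)) := by
    rw [diagonal_mul_diagonal]
    simp
  simp only [fdiag]
  rw [h]
  simp only [Matrix.mul_assoc]
  rw [← Matrix.mul_assoc Vᴴ V, hV, Matrix.one_mul]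

lemma fdiag_conjTranspose {n : Type*} [Fintype n] [DecidableEq n] (V : Matrix n n ℂ)
    (d : n → ℝ) : (fdiag V d)ᴴ = fdiag V d := by
  simp only [fdiag, conjTranspose_mul, conjTranspose_conjTranspose, diagonal_conjTranspose,
    Matrix.mul_assoc]
  congr 3
  ext j
  simp

lemma trace_fdiag {n : Type*} [Fintype n] [DecidableEq n] {V : Matrix n n ℂ} (hV : Vᴴ * V = 1)
    (d : n → ℝ) : (fdiag V d).trace = ((∑ j, d j : ℝ) : ℂ) := by
  rw [fdiag, trace_mul_comm, ← Matrix.mul_assoc, hV, Matrix.one_mul, trace_diagonal]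
  push_cast
  rfl

lemma fdiag_one_kronecker [DecidableEq F] (V : Matrix F F ℂ) (d : F → ℝ) :
    fdiag ((1 : Matrix A A ℂ) ⊗ₖ V) (fun x => d x.2) = (1 : Matrix A A ℂ) ⊗ₖ fdiag V d := by
  have : diagonal (fun i : A × F => (d i.2 : ℂ)) =
      (1 : Matrix A A ℂ) ⊗ₖ diagonal (fun i => (d i : ℂ)) := by
    rw [← diagonal_one, diagonal_kronecker_diagonal]
    simp
  simp only [fdiag]
  rw [this, conjTranspose_kronecker, ← mul_kronecker_mul, ← mul_kronecker_mul,
      conjTranspose_one, Matrix.one_mul, Matrix.one_mul]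

lemma ptraceL_conj (S S' : Matrix F F ℂ) (X : Matrix (A × F) (A × F) ℂ) :
    ptraceL (((1 : Matrix A A ℂ) ⊗ₖ S) * X * ((1 : Matrix A A ℂ) ⊗ₖ S')) = S * ptraceL X * S' := by
  have h : ∀ a f f', (((1 : Matrix A A ℂ) ⊗ₖ S) * X * ((1 : Matrix A A ℂ) ⊗ₖ S')) (a, f) (a, f') =
      (S * X.submatrix (fun f => (a, f)) (fun f => (a, f)) * S') f f' := by
    intro a f f'
    simp only [Matrix.mul_apply, Fintype.sum_prod_type, kroneckerMap_apply, Matrix.one_apply,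
      submatrix_apply]
    rw [Finset.sum_eq_single a]
    · refine Finset.sum_congr rfl fun x _ => ?_
      rw [Finset.sum_eq_single a]
      · simp
      · intro c _ hc
        simp [Ne.symm hc]
      · simp
    · intro c _ hc
      simp [hc]
    · simp
  have h2 : ptraceL X = ∑ a : A, X.submatrix (fun f => (a, f)) (fun f => (a, f)) := by
    ext f f'
    simp [ptraceL, Matrix.sum_apply]
  rw [h2, Finset.mul_sum, Finset.sum_mul]
  ext f f'
  rw [Matrix.sum_apply]
  exact Finset.sum_congr rfl fun a _ => h a f f'

lemma sum_weight_q_marg [DecidableEq F] {X U : Matrix (A × F) (A × F) ℂ} {V : Matrix F F ℂ} {p : A × F → ℝ}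
    {q : F → ℝ} (H : PairSys X ((1 : Matrix A A ℂ) ⊗ₖ ptraceL X) U ((1 : Matrix A A ℂ) ⊗ₖ V) p
      (fun x => q x.2)) (VV : Vᴴ * V = 1) (hσ : ptraceL X = fdiag V q) (f : ℝ → ℝ) :
    ∑ k : (A × F) × (A × F), p k.1 *
      Complex.normSq ((((1 : Matrix A A ℂ) ⊗ₖ V)ᴴ * U) k.2 k.1) * f (q k.2.2) =
      ∑ j, q j * f (q j) := by
  have h := H.sum_weight_q f
  have h2 := fdiag_one_kronecker (A := A) V (fun j => f (q j))
  rw [fdiag] at h2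
  rw [h2, trace_mul_one_kronecker, hσ, fdiag_mul VV, trace_fdiag VV] at h
  exact_mod_cast h

lemma proj_ysol {n : Type*} [Fintype n] [DecidableEq n] {ρ σ U V : Matrix n n ℂ} {p q : n → ℝ}
    (H : PairSys ρ σ U V p q) (r : n → ℝ) (hr : ∀ j, q j ≠ 0 → r j = 1) (T : ℝ) :
    fdiag V r * PairSys.ysol U V p q T = PairSys.ysol U V p q T := by
  refine H.eq_of_conj fun j i => ?_
  have : Vᴴ * (fdiag V r * PairSys.ysol U V p q T) * U =
      diagonal (fun j => (r j : ℂ)) * (Vᴴ * PairSys.ysol U V p q T * U) := by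
    rw [fdiag]
    simp only [← Matrix.mul_assoc, H.VV, Matrix.one_mul]
  rw [this, diagonal_mul, H.ysol_entry]
  by_cases hq : q j = 0
  · rw [H.supp j i hq]
    simp
  · rw [hr j hq]
    simp

/-- Exact recovery from vanishing conditional mutual information. -/
lemma recovery (ρ : Matrix (A × B × E) (A × B × E) ℂ) (hρ : ρ.PosSemidef)
    (hcmi : condMutualInfo ρ = 0) :
    ∃ K : Matrix (B × E) (B × E) ℂ,
      ρ = ((1 : Matrix A A ℂ) ⊗ₖ K) * hatM B (margAE ρ) * ((1 : Matrix A A ℂ) ⊗ₖ K)ᴴ ∧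
      margE ρ * ptraceL (Kᴴ * K) = margE ρ := by
  have hBE : (margBE ρ).PosSemidef := ptraceL_psd hρ
  have hAE : (margAE ρ).PosSemidef := margAE_psd hρ
  have hE : (margE ρ).PosSemidef := ptraceL_psd hAE
  obtain ⟨U, p, UU, UU', p0, hU, SABE⟩ := spectral_ex ρ hρ
  obtain ⟨V, q, VV, VV', q0, hV, SBE⟩ := spectral_ex (margBE ρ) hBE
  obtain ⟨U', p', UU2, UU2', p0', hU', SAE⟩ := spectral_ex (margAE ρ) hAE
  obtain ⟨V', q', VV2, VV2', q0', hV', SE⟩ := spectral_ex (margE ρ) hE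
  have Hb := mk_pairSys hρ UU UU' VV VV' p0 q0 hU hV
  have Hs := mk_pairSys hAE UU2 UU2' VV2 VV2' p0' q0' hU' hV'
  have hσb : ((1 : Matrix A A ℂ) ⊗ₖ ptraceL ρ).PosSemidef :=
    PosSemidef.one.kronecker hBE
  have hσs : margAE ((1 : Matrix A A ℂ) ⊗ₖ ptraceL ρ) = (1 : Matrix A A ℂ) ⊗ₖ ptraceL (margAE ρ) := by
    rw [margAE_kronecker, ptraceL_margAE, ← ptraceL_margBE]
    rfl
  have hsolve : ∀ T : ℝ, 0 < T → ((1 : Matrix A A ℂ) ⊗ₖ ptraceL ρ) *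
      hatM B (PairSys.ysol U' ((1 : Matrix A A ℂ) ⊗ₖ V') p' (fun x => q' x.2) T) +
      (T : ℂ) • (hatM B (PairSys.ysol U' ((1 : Matrix A A ℂ) ⊗ₖ V') p' (fun x => q' x.2) T) * ρ) =
        ρ := by
    have hq := fun T (hT : 0 < T) => quad_le hT hρ hσb (Hb.ysol_solves hT)
      (by rw [hσs]; exact Hs.ysol_solves hT) (Hb.trace_ysol T) (Hs.trace_ysol T)
    intro T hT
    refine (hq T hT).2 ?_
    refine logsum_eq (ι := (A × B × E) × (A × B × E)) (κ := (A × E) × (A × E))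
      (fun k => p k.1 * Complex.normSq ((((1 : Matrix A A ℂ) ⊗ₖ V)ᴴ * U) k.2 k.1))
      (fun k => p k.1) (fun k => q k.2.2)
      (fun k => p' k.1 * Complex.normSq ((((1 : Matrix A A ℂ) ⊗ₖ V')ᴴ * U') k.2 k.1))
      (fun k => p' k.1) (fun k => q' k.2.2) Hb.weight_pos Hs.weight_pos ?_
      (fun T hT => (hq T hT).1) ?_ T hT
    · have h1 := Hb.sum_weight_p (fun _ => 1)
      have h2 := Hs.sum_weight_p (fun _ => 1)
      simp only [mul_one] at h1 h2
      rw [h1, h2]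
      have h3 : ((∑ i, p i : ℝ) : ℂ) = ((∑ i, p' i : ℝ) : ℂ) := by
        rw [← trace_fdiag UU, ← trace_fdiag UU2, fdiag, fdiag, ← hU, ← hU', trace_margAE]
      exact_mod_cast h3
    · rw [Hb.sum_weight_p Real.log, Hs.sum_weight_p Real.log,
        sum_weight_q_marg Hb VV hV Real.log, sum_weight_q_marg Hs VV2 hV' Real.log]
      have h := congrArg (fun x => x * Real.log 2) hcmi
      simp only [condMutualInfo, sub_mul, add_mul, zero_mul] at h
      rw [SABE, SBE, SAE, SE] at h
      linarith
  -- interpolation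
  set S : Finset ℝ := ((Finset.univ.image fun k : (A × B × E) × (A × B × E) => q k.2.2 / p k.1) ∪
    (Finset.univ.image fun k : (A × E) × (A × E) => q' k.2.2 / p' k.1)).filter (fun x => 0 < x)
    with hS
  have hSpos : ∀ x ∈ S, 0 < x := fun x hx => (Finset.mem_filter.1 hx).2
  obtain ⟨c, hc⟩ := interp_cauchy S hSpos (fun x => Real.sqrt (1 / x))
  have cb : ∀ i j, 0 < p i → 0 < (fun x : A × B × E => q x.2) j →
      ∑ t ∈ S, c t / ((fun x : A × B × E => q x.2) j / p i + t) =
        Real.sqrt (p i / (fun x : A × B × E => q x.2) j) := by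
    intro i j hi hj
    rw [hc, one_div_div]
    rw [hS, Finset.mem_filter]
    exact ⟨Finset.mem_union_left _ (Finset.mem_image.2 ⟨(i, j), Finset.mem_univ _, rfl⟩),
      div_pos hj hi⟩
  have cs : ∀ i j, 0 < p' i → 0 < (fun x : A × E => q' x.2) j →
      ∑ t ∈ S, c t / ((fun x : A × E => q' x.2) j / p' i + t) =
        Real.sqrt (p' i / (fun x : A × E => q' x.2) j) := by
    intro i j hi hj
    rw [hc, one_div_div]
    rw [hS, Finset.mem_filter]
    exact ⟨Finset.mem_union_right _ (Finset.mem_image.2 ⟨(i, j), Finset.mem_univ _, rfl⟩),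
      div_pos hj hi⟩
  have ib := Hb.sqrt_identity S hSpos c cb
    (fun T => hatM B (PairSys.ysol U' ((1 : Matrix A A ℂ) ⊗ₖ V') p' (fun x => q' x.2) T))
    (fun t ht => hsolve t (hSpos t ht))
  have is := Hs.sqrt_identity S hSpos c cs
    (fun T => PairSys.ysol U' ((1 : Matrix A A ℂ) ⊗ₖ V') p' (fun x => q' x.2) T)
    (fun t ht => Hs.ysol_solves (hSpos t ht))
  set Z := ∑ t ∈ S, (c t : ℂ) • PairSys.ysol U' ((1 : Matrix A A ℂ) ⊗ₖ V') p' (fun x => q' x.2) t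
    with hZ
  have hhatZ : ∑ t ∈ S, (c t : ℂ) •
      hatM B (PairSys.ysol U' ((1 : Matrix A A ℂ) ⊗ₖ V') p' (fun x => q' x.2) t) = hatM B Z := by
    rw [hZ, hatM_sum]
    exact Finset.sum_congr rfl fun t _ => (hatM_smul _ _).symm
  rw [hhatZ] at ib
  change fdiag ((1 : Matrix A A ℂ) ⊗ₖ V) (fun x => Real.sqrt (q x.2)) * hatM B Z =
    fdiag U (fun j => Real.sqrt (p j)) at ib
  change fdiag ((1 : Matrix A A ℂ) ⊗ₖ V') (fun x => Real.sqrt (q' x.2)) * Z =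
    fdiag U' (fun j => Real.sqrt (p' j)) at is
  have hVV2k := Hs.VV
  have hZ2 : Z = fdiag ((1 : Matrix A A ℂ) ⊗ₖ V') (fun x => (Real.sqrt (q' x.2))⁻¹) *
      fdiag U' (fun j => Real.sqrt (p' j)) := by
    rw [← is, ← Matrix.mul_assoc, fdiag_mul hVV2k, hZ, Finset.mul_sum]
    refine Finset.sum_congr rfl fun t _ => ?_
    rw [Matrix.mul_smul, proj_ysol Hs]
    intro j hj
    have : Real.sqrt (q' j.2) ≠ 0 := (Real.sqrt_pos.2 (lt_of_le_of_ne (q0' j.2) (Ne.symm hj))).ne'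
    exact inv_mul_cancel₀ this
  rw [fdiag_one_kronecker V (fun j => Real.sqrt (q j))] at ib
  rw [fdiag_one_kronecker V' (fun j => (Real.sqrt (q' j))⁻¹)] at hZ2
  set s : E → ℝ := fun j => (Real.sqrt (q' j))⁻¹ with hs
  refine ⟨fdiag V (fun j => Real.sqrt (q j)) * ((1 : Matrix B B ℂ) ⊗ₖ fdiag V' s), ?_, ?_⟩
  · have hsq : ρ = fdiag U (fun j => Real.sqrt (p j)) * (fdiag U (fun j => Real.sqrt (p j)))ᴴ := by
      rw [fdiag_conjTranspose, fdiag_mul UU]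
      simp only [Real.mul_self_sqrt (p0 _)]
      exact hU
    have hsq' : margAE ρ = fdiag U' (fun j => Real.sqrt (p' j)) *
        (fdiag U' (fun j => Real.sqrt (p' j)))ᴴ := by
      rw [fdiag_conjTranspose, fdiag_mul UU2]
      simp only [Real.mul_self_sqrt (p0' _)]
      exact hU'
    have hk : (1 : Matrix A A ℂ) ⊗ₖ (fdiag V (fun j => Real.sqrt (q j)) *
        ((1 : Matrix B B ℂ) ⊗ₖ fdiag V' s)) =
        ((1 : Matrix A A ℂ) ⊗ₖ fdiag V (fun j => Real.sqrt (q j))) *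
          hatM B ((1 : Matrix A A ℂ) ⊗ₖ fdiag V' s) := by
      rw [hatM_kronecker, ← mul_kronecker_mul, Matrix.one_mul]
    have h1 : fdiag U (fun j => Real.sqrt (p j)) =
        ((1 : Matrix A A ℂ) ⊗ₖ (fdiag V (fun j => Real.sqrt (q j)) *
        ((1 : Matrix B B ℂ) ⊗ₖ fdiag V' s))) * hatM B (fdiag U' (fun j => Real.sqrt (p' j))) := by
      rw [hk, Matrix.mul_assoc, ← hatM_mul, ← hZ2, ib]
    conv_lhs => rw [hsq, h1]
    conv_rhs => rw [hsq', hatM_mul, hatM_conjTranspose]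
    simp only [conjTranspose_mul, Matrix.mul_assoc]
  · have h1 : (fdiag V (fun j => Real.sqrt (q j)) * ((1 : Matrix B B ℂ) ⊗ₖ fdiag V' s))ᴴ *
        (fdiag V (fun j => Real.sqrt (q j)) * ((1 : Matrix B B ℂ) ⊗ₖ fdiag V' s)) =
        ((1 : Matrix B B ℂ) ⊗ₖ fdiag V' s) * margBE ρ * ((1 : Matrix B B ℂ) ⊗ₖ fdiag V' s) := by
      have h2 : margBE ρ = fdiag V (fun j => Real.sqrt (q j)) * fdiag V (fun j => Real.sqrt (q j)) := by
        rw [fdiag_mul VV]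
        simp only [Real.mul_self_sqrt (q0 _)]
        exact hV
      rw [h2, conjTranspose_mul, fdiag_conjTranspose, conjTranspose_kronecker, conjTranspose_one,
        fdiag_conjTranspose]
      simp only [Matrix.mul_assoc]
    have hV'' : margE ρ = fdiag V' q' := hV'
    rw [h1, ptraceL_conj, ptraceL_margBE, hV'', fdiag_mul VV2, fdiag_mul VV2, fdiag_mul VV2]
    congr 1
    ext j
    simp only [hs]
    rcases (q0' j).eq_or_lt with h | h
    · rw [← h]; simp
    · have h3 : Real.sqrt (q' j) ≠ 0 := (Real.sqrt_pos.2 h).ne'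
      have h4 := Real.mul_self_sqrt h.le
      have h5 : (Real.sqrt (q' j))⁻¹ * q' j * (Real.sqrt (q' j))⁻¹ = 1 := by
        field_simp
        nlinarith
      rw [h5, mul_one]

end recovery

section sep

variable {A B : Type*} [Fintype A] [Fintype B]

/-- Separability of a bipartite matrix. -/
def IsSep (ρ : Matrix (A × B) (A × B) ℂ) : Prop :=
  ∃ (n : ℕ) (p : Fin n → ℝ) (ψ : Fin n → A → ℂ) (φ : Fin n → B → ℂ),
      (∀ i, 0 ≤ p i) ∧ (∑ i, p i) = 1 ∧
      (∀ i, ∑ a, ‖ψ i a‖ ^ 2 = 1) ∧ (∀ i, ∑ b, ‖φ i b‖ ^ 2 = 1) ∧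
      ρ = ∑ i, (p i : ℂ) • (outer (ψ i) ⊗ₖ outer (φ i))

lemma isSep_of_fintype {ι : Type*} [Fintype ι] (p : ι → ℝ) (ψ : ι → A → ℂ) (φ : ι → B → ℂ)
    (h1 : ∀ i, 0 ≤ p i) (h2 : ∑ i, p i = 1) (h3 : ∀ i, ∑ a, ‖ψ i a‖ ^ 2 = 1)
    (h4 : ∀ i, ∑ b, ‖φ i b‖ ^ 2 = 1) :
    IsSep (∑ i, (p i : ℂ) • (outer (ψ i) ⊗ₖ outer (φ i))) := by
  let e := (Fintype.equivFin ι).symm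
  refine ⟨Fintype.card ι, p ∘ e, ψ ∘ e, φ ∘ e, fun i => h1 _, ?_, fun i => h3 _, fun i => h4 _, ?_⟩
  · rw [← h2]; exact Equiv.sum_comp e p
  · exact (Equiv.sum_comp e (fun i => (p i : ℂ) • (outer (ψ i) ⊗ₖ outer (φ i)))).symm

/-- Parameter space for separable decompositions with `n` terms. -/
def sepParam (A B : Type*) [Fintype A] [Fintype B] (n : ℕ) :
    Set ((Fin n → ℝ) × (Fin n → A → ℂ) × (Fin n → B → ℂ)) :=
  stdSimplex ℝ (Fin n) ×ˢ ({ψ | ∀ i, ∑ a, ‖ψ i a‖ ^ 2 = 1} ×ˢ {φ | ∀ i, ∑ b, ‖φ i b‖ ^ 2 = 1})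

/-- The mixture map. -/
def sepMap (A B : Type*) [Fintype A] [Fintype B] (n : ℕ)
    (x : (Fin n → ℝ) × (Fin n → A → ℂ) × (Fin n → B → ℂ)) : Matrix (A × B) (A × B) ℂ :=
  ∑ i, (x.1 i : ℂ) • (outer (x.2.1 i) ⊗ₖ outer (x.2.2 i))

lemma isCompact_units (A : Type*) [Fintype A] (n : ℕ) :
    IsCompact {ψ : Fin n → A → ℂ | ∀ i, ∑ a, ‖ψ i a‖ ^ 2 = 1} := by
  refine Metric.isCompact_of_isClosed_isBounded ?_ ?_
  · have : {ψ : Fin n → A → ℂ | ∀ i, ∑ a, ‖ψ i a‖ ^ 2 = 1} =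
        ⋂ i, {ψ : Fin n → A → ℂ | ∑ a, ‖ψ i a‖ ^ 2 = 1} := by ext; simp
    rw [this]
    refine isClosed_iInter fun i => isClosed_eq (by fun_prop) continuous_const
  · refine (Metric.isBounded_closedBall (x := 0) (r := 1)).subset fun ψ hψ => ?_
    rw [mem_closedBall_zero_iff, pi_norm_le_iff_of_nonneg zero_le_one]
    intro i
    rw [pi_norm_le_iff_of_nonneg zero_le_one]
    intro a
    have h1 : ‖ψ i a‖ ^ 2 ≤ ∑ a, ‖ψ i a‖ ^ 2 :=
      Finset.single_le_sum (f := fun a => ‖ψ i a‖ ^ 2) (fun a _ => by positivity) (Finset.mem_univ a)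
    rw [hψ i] at h1
    nlinarith [norm_nonneg (ψ i a)]

lemma isCompact_sepParam (n : ℕ) : IsCompact (sepParam A B n) :=
  (isCompact_stdSimplex ℝ (Fin n)).prod ((isCompact_units A n).prod (isCompact_units B n))

lemma continuous_sepMap (n : ℕ) : Continuous (sepMap A B n) := by
  refine continuous_pi fun x => continuous_pi fun y => ?_
  simp only [sepMap, Matrix.sum_apply, Matrix.smul_apply, kroneckerMap_apply, outer, vecMulVec_apply,
    Pi.star_apply, smul_eq_mul]
  fun_prop

lemma isSep_eq_iUnion : {ρ : Matrix (A × B) (A × B) ℂ | IsSep ρ} =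
    ⋃ n ∈ Set.Iic (Module.finrank ℝ (Matrix (A × B) (A × B) ℂ) + 1),
      sepMap A B n '' sepParam A B n := by
  ext ρ
  simp only [Set.mem_setOf_eq, Set.mem_iUnion, Set.mem_image, Prod.exists]
  constructor
  · rintro ⟨n, p, ψ, φ, hp, hs, hψ, hφ, rfl⟩
    set S0 : Set (Matrix (A × B) (A × B) ℂ) := {X | ∃ (ψ : A → ℂ) (φ : B → ℂ),
      ∑ a, ‖ψ a‖ ^ 2 = 1 ∧ ∑ b, ‖φ b‖ ^ 2 = 1 ∧ outer ψ ⊗ₖ outer φ = X} with hS0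
    have hmem : ∑ i, p i • (outer (ψ i) ⊗ₖ outer (φ i)) ∈ convexHull ℝ S0 := by
      refine (convex_convexHull ℝ S0).sum_mem (fun i _ => hp i) hs fun i _ => ?_
      exact subset_convexHull ℝ S0 ⟨ψ i, φ i, hψ i, hφ i, rfl⟩
    obtain ⟨ι, hι, z, w, hz, hai, hw, hw1, hsum⟩ := eq_pos_convex_span_of_mem_convexHull hmem
    have hz' : ∀ i, ∃ (ψ : A → ℂ) (φ : B → ℂ),
      ∑ a, ‖ψ a‖ ^ 2 = 1 ∧ ∑ b, ‖φ b‖ ^ 2 = 1 ∧ outer ψ ⊗ₖ outer φ = z i := fun i =>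
        hz (Set.mem_range_self i)
    choose ψ' φ' h1 h2 h3 using hz'
    let e := (Fintype.equivFin ι).symm
    refine ⟨Fintype.card ι, ?_, w ∘ e, ψ' ∘ e, φ' ∘ e, ⟨⟨fun i => (hw _).le, ?_⟩,
      fun i => h1 _, fun i => h2 _⟩, ?_⟩
    · exact hai.card_le_finrank_succ.trans (Nat.succ_le_succ (Submodule.finrank_le _))
    · rw [← hw1]; exact Equiv.sum_comp e w
    · have h5 : ∑ i, (p i : ℂ) • (outer (ψ i) ⊗ₖ outer (φ i)) =
          ∑ i, p i • (outer (ψ i) ⊗ₖ outer (φ i)) :=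
        Finset.sum_congr rfl fun i _ => Complex.coe_smul _ _
      rw [h5, ← hsum, sepMap]
      rw [← Equiv.sum_comp e (fun i => w i • z i)]
      refine Finset.sum_congr rfl fun i _ => ?_
      simp only [Function.comp]
      rw [h3, Complex.coe_smul]
  · rintro ⟨n, -, p, ψ, φ, ⟨⟨hp, hs⟩, hψ, hφ⟩, rfl⟩
    exact ⟨n, p, ψ, φ, hp, hs, hψ, hφ, rfl⟩

lemma isClosed_isSep : IsClosed {ρ : Matrix (A × B) (A × B) ℂ | IsSep ρ} := by
  rw [isSep_eq_iUnion]
  exact ((Set.finite_Iic _).isCompact_biUnion fun n _ =>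
    (isCompact_sepParam n).image (continuous_sepMap n)).isClosed

lemma outer_normalize {n : Type*} [Fintype n] [Nonempty n] (u : n → ℂ) :
    ∃ v : n → ℂ, ∑ a, ‖v a‖ ^ 2 = 1 ∧ outer u = ((∑ a, ‖u a‖ ^ 2 : ℝ) : ℂ) • outer v := by
  by_cases h : ∑ a, ‖u a‖ ^ 2 = 0
  · obtain ⟨a0⟩ := ‹Nonempty n›
    refine ⟨Pi.single a0 1, ?_, ?_⟩
    · rw [Finset.sum_eq_single a0]
      · simp
      · intro b _ hb
        simp [hb]
      · simp
    · have hu : u = 0 := by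
        ext a
        have := (Finset.sum_eq_zero_iff_of_nonneg (fun a _ => by positivity)).1 h a (Finset.mem_univ a)
        simpa using this
      rw [h, hu]
      ext
      simp [outer, vecMulVec_apply]
  · set s := ∑ a, ‖u a‖ ^ 2 with hs
    have hpos : 0 < s := lt_of_le_of_ne (Finset.sum_nonneg fun a _ => by positivity) (Ne.symm h)
    have hsq : Real.sqrt s ≠ 0 := (Real.sqrt_pos.2 hpos).ne'
    refine ⟨fun a => u a / (Real.sqrt s : ℂ), ?_, ?_⟩
    · have : ∀ a, ‖u a / (Real.sqrt s : ℂ)‖ ^ 2 = ‖u a‖ ^ 2 / s := by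
        intro a
        rw [norm_div, div_pow, Complex.norm_real, Real.norm_eq_abs, sq_abs, Real.sq_sqrt hpos.le]
      simp only [this]
      rw [← Finset.sum_div, ← hs, div_self h]
    · ext a b
      simp only [outer, Matrix.smul_apply, vecMulVec_apply, Pi.star_apply, smul_eq_mul, star_div₀,
        RCLike.star_def, Complex.conj_ofReal]
      have h2 : (s : ℂ) = (Real.sqrt s : ℂ) * (Real.sqrt s : ℂ) := by
        rw [← Complex.ofReal_mul, Real.mul_self_sqrt hpos.le]
      have h3 : (Real.sqrt s : ℂ) ≠ 0 := by exact_mod_cast hsq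
      rw [h2]
      field_simp

lemma trace_outer {n : Type*} [Fintype n] (u : n → ℂ) :
    (outer u).trace = ((∑ a, ‖u a‖ ^ 2 : ℝ) : ℂ) := by
  simp only [trace, diag_apply, outer, vecMulVec_apply, Pi.star_apply, RCLike.star_def]
  push_cast
  exact Finset.sum_congr rfl fun a _ => Complex.mul_conj' _

lemma isSep_of_outer {ι : Type*} [Fintype ι] (u : ι → A → ℂ) (v : ι → B → ℂ)
    (htr : (∑ i, outer (u i) ⊗ₖ outer (v i)).trace = 1) :
    IsSep (∑ i, outer (u i) ⊗ₖ outer (v i)) := by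
  have hne : Nonempty (A × B) := by
    by_contra hempty
    rw [not_nonempty_iff] at hempty
    simp [trace] at htr
  obtain ⟨a0, b0⟩ := hne
  haveI : Nonempty A := ⟨a0⟩
  haveI : Nonempty B := ⟨b0⟩
  choose u' hu1 hu2 using fun i => outer_normalize (u i)
  choose v' hv1 hv2 using fun i => outer_normalize (v i)
  have heq : ∀ i, outer (u i) ⊗ₖ outer (v i) =
      (((∑ a, ‖u i a‖ ^ 2) * (∑ b, ‖v i b‖ ^ 2) : ℝ) : ℂ) • (outer (u' i) ⊗ₖ outer (v' i)) := by
    intro i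
    rw [hu2, hv2, smul_kronecker, kronecker_smul, smul_smul, ← Complex.ofReal_mul]
  have hsum : ∑ i, ((∑ a, ‖u i a‖ ^ 2) * (∑ b, ‖v i b‖ ^ 2)) = 1 := by
    rw [trace_sum] at htr
    simp only [trace_kronecker, trace_outer] at htr
    exact_mod_cast htr
  simp only [heq]
  refine isSep_of_fintype _ u' v' (fun i => ?_) hsum hu1 hv1
  exact mul_nonneg (Finset.sum_nonneg fun a _ => by positivity)
    (Finset.sum_nonneg fun a _ => by positivity)

lemma isSep_of_cone {ι : Type*} [Fintype ι] (x : ι → Matrix A A ℂ) (y : ι → Matrix B B ℂ)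
    (hx : ∀ i, (x i).PosSemidef) (hy : ∀ i, (y i).PosSemidef)
    (htr : (∑ i, x i ⊗ₖ y i).trace = 1) : IsSep (∑ i, x i ⊗ₖ y i) := by
  choose m u hu using fun i => posSemidef_iff_eq_sum_vecMulVec.1 (hx i)
  choose k v hv using fun i => posSemidef_iff_eq_sum_vecMulVec.1 (hy i)
  have heq : ∑ i, x i ⊗ₖ y i =
      ∑ z : (Σ i, Fin (m i) × Fin (k i)), outer (u z.1 z.2.1) ⊗ₖ outer (v z.1 z.2.2) := by
    rw [Fintype.sum_sigma]
    refine Finset.sum_congr rfl fun i _ => ?_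
    rw [Fintype.sum_prod_type, hu i, hv i]
    ext ⟨a, b⟩ ⟨a', b'⟩
    simp only [kroneckerMap_apply, Matrix.sum_apply, outer, Finset.sum_mul_sum]
  rw [heq] at htr ⊢
  exact isSep_of_outer (fun z : (Σ i, Fin (m i) × Fin (k i)) => u z.1 z.2.1) (fun z => v z.1 z.2.2) htr

end sep

set_option linter.unusedSectionVars false

section definetti

variable {A B E F : Type*} [Fintype A] [Fintype B] [Fintype E] [Fintype F]

lemma trace_mul_kronecker_one [DecidableEq F] (X : Matrix (A × F) (A × F) ℂ) (N : Matrix A A ℂ) :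
    (X * (N ⊗ₖ (1 : Matrix F F ℂ))).trace = (ptraceR X * N).trace := by
  simp only [Matrix.trace, Matrix.diag, Matrix.mul_apply, Fintype.sum_prod_type,
    kroneckerMap_apply, ptraceR, Matrix.one_apply, mul_ite, mul_one, mul_zero,
    Finset.sum_ite_eq', Finset.mem_univ, if_true, Finset.sum_mul]
  refine Finset.sum_congr rfl fun x _ => ?_
  rw [Finset.sum_comm]

/-- The recovery map is trace preserving on operators below the marginal. -/
lemma recovery_tp {σ ω : Matrix (A × E) (A × E) ℂ} (K : Matrix (B × E) (B × E) ℂ)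
    (hK : ptraceL σ * ptraceL (Kᴴ * K) = ptraceL σ)
    (hω : ω.PosSemidef) (hσω : (σ - ω).PosSemidef) :
    ptraceR (((1 : Matrix A A ℂ) ⊗ₖ K) * hatM B ω * ((1 : Matrix A A ℂ) ⊗ₖ K)ᴴ) = ptraceR ω := by
  set P := ptraceL (Kᴴ * K) with hP
  have hsub : ptraceL (σ - ω) = ptraceL σ - ptraceL ω := by
    ext i j; simp [ptraceL, Finset.sum_sub_distrib]
  have h0 : ptraceL σ * (1 - P) = 0 := by rw [Matrix.mul_sub, hK, Matrix.mul_one, sub_self]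
  have n1 := ((ptraceL_psd hω).conjTranspose_mul_mul_same (1 - P)).trace_nonneg
  have n2 := ((ptraceL_psd hσω).conjTranspose_mul_mul_same (1 - P)).trace_nonneg
  have h1 : ((1 - P)ᴴ * ptraceL ω * (1 - P)).trace = 0 := by
    rw [hsub, Matrix.mul_assoc, Matrix.sub_mul, h0, zero_sub, Matrix.mul_neg, ← Matrix.mul_assoc,
      trace_neg] at n2
    exact le_antisymm (neg_nonneg.1 n2) n1
  have h2 := kernel_marginal hω _ (psd_mul_eq_zero _ (ptraceL_psd hω) _ h1)
  have h3 : ω * ((1 : Matrix A A ℂ) ⊗ₖ P) = ω := by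
    have e : (1 : Matrix A A ℂ) ⊗ₖ (1 - P) = 1 - (1 : Matrix A A ℂ) ⊗ₖ P := by
      rw [← one_kronecker_one (m := A) (n := E)]
      ext x y
      simp only [kroneckerMap_apply, mul_sub, Matrix.sub_apply]
    rw [e, Matrix.mul_sub, Matrix.mul_one, sub_eq_zero] at h2
    exact h2.symm
  refine Matrix.ext_iff_trace_mul_right.2 fun N => ?_
  rw [← trace_mul_kronecker_one, ← trace_mul_kronecker_one, Matrix.mul_assoc, Matrix.mul_assoc,
    trace_mul_comm, Matrix.mul_assoc, Matrix.mul_assoc, conjTranspose_kronecker,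
    conjTranspose_one, ← mul_kronecker_mul, ← mul_kronecker_mul, Matrix.one_mul, Matrix.mul_one,
    Matrix.one_mul, trace_mul_comm, trace_mul_hatM, margAE_kronecker, ← hP, trace_mul_comm]
  have : N ⊗ₖ P = ((1 : Matrix A A ℂ) ⊗ₖ P) * (N ⊗ₖ (1 : Matrix E E ℂ)) := by
    rw [← mul_kronecker_mul, Matrix.one_mul, Matrix.mul_one]
  rw [this, ← Matrix.mul_assoc, h3]

/-- Partial evaluation of an operator on `ABE` against `M` on `B`. -/
def pmap (M : Matrix B B ℂ) (X : Matrix (A × B × E) (A × B × E) ℂ) : Matrix (A × E) (A × E) ℂ :=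
  fun x y => ∑ b, ∑ b', M b' b * X (x.1, b, x.2) (y.1, b', y.2)

lemma pmap_psd {M : Matrix B B ℂ} (hM : M.PosSemidef) {X : Matrix (A × B × E) (A × B × E) ℂ}
    (hX : X.PosSemidef) : (pmap M X).PosSemidef := by
  obtain ⟨C, rfl⟩ := psd_factor M hM
  have : pmap (Cᴴ * C) X = ∑ c : B, (of fun (x : A × E) (y : A × B × E) =>
      if x.1 = y.1 ∧ x.2 = y.2.2 then C c y.2.1 else 0) * X *
      (of fun (x : A × E) (y : A × B × E) =>
      if x.1 = y.1 ∧ x.2 = y.2.2 then C c y.2.1 else 0)ᴴ := by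
    ext ⟨a, e⟩ ⟨a', e'⟩
    simp only [pmap, Matrix.sum_apply, Matrix.mul_apply, Fintype.sum_prod_type, of_apply,
      conjTranspose_apply, ite_and, ite_mul, zero_mul, Finset.sum_ite_eq, Finset.mem_univ, if_true,
      apply_ite star, star_zero, mul_ite, mul_zero, Finset.sum_ite_irrel, Finset.sum_const_zero,
      Finset.sum_mul]
    rw [Finset.sum_comm]
    conv_rhs => rw [Finset.sum_comm]
    refine Finset.sum_congr rfl fun b' _ => ?_
    conv_rhs => rw [Finset.sum_comm]
    refine Finset.sum_congr rfl fun b _ => Finset.sum_congr rfl fun c _ => ?_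
    ring
  rw [this]
  exact posSemidef_sum _ fun c _ => hX.mul_mul_conjTranspose_same _

lemma pmap_one (X : Matrix (A × B × E) (A × B × E) ℂ) : pmap 1 X = margAE X := by
  ext x y
  simp [pmap, margAE, Matrix.one_apply]

lemma pmap_sub (M N : Matrix B B ℂ) (X : Matrix (A × B × E) (A × B × E) ℂ) :
    pmap (M - N) X = pmap M X - pmap N X := by
  ext x y
  simp [pmap, sub_mul, Finset.sum_sub_distrib]

lemma ptraceR_pmap (M : Matrix B B ℂ) (X : Matrix (A × B × E) (A × B × E) ℂ) (j k : A) :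
    ptraceR (pmap M X) j k = ∑ b, ∑ b', M b' b * margAB X (j, b) (k, b') := by
  simp only [ptraceR, pmap, margAB, Finset.mul_sum]
  rw [Finset.sum_comm]
  refine Finset.sum_congr rfl fun b _ => ?_
  rw [Finset.sum_comm]

lemma trace_ptraceR (X : Matrix (A × F) (A × F) ℂ) : (ptraceR X).trace = X.trace := by
  simp [Matrix.trace, ptraceR, Fintype.sum_prod_type]

lemma trace_ptraceL (X : Matrix (A × F) (A × F) ℂ) : (ptraceL X).trace = X.trace := by
  simp only [Matrix.trace, ptraceL, Fintype.sum_prod_type, Matrix.diag]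
  rw [Finset.sum_comm]

lemma ptraceR_psd {X : Matrix (A × F) (A × F) ℂ} (h : X.PosSemidef) : (ptraceR X).PosSemidef := by
  have : ptraceR X = ∑ b : F, X.submatrix (fun x => (x, b)) (fun x => (x, b)) := by
    ext f f'
    simp [ptraceR, Matrix.sum_apply]
  rw [this]
  exact posSemidef_sum _ fun b _ => h.submatrix _

lemma ptraceR_margAE (X : Matrix (A × B × E) (A × B × E) ℂ) : ptraceR (margAE X) = ptraceR X := by
  ext i j
  simp only [ptraceR, margAE, Fintype.sum_prod_type]
  rw [Finset.sum_comm]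

lemma ptraceR_margAB (X : Matrix (A × B × E) (A × B × E) ℂ) : ptraceR (margAB X) = ptraceR X := by
  ext i j
  simp only [ptraceR, margAB, Fintype.sum_prod_type]

lemma psd_entry_le {n : Type*} [Fintype n] {a : Matrix n n ℂ} (h : a.PosSemidef) (j k : n) :
    ‖a j k‖ ≤ a.trace.re := by
  obtain ⟨C, rfl⟩ := psd_factor a h
  have ht : (Cᴴ * C).trace.re = ∑ c, ∑ i, ‖C c i‖ ^ 2 := by
    simp only [Matrix.trace, Matrix.diag, Matrix.mul_apply, conjTranspose_apply, Complex.re_sum]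
    rw [Finset.sum_comm]
    refine Finset.sum_congr rfl fun c _ => Finset.sum_congr rfl fun i _ => ?_
    rw [← Complex.normSq_eq_norm_sq, Complex.normSq_apply]
    simp
  rw [ht, Matrix.mul_apply]
  refine (norm_sum_le _ _).trans (Finset.sum_le_sum fun c _ => ?_)
  rw [conjTranspose_apply, norm_mul, norm_star]
  have h1 := Finset.single_le_sum (f := fun i => ‖C c i‖ ^ 2) (fun i _ => sq_nonneg _)
    (Finset.mem_univ j)
  have h2 := Finset.single_le_sum (f := fun i => ‖C c i‖ ^ 2) (fun i _ => sq_nonneg _)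
    (Finset.mem_univ k)
  nlinarith [sq_nonneg (‖C c j‖ - ‖C c k‖)]

lemma incr_scalar {t1 t2 : ℝ} {x1 x2 : ℂ} (h1 : 0 ≤ t1) (h2 : 0 ≤ t2)
    (z1 : t1 = 0 → x1 = 0) (z2 : t2 = 0 → x2 = 0) :
    ‖x1 - ((t1 / (t1 + t2) : ℝ) : ℂ) * (x1 + x2)‖ ^ 2 / (t1 + t2) ≤
      ‖x1‖ ^ 2 / t1 + ‖x2‖ ^ 2 / t2 - ‖x1 + x2‖ ^ 2 / (t1 + t2) := by
  rcases h1.eq_or_lt with h | h1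
  · simp [z1 h.symm, ← h]
  rcases h2.eq_or_lt with h | h2
  · subst h
    simp [z2 rfl, h1.ne']
  have ht : 0 < t1 + t2 := by positivity
  simp only [← Complex.normSq_eq_norm_sq, Complex.normSq_apply, Complex.sub_re, Complex.sub_im,
    Complex.add_re, Complex.add_im, Complex.re_ofReal_mul, Complex.im_ofReal_mul]
  generalize x1.re = a, x1.im = b, x2.re = c, x2.im = d
  have e1 : ∀ a c : ℝ, a - t1 / (t1 + t2) * (a + c) = (t2 * a - t1 * c) / (t1 + t2) := by
    intro a c; field_simp; ring
  rw [e1, e1]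
  have e2 : (a * a + b * b) / t1 + (c * c + d * d) / t2 -
      ((a + c) * (a + c) + (b + d) * (b + d)) / (t1 + t2) =
      ((t2 * a - t1 * c) ^ 2 + (t2 * b - t1 * d) ^ 2) / (t1 * t2 * (t1 + t2)) := by
    field_simp; ring
  have e3 : ((t2 * a - t1 * c) / (t1 + t2) * ((t2 * a - t1 * c) / (t1 + t2)) +
      (t2 * b - t1 * d) / (t1 + t2) * ((t2 * b - t1 * d) / (t1 + t2))) / (t1 + t2) =
      ((t2 * a - t1 * c) ^ 2 + (t2 * b - t1 * d) ^ 2) / ((t1 + t2) ^ 2 * (t1 + t2)) := by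
    field_simp
  rw [e2, e3]
  gcongr
  nlinarith

end definetti

section definettiMain

variable {A B E F : Type*} [Fintype A] [Fintype B] [Fintype E] [Fintype F]

/-- The quadratic potential of an unnormalised state on `AE`. -/
def gpot (ω : Matrix (A × E) (A × E) ℂ) : ℝ :=
  ∑ j, ∑ k, ‖ptraceR ω j k‖ ^ 2 / ω.trace.re

lemma trace_re_nonneg {n : Type*} [Fintype n] {a : Matrix n n ℂ} (h : a.PosSemidef) :
    0 ≤ a.trace.re := (Complex.le_def.1 h.trace_nonneg).1

lemma trace_eq_re {n : Type*} [Fintype n] {a : Matrix n n ℂ} (h : a.PosSemidef) :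
    a.trace = ((a.trace.re : ℝ) : ℂ) := by
  have := (Complex.le_def.1 h.trace_nonneg).2
  exact Complex.ext (by simp) (by simpa using this.symm)

lemma ptraceR_entry_le {ω : Matrix (A × E) (A × E) ℂ} (h : ω.PosSemidef) (j k : A) :
    ‖ptraceR ω j k‖ ≤ ω.trace.re := by
  rw [← trace_ptraceR]
  exact psd_entry_le (ptraceR_psd h) j k

lemma ptraceR_entry_zero {ω : Matrix (A × E) (A × E) ℂ} (h : ω.PosSemidef) (j k : A)
    (h0 : ω.trace.re = 0) : ptraceR ω j k = 0 := by
  have := ptraceR_entry_le h j k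
  rw [h0] at this
  exact norm_le_zero_iff.1 this

lemma gpot_le {ω : Matrix (A × E) (A × E) ℂ} (h : ω.PosSemidef) :
    gpot ω ≤ (Fintype.card A : ℝ) ^ 2 * ω.trace.re := by
  have ht := trace_re_nonneg h
  have : ∀ j k, ‖ptraceR ω j k‖ ^ 2 / ω.trace.re ≤ ω.trace.re := by
    intro j k
    refine div_le_of_le_mul₀ ht ht ?_
    have := ptraceR_entry_le h j k
    nlinarith [norm_nonneg (ptraceR ω j k)]
  calc gpot ω ≤ ∑ _j : A, ∑ _k : A, ω.trace.re :=
        Finset.sum_le_sum fun j _ => Finset.sum_le_sum fun k _ => this j k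
    _ = _ := by simp [Finset.card_univ]; ring

lemma ptraceR_sub (X Y : Matrix (A × F) (A × F) ℂ) : ptraceR (X - Y) = ptraceR X - ptraceR Y := by
  ext i j; simp [ptraceR, Finset.sum_sub_distrib]

/-- Increment of the potential under a measurement on `B`. -/
lemma gpot_incr {ω : Matrix (A × E) (A × E) ℂ} {X : Matrix (A × B × E) (A × B × E) ℂ}
    (hX : X.PosSemidef) (hXω : ptraceR X = ptraceR ω)
    {M : Matrix B B ℂ} (hM : M.PosSemidef) (hM' : (1 - M).PosSemidef) (j k : A) :
    ‖ptraceR (pmap M X) j k - (((pmap M X).trace.re / ω.trace.re : ℝ) : ℂ) * ptraceR ω j k‖ ^ 2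
      / ω.trace.re ≤ gpot (pmap M X) + gpot (pmap (1 - M) X) - gpot ω := by
  have p1 := pmap_psd hM hX
  have p2 := pmap_psd hM' hX
  have hs : ptraceR (pmap M X) + ptraceR (pmap (1 - M) X) = ptraceR ω := by
    rw [pmap_sub, pmap_one, ptraceR_sub, ptraceR_margAE, hXω]; abel
  have ht : ω.trace.re = (pmap M X).trace.re + (pmap (1 - M) X).trace.re := by
    rw [← trace_ptraceR ω, ← hs, trace_add, trace_ptraceR, trace_ptraceR, Complex.add_re]
  have key : ∀ j k, ‖ptraceR (pmap M X) j k -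
      (((pmap M X).trace.re / ω.trace.re : ℝ) : ℂ) * ptraceR ω j k‖ ^ 2 / ω.trace.re ≤
      ‖ptraceR (pmap M X) j k‖ ^ 2 / (pmap M X).trace.re +
      ‖ptraceR (pmap (1 - M) X) j k‖ ^ 2 / (pmap (1 - M) X).trace.re -
      ‖ptraceR ω j k‖ ^ 2 / ω.trace.re := by
    intro j k
    have := incr_scalar (trace_re_nonneg p1) (trace_re_nonneg p2)
      (ptraceR_entry_zero p1 j k) (ptraceR_entry_zero p2 j k)
    rw [← ht, ← Matrix.add_apply, hs] at this
    exact this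
  have tn : 0 ≤ ω.trace.re := by
    rw [ht]; exact add_nonneg (trace_re_nonneg p1) (trace_re_nonneg p2)
  have nn : ∀ j k, 0 ≤ ‖ptraceR (pmap M X) j k -
      (((pmap M X).trace.re / ω.trace.re : ℝ) : ℂ) * ptraceR ω j k‖ ^ 2 / ω.trace.re :=
    fun j k => div_nonneg (sq_nonneg _) tn
  refine (Finset.single_le_sum (f := fun k => ‖ptraceR (pmap M X) j k -
      (((pmap M X).trace.re / ω.trace.re : ℝ) : ℂ) * ptraceR ω j k‖ ^ 2 / ω.trace.re)
      (fun k _ => nn j k) (Finset.mem_univ k)).trans ?_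
  refine (Finset.single_le_sum (f := fun j => ∑ k, ‖ptraceR (pmap M X) j k -
      (((pmap M X).trace.re / ω.trace.re : ℝ) : ℂ) * ptraceR ω j k‖ ^ 2 / ω.trace.re)
      (fun j _ => Finset.sum_nonneg fun k _ => nn j k) (Finset.mem_univ j)).trans ?_
  refine (Finset.sum_le_sum fun j _ => Finset.sum_le_sum fun k _ => key j k).trans (le_of_eq ?_)
  simp only [gpot, Finset.sum_add_distrib, Finset.sum_sub_distrib]

/-- The achievable values of the total potential. -/
def potVals (σ : Matrix (A × E) (A × E) ℂ) : Set ℝ :=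
  {r | ∃ (ι : Type) (_ : Fintype ι) (ω : ι → Matrix (A × E) (A × E) ℂ),
    (∀ i, (ω i).PosSemidef) ∧ ∑ i, ω i = σ ∧ r = ∑ i, gpot (ω i)}

lemma exists_almost_opt {σ : Matrix (A × E) (A × E) ℂ} (hσ : σ.PosSemidef) 
    (R : Matrix (A × E) (A × E) ℂ → Matrix (A × B × E) (A × B × E) ℂ)
    (hsum : ∀ (ι : Type) (_ : Fintype ι) (ω : ι → Matrix (A × E) (A × E) ℂ),
      R (∑ i, ω i) = ∑ i, R (ω i))
    (hpsd : ∀ ω, ω.PosSemidef → (R ω).PosSemidef)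
    (hRσ : margAE (R σ) = σ) {ε : ℝ} (hε : 0 < ε) :
    ∃ (ι : Type) (_ : Fintype ι) (ω : ι → Matrix (A × E) (A × E) ℂ),
      (∀ i, (ω i).PosSemidef) ∧ ∑ i, ω i = σ ∧
      ∀ M : Matrix B B ℂ, M.PosSemidef → (1 - M).PosSemidef →
        ∑ i, (gpot (pmap M (R (ω i))) + gpot (pmap (1 - M) (R (ω i))) - gpot (ω i)) ≤ ε := by
  have hne : (potVals σ).Nonempty :=
    ⟨_, Unit, inferInstance, fun _ => σ, fun _ => hσ, by simp, rfl⟩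
  have hbd : BddAbove (potVals σ) := by
    refine ⟨(Fintype.card A : ℝ) ^ 2 * σ.trace.re, ?_⟩
    rintro r ⟨ι, _, ω, h1, h2, rfl⟩
    calc ∑ i, gpot (ω i) ≤ ∑ i, (Fintype.card A : ℝ) ^ 2 * (ω i).trace.re :=
          Finset.sum_le_sum fun i _ => gpot_le (h1 i)
      _ = _ := by rw [← Finset.mul_sum, ← h2, trace_sum, Complex.re_sum]
  obtain ⟨r, ⟨ι, _, ω, h1, h2, rfl⟩, hr⟩ := exists_lt_of_lt_csSup hne (sub_lt_self _ hε)
  refine ⟨ι, inferInstance, ω, h1, h2, fun M hM hM' => ?_⟩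
  have hmem : ∑ i, gpot (pmap M (R (ω i))) + ∑ i, gpot (pmap (1 - M) (R (ω i))) ∈ potVals σ := by
    refine ⟨ι ⊕ ι, inferInstance, Sum.elim (fun i => pmap M (R (ω i)))
      (fun i => pmap (1 - M) (R (ω i))), ?_, ?_, ?_⟩
    · rintro (i | i)
      · exact pmap_psd hM (hpsd _ (h1 i))
      · exact pmap_psd hM' (hpsd _ (h1 i))
    · rw [Fintype.sum_sum_type]
      simp only [Sum.elim_inl, Sum.elim_inr, pmap_sub, pmap_one]
      rw [← Finset.sum_add_distrib]
      simp only [add_sub_cancel]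
      conv_rhs => rw [← hRσ, ← h2, hsum]
      ext x y
      simp only [Matrix.sum_apply, margAE]
      rw [Finset.sum_comm]
    · rw [Fintype.sum_sum_type]; simp
  have := le_csSup hbd hmem
  rw [Finset.sum_sub_distrib, Finset.sum_add_distrib]
  linarith

/-- Contraction of a bipartite operator against `M` on the second factor. -/
def contr (M : Matrix B B ℂ) (D : Matrix (A × B) (A × B) ℂ) (j k : A) : ℂ :=
  ∑ b, ∑ b', M b' b * D (j, b) (k, b')

lemma contr_sum {ι : Type*} [Fintype ι] (M : Matrix B B ℂ) (D : ι → Matrix (A × B) (A × B) ℂ)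
    (j k : A) : contr M (∑ i, D i) j k = ∑ i, contr M (D i) j k := by
  simp only [contr, Matrix.sum_apply, Finset.mul_sum]
  rw [Finset.sum_comm]
  conv_lhs =>
    rw [Finset.sum_comm]
    enter [2, b]
    rw [Finset.sum_comm]
  rw [Finset.sum_comm]

lemma contr_sub (M : Matrix B B ℂ) (D D' : Matrix (A × B) (A × B) ℂ) (j k : A) :
    contr M (D - D') j k = contr M D j k - contr M D' j k := by
  simp only [contr, Matrix.sub_apply, mul_sub, Finset.sum_sub_distrib]

lemma contr_kron (M : Matrix B B ℂ) (a : Matrix A A ℂ) (c : ℂ) (θ : Matrix (A × B) (A × B) ℂ)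
    (j k : A) : contr M ((c • a) ⊗ₖ ptraceL θ) j k = c * a j k * ∑ l, contr M θ l l := by
  simp only [contr, kroneckerMap_apply, ptraceL, Matrix.smul_apply, smul_eq_mul]
  conv_rhs => rw [Finset.sum_comm, Finset.mul_sum]
  refine Finset.sum_congr rfl fun b _ => ?_
  conv_rhs => rw [Finset.sum_comm, Finset.mul_sum]
  refine Finset.sum_congr rfl fun b' _ => ?_
  rw [Finset.mul_sum, Finset.mul_sum, Finset.mul_sum]
  refine Finset.sum_congr rfl fun l _ => ?_
  ring

lemma approx_sep {σ : Matrix (A × E) (A × E) ℂ} (hσ : σ.PosSemidef) (htr : σ.trace = 1)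
    (R : Matrix (A × E) (A × E) ℂ → Matrix (A × B × E) (A × B × E) ℂ)
    (hsum : ∀ (ι : Type) (_ : Fintype ι) (ω : ι → Matrix (A × E) (A × E) ℂ),
      R (∑ i, ω i) = ∑ i, R (ω i))
    (hpsd : ∀ ω, ω.PosSemidef → (R ω).PosSemidef)
    (htp : ∀ ω, ω.PosSemidef → (σ - ω).PosSemidef → ptraceR (R ω) = ptraceR ω)
    (hRσ : margAE (R σ) = σ) {ε : ℝ} (hε : 0 < ε) :
    ∃ s, IsSep s ∧ ∀ M : Matrix B B ℂ, M.PosSemidef → (1 - M).PosSemidef →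
      ∀ j k, ‖contr M (margAB (R σ) - s) j k‖ ≤ ε := by
  obtain ⟨ι, _, ω, h1, h2, h3⟩ := exists_almost_opt hσ R hsum hpsd hRσ (pow_pos hε 2)
  have hle : ∀ i, (σ - ω i).PosSemidef := by
    intro i
    rw [← h2, ← Finset.add_sum_erase _ _ (Finset.mem_univ i), add_sub_cancel_left]
    exact posSemidef_sum _ fun j _ => h1 j
  have tp := fun i => htp _ (h1 i) (hle i)
  have hX := fun i => hpsd _ (h1 i)
  have tsum : ∑ i, (ω i).trace.re = 1 := by
    rw [← Complex.re_sum, ← trace_sum, h2, htr, Complex.one_re]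
  have tn := fun i => trace_re_nonneg (h1 i)
  have hmAB : margAB (R σ) = ∑ i, margAB (R (ω i)) := by
    rw [← h2, hsum]
    ext x y
    simp only [margAB, Matrix.sum_apply]
    rw [Finset.sum_comm]
  have htrX : ∀ i, (ptraceL (margAB (R (ω i)))).trace = (((ω i).trace.re : ℝ) : ℂ) := by
    intro i
    rw [trace_ptraceL, ← trace_ptraceR, ptraceR_margAB, tp, trace_ptraceR, ← trace_eq_re (h1 i)]
  refine ⟨∑ i, (((((ω i).trace.re)⁻¹ : ℝ) : ℂ) • ptraceR (ω i)) ⊗ₖ ptraceL (margAB (R (ω i))),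
    ?_, ?_⟩
  · apply isSep_of_cone
    · intro i
      exact (ptraceR_psd (h1 i)).smul (by exact_mod_cast inv_nonneg.2 (tn i))
    · exact fun i => ptraceL_psd (margAB_psd (hX i))
    · rw [trace_sum]
      have : ∀ i, ((((((ω i).trace.re)⁻¹ : ℝ) : ℂ) • ptraceR (ω i)) ⊗ₖ
          ptraceL (margAB (R (ω i)))).trace = (((ω i).trace.re : ℝ) : ℂ) := by
        intro i
        rw [trace_kronecker, htrX, trace_smul, trace_ptraceR, trace_eq_re (h1 i), smul_eq_mul,
          ← Complex.ofReal_mul, ← Complex.ofReal_mul]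
        simp only [Complex.ofReal_re]
        congr 1
        rcases eq_or_ne ((ω i).trace.re) 0 with h | h
        · rw [h]; simp
        · field_simp
      rw [Finset.sum_congr rfl fun i _ => this i, ← Complex.ofReal_sum, tsum, Complex.ofReal_one]
  · intro M hM hM' j k
    have e1 : contr M (margAB (R σ) - ∑ i, (((((ω i).trace.re)⁻¹ : ℝ) : ℂ) • ptraceR (ω i)) ⊗ₖ
        ptraceL (margAB (R (ω i)))) j k = ∑ i, (ptraceR (pmap M (R (ω i))) j k -
        (((pmap M (R (ω i))).trace.re / (ω i).trace.re : ℝ) : ℂ) * ptraceR (ω i) j k) := by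
      rw [contr_sub, hmAB, contr_sum, contr_sum, ← Finset.sum_sub_distrib]
      refine Finset.sum_congr rfl fun i _ => ?_
      rw [contr_kron]
      have e2 : ∀ j k, contr M (margAB (R (ω i))) j k = ptraceR (pmap M (R (ω i))) j k :=
        fun j k => (ptraceR_pmap _ _ _ _).symm
      have e3 : ∑ l, contr M (margAB (R (ω i))) l l = (pmap M (R (ω i))).trace := by
        rw [← trace_ptraceR]
        exact Finset.sum_congr rfl fun l _ => e2 l l
      rw [e3, e2, trace_eq_re (pmap_psd hM (hX i))]
      push_cast
      simp only [Complex.ofReal_re]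
      ring
    rw [e1]
    refine (norm_sum_le _ _).trans ?_
    refine le_of_sq_le_sq ?_ hε.le
    refine (Finset.sum_sq_le_sum_mul_sum_of_sq_le_mul (f := fun i =>
      ‖ptraceR (pmap M (R (ω i))) j k -
        (((pmap M (R (ω i))).trace.re / (ω i).trace.re : ℝ) : ℂ) * ptraceR (ω i) j k‖ ^ 2 /
        (ω i).trace.re) (g := fun i => (ω i).trace.re) _ 
        (fun i _ => div_nonneg (sq_nonneg _) (tn i)) (fun i _ => tn i) ?_).trans ?_
    · intro i _
      refine le_of_eq ?_
      rcases eq_or_ne ((ω i).trace.re) 0 with h | h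
      · have z1 : (pmap M (R (ω i))).trace.re = 0 := by
          have p1 := trace_re_nonneg (pmap_psd hM (hX i))
          have p2 := trace_re_nonneg (pmap_psd hM' (hX i))
          rw [pmap_sub, pmap_one, trace_sub, trace_margAE, ← trace_ptraceR (R (ω i)), tp,
            trace_ptraceR, Complex.sub_re, h] at p2
          linarith
        rw [ptraceR_entry_zero (pmap_psd hM (hX i)) j k z1, ptraceR_entry_zero (h1 i) j k h]
        simp
      · field_simp
    · rw [tsum, mul_one]
      exact (Finset.sum_le_sum fun i _ => gpot_incr (hX i) (tp i) hM hM' j k).trans (h3 M hM hM')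

lemma exists_scale {M : Matrix B B ℂ} (hM : M.PosSemidef) :
    ∃ c : ℝ, 0 < c ∧ (1 - (c : ℂ) • M).PosSemidef := by
  obtain ⟨U, p, h1, h2, h3, h4, -⟩ := spectral_ex M hM
  have hs : 0 ≤ ∑ i, p i := Finset.sum_nonneg fun i _ => h3 i
  refine ⟨(1 + ∑ i, p i)⁻¹, by positivity, ?_⟩
  have : 1 - (((1 + ∑ i, p i)⁻¹ : ℝ) : ℂ) • M =
      U * diagonal (fun i => ((1 - (1 + ∑ i, p i)⁻¹ * p i : ℝ) : ℂ)) * Uᴴ := by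
    have : diagonal (fun i => ((1 - (1 + ∑ i, p i)⁻¹ * p i : ℝ) : ℂ)) =
        1 - (((1 + ∑ i, p i)⁻¹ : ℝ) : ℂ) • diagonal (fun i => (p i : ℂ)) := by
      rw [← diagonal_one, ← diagonal_smul, diagonal_sub]
      congr 1; ext i
      simp
    rw [this, Matrix.mul_sub, Matrix.sub_mul, Matrix.mul_one, h2, Matrix.mul_smul,
      Matrix.smul_mul, ← h4]
  rw [this]
  refine PosSemidef.mul_mul_conjTranspose_same (PosSemidef.diagonal fun i => ?_) _
  have h5 := Finset.single_le_sum (f := p) (fun i _ => h3 i) (Finset.mem_univ i)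
  have h6 : (1 + ∑ i, p i)⁻¹ * p i ≤ 1 := by
    rw [inv_mul_le_iff₀ (by positivity)]; linarith
  simp only [Pi.zero_apply]
  exact_mod_cast sub_nonneg.2 h6

lemma contr_add_left (M N : Matrix B B ℂ) (D : Matrix (A × B) (A × B) ℂ) (j k : A) :
    contr (M + N) D j k = contr M D j k + contr N D j k := by
  simp only [contr, Matrix.add_apply, add_mul, Finset.sum_add_distrib]

lemma contr_smul_left (c : ℂ) (M : Matrix B B ℂ) (D : Matrix (A × B) (A × B) ℂ) (j k : A) :
    contr (c • M) D j k = c * contr M D j k := by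
  simp only [contr, Matrix.smul_apply, smul_eq_mul, Finset.mul_sum, mul_assoc]

lemma contr_single (b0 b1 : B) (D : Matrix (A × B) (A × B) ℂ) (j k : A) :
    contr (Matrix.single b1 b0 1) D j k = D (j, b0) (k, b1) := by
  simp only [contr]
  rw [Finset.sum_eq_single b0, Finset.sum_eq_single b1]
  · simp
  · intro b _ hb; simp [Matrix.single, hb.symm]
  · simp
  · intro b _ hb; simp [Matrix.single, hb.symm]
  · simp

lemma polarize (b0 b1 : B) : (4 : ℂ) • Matrix.single b1 b0 (1 : ℂ) =
    vecMulVec (Pi.single b1 1 + Pi.single b0 1) (star (Pi.single b1 1 + Pi.single b0 1)) +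
    Complex.I • vecMulVec (Pi.single b1 1 + Complex.I • Pi.single b0 1)
      (star (Pi.single b1 1 + Complex.I • Pi.single b0 1)) +
    (-1 : ℂ) • vecMulVec (Pi.single b1 1 - Pi.single b0 1)
      (star (Pi.single b1 1 - Pi.single b0 1)) +
    (-Complex.I) • vecMulVec (Pi.single b1 1 - Complex.I • Pi.single b0 1)
      (star (Pi.single b1 1 - Complex.I • Pi.single b0 1)) := by
  have gen : ∀ u w : B → ℂ, (4 : ℂ) • vecMulVec u (star w) =
      vecMulVec (u + w) (star (u + w)) +
      Complex.I • vecMulVec (u + Complex.I • w) (star (u + Complex.I • w)) +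
      (-1 : ℂ) • vecMulVec (u - w) (star (u - w)) +
      (-Complex.I) • vecMulVec (u - Complex.I • w) (star (u - Complex.I • w)) := by
    intro u w
    ext x y
    simp only [vecMulVec_apply, Matrix.smul_apply, Matrix.add_apply, Pi.add_apply, Pi.star_apply,
      Pi.sub_apply, Pi.smul_apply, smul_eq_mul, star_add, star_sub, star_mul',
      RCLike.star_def, Complex.conj_I]
    linear_combination (2 * u x * (starRingEnd ℂ) (w y) - 2 * w x * (starRingEnd ℂ) (u y)) * Complex.I_sq
  rw [← gen]
  congr 1
  ext x y
  simp [Matrix.single, vecMulVec_apply, Pi.single_apply]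
  grind

theorem definetti {σ : Matrix (A × E) (A × E) ℂ} (hσ : σ.PosSemidef) (htr : σ.trace = 1)
    (R : Matrix (A × E) (A × E) ℂ → Matrix (A × B × E) (A × B × E) ℂ)
    (hsum : ∀ (ι : Type) (_ : Fintype ι) (ω : ι → Matrix (A × E) (A × E) ℂ),
      R (∑ i, ω i) = ∑ i, R (ω i))
    (hpsd : ∀ ω, ω.PosSemidef → (R ω).PosSemidef)
    (htp : ∀ ω, ω.PosSemidef → (σ - ω).PosSemidef → ptraceR (R ω) = ptraceR ω)
    (hRσ : margAE (R σ) = σ) : IsSep (margAB (R σ)) := by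
  choose s hs hs' using fun n : ℕ => approx_sep hσ htr R hsum hpsd htp hRσ
    (ε := 1 / ((n : ℝ) + 1)) (by positivity)
  set D := margAB (R σ) with hD
  have hpos : ∀ M : Matrix B B ℂ, M.PosSemidef → ∀ j k,
      Filter.Tendsto (fun n => contr M (D - s n) j k) Filter.atTop (nhds 0) := by
    intro M hM j k
    obtain ⟨c, hc, hc'⟩ := exists_scale hM
    have h1 : Filter.Tendsto (fun n => contr ((c : ℂ) • M) (D - s n) j k) Filter.atTop (nhds 0) :=
      squeeze_zero_norm (fun n => hs' n _ (hM.smul (by exact_mod_cast hc.le)) hc' j k)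
        tendsto_one_div_add_atTop_nhds_zero_nat
    have h2 := h1.const_mul ((c : ℂ)⁻¹)
    rw [mul_zero] at h2
    refine h2.congr fun n => ?_
    rw [contr_smul_left, ← mul_assoc, inv_mul_cancel₀ (by exact_mod_cast hc.ne'), one_mul]
  have hentry : ∀ j k b0 b1, Filter.Tendsto (fun n => (D - s n) (j, b0) (k, b1)) Filter.atTop
      (nhds 0) := by
    intro j k b0 b1
    have q := fun v : B → ℂ => hpos _ (posSemidef_vecMulVec_self_star v) j k
    have h := ((((q (Pi.single b1 1 + Pi.single b0 1)).add
      ((q (Pi.single b1 1 + Complex.I • Pi.single b0 1)).const_mul Complex.I)).add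
      ((q (Pi.single b1 1 - Pi.single b0 1)).const_mul (-1))).add
      ((q (Pi.single b1 1 - Complex.I • Pi.single b0 1)).const_mul (-Complex.I))).const_mul (4⁻¹)
    simp only [mul_zero, add_zero] at h
    refine h.congr fun n => ?_
    rw [← contr_smul_left, ← contr_smul_left, ← contr_smul_left, ← contr_add_left,
      ← contr_add_left, ← contr_add_left, ← polarize, contr_smul_left, contr_single,
      ← mul_assoc, inv_mul_cancel₀ (by norm_num), one_mul]
  have hlim : Filter.Tendsto s Filter.atTop (nhds D) := by
    refine tendsto_pi_nhds.2 fun x => tendsto_pi_nhds.2 fun y => ?_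
    have := (hentry x.1 y.1 x.2 y.2).const_sub (D x y)
    simpa using this
  exact isClosed_isSep.mem_of_tendsto hlim (Filter.Eventually.of_forall hs)

theorem isSep_of_cmi (ρ : Matrix (A × B × E) (A × B × E) ℂ) (hρ : IsState ρ)
    (hcmi : condMutualInfo ρ = 0) : IsSep (margAB ρ) := by
  obtain ⟨K, hK, hE⟩ := recovery ρ hρ.1 hcmi
  have := definetti (margAE_psd hρ.1) (by rw [trace_margAE]; exact hρ.2)
    (fun ω => ((1 : Matrix A A ℂ) ⊗ₖ K) * hatM B ω * ((1 : Matrix A A ℂ) ⊗ₖ K)ᴴ)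
    (fun ι _ ω => by simp only [hatM_sum, Matrix.mul_sum, Matrix.sum_mul])
    (fun ω hω => (hatM_psd hω).mul_mul_conjTranspose_same _)
    (fun ω h1 h2 => recovery_tp K (by rw [ptraceL_margAE]; exact hE) h1 h2)
    (by rw [← hK])
  simp only [← hK] at this
  exact this

end definettiMain

/-- If a state `ρ^{AB}` admits a finite-dimensional extension `ρ^{ABE}` with
vanishing quantum conditional mutual information `I(A;B|E) = 0`, then `ρ^{AB}` is separable. -/
theorem separable_of_condMutualInfo_eq_zero
    {A B E : Type*} [Fintype A] [Fintype B] [Fintype E]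
    (ρ : Matrix (A × B) (A × B) ℂ)
    (ρE : Matrix (A × B × E) (A × B × E) ℂ)
    (hρE : IsState ρE) (hext : margAB ρE = ρ)
    (hcmi : condMutualInfo ρE = 0) :
    ∃ (n : ℕ) (p : Fin n → ℝ) (ψ : Fin n → A → ℂ) (φ : Fin n → B → ℂ),
      (∀ i, 0 ≤ p i) ∧ (∑ i, p i) = 1 ∧
      (∀ i, ∑ a, ‖ψ i a‖ ^ 2 = 1) ∧ (∀ i, ∑ b, ‖φ i b‖ ^ 2 = 1) ∧
      ρ = ∑ i, (p i : ℂ) • (outer (ψ i) ⊗ₖ outer (φ i)) := by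
  subst hext
  exact isSep_of_cmi ρE hρE hcmi

end
end

section
/- Let σ^{AB} = (1/3)(|I⟩⟨I| + |II⟩⟨II| + |III⟩⟨III|) be the totally antisymmetric two-qutrit state on ℂ³ ⊗ ℂ³, where |I⟩ = (|2⟩|3⟩ - |3⟩|2⟩)/√2, |II⟩ = (|3⟩|1⟩ - |1⟩|3⟩)/√2, |III⟩ = (|1⟩|2⟩ - |2⟩|1⟩)/√2 for an orthonormal basis |1⟩,|2⟩,|3⟩ of ℂ³. Then E_sq(σ^{AB}) ≤ (1/2) log₂ 3. -/
open Matrix BigOperators Kronecker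
open scoped Classical ComplexOrder

noncomputable section

variable {A B E : Type*} [Fintype A] [Fintype B] [Fintype E]

/-- The vector `|I⟩ = (|2⟩|3⟩ - |3⟩|2⟩)/√2`, with basis `|1⟩,|2⟩,|3⟩` identified with
`0,1,2 : Fin 3`. -/
def ketI : Fin 3 × Fin 3 → ℂ := fun x =>
  if x = (1, 2) then (1 / Real.sqrt 2 : ℝ)
  else if x = (2, 1) then -(1 / Real.sqrt 2 : ℝ) else 0

/-- The vector `|II⟩ = (|3⟩|1⟩ - |1⟩|3⟩)/√2`. -/
def ketII : Fin 3 × Fin 3 → ℂ := fun x =>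
  if x = (2, 0) then (1 / Real.sqrt 2 : ℝ)
  else if x = (0, 2) then -(1 / Real.sqrt 2 : ℝ) else 0

/-- The vector `|III⟩ = (|1⟩|2⟩ - |2⟩|1⟩)/√2`. -/
def ketIII : Fin 3 × Fin 3 → ℂ := fun x =>
  if x = (0, 1) then (1 / Real.sqrt 2 : ℝ)
  else if x = (1, 0) then -(1 / Real.sqrt 2 : ℝ) else 0

/-- The totally antisymmetric two-qutrit state. -/
def antisymState : Matrix (Fin 3 × Fin 3) (Fin 3 × Fin 3) ℂ :=
  (1 / 3 : ℂ) • (outer ketI + outer ketII + outer ketIII)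

/-- A Hermitian trace-one matrix with `ρ² = c ρ` has entropy `-log₂ c`. -/
theorem entropy_of_sq {n : Type*} [Fintype n] (ρ : Matrix n n ℂ) (c : ℝ)
    (h : ρ.IsHermitian) (hsq : ρ * ρ = (c : ℂ) • ρ) (htr : ρ.trace = 1) :
    vonNeumannEntropy ρ = -Real.logb 2 c := by
  have hev : ∀ i, h.eigenvalues i = 0 ∨ h.eigenvalues i = c := by
    intro i
    have h1 := h.mulVec_eigenvectorBasis i
    set v := (h.eigenvectorBasis i).ofLp with hv
    have hv0 : v ≠ 0 := by
      intro h0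
      have h2 := h.eigenvectorBasis.orthonormal.ne_zero i
      apply h2
      ext j
      exact congrFun h0 j
    have h2 : (ρ * ρ) *ᵥ v = (h.eigenvalues i * h.eigenvalues i) • v := by
      rw [← Matrix.mulVec_mulVec, h1, Matrix.mulVec_smul, h1, smul_smul]
    have h3 : (ρ * ρ) *ᵥ v = (c * h.eigenvalues i) • v := by
      rw [hsq, Matrix.smul_mulVec, h1, Complex.coe_smul, smul_smul]
    rw [h2] at h3
    have h4 := smul_left_injective ℝ hv0 h3
    by_cases h5 : h.eigenvalues i = 0
    · exact Or.inl h5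
    · exact Or.inr (mul_right_cancel₀ h5 h4)
  have hsum : ∑ i, h.eigenvalues i = 1 := by
    have h1 := h.trace_eq_sum_eigenvalues
    rw [htr] at h1
    have h2 : ((1 : ℝ) : ℂ) = ((∑ i, h.eigenvalues i : ℝ) : ℂ) := by
      push_cast
      exact h1
    exact (Complex.ofReal_injective h2).symm
  unfold vonNeumannEntropy
  rw [dif_pos h]
  calc ∑ i, -(h.eigenvalues i * Real.logb 2 (h.eigenvalues i))
      = ∑ i, h.eigenvalues i * (-Real.logb 2 c) := by
        apply Finset.sum_congr rfl
        intro i _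
        rcases hev i with h0 | h0 <;> rw [h0] <;> ring
    _ = -Real.logb 2 c := by rw [← Finset.sum_mul, hsum, one_mul]

/-- The trivial (one-dimensional) extension of the antisymmetric state. -/
def trivExt : Matrix (Fin 3 × Fin 3 × Fin 1) (Fin 3 × Fin 3 × Fin 1) ℂ :=
  fun x y => (1 / 6 : ℂ) * ((if x.1 = y.1 ∧ x.2.1 = y.2.1 then 1 else 0)
    - (if x.1 = y.2.1 ∧ x.2.1 = y.1 then 1 else 0))

theorem trivExt_herm : trivExt.IsHermitian := by
  ext ⟨a, b, e⟩ ⟨a', b', e'⟩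
  simp only [trivExt, Matrix.conjTranspose_apply, star_mul', star_sub]
  fin_cases a <;> fin_cases b <;> fin_cases a' <;> fin_cases b' <;> simp

theorem trivExt_sq : trivExt * trivExt = ((1 / 3 : ℝ) : ℂ) • trivExt := by
  ext ⟨a, b, e⟩ ⟨a', b', e'⟩
  simp only [trivExt, Matrix.mul_apply, Fintype.sum_prod_type, Fin.sum_univ_three,
    Matrix.smul_apply, Fin.sum_univ_one, smul_eq_mul]
  fin_cases a <;> fin_cases b <;> fin_cases a' <;> fin_cases b' <;> simp <;> norm_num

theorem trivExt_trace : trivExt.trace = 1 := by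
  simp [trivExt, Matrix.trace, Fintype.sum_prod_type, Fin.sum_univ_three]
  norm_num

theorem trivExt_state : IsState trivExt := by
  refine ⟨?_, trivExt_trace⟩
  have h : trivExt = (3 : ℝ) • (trivExtᴴ * trivExt) := by
    rw [trivExt_herm.eq, trivExt_sq, Complex.coe_smul, smul_smul]
    norm_num
  rw [h]
  exact (Matrix.posSemidef_conjTranspose_mul_self trivExt).smul (by norm_num)

theorem trivExt_AB : margAB trivExt = antisymState := by
  have hs : ((Real.sqrt 2 : ℝ) : ℂ)⁻¹ * ((Real.sqrt 2 : ℝ) : ℂ)⁻¹ = 1 / 2 := by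
    rw [← mul_inv, ← Complex.ofReal_mul, Real.mul_self_sqrt (by norm_num)]
    norm_num
  ext ⟨a, b⟩ ⟨a', b'⟩
  simp only [margAB, trivExt, antisymState, outer, ketI, ketII, ketIII, Matrix.smul_apply,
    Matrix.add_apply, Matrix.vecMulVec_apply, Pi.star_apply, Fin.sum_univ_one]
  fin_cases a <;> fin_cases b <;> fin_cases a' <;> fin_cases b' <;> simp [hs] <;> norm_num

theorem trivExt_AE : margAE trivExt = ((1 / 3 : ℝ) : ℂ) • 1 := by
  ext ⟨a, e⟩ ⟨a', e'⟩
  simp only [margAE, trivExt, Fin.sum_univ_three, Matrix.smul_apply, Matrix.one_apply]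
  fin_cases a <;> fin_cases a' <;> fin_cases e <;> fin_cases e' <;> simp <;> norm_num

theorem trivExt_BE : margBE trivExt = ((1 / 3 : ℝ) : ℂ) • 1 := by
  ext ⟨a, e⟩ ⟨a', e'⟩
  simp only [margBE, trivExt, Fin.sum_univ_three, Matrix.smul_apply, Matrix.one_apply]
  fin_cases a <;> fin_cases a' <;> fin_cases e <;> fin_cases e' <;> simp <;> norm_num

theorem trivExt_E : margE trivExt = 1 := by
  ext e e'
  simp only [margE, trivExt, Fin.sum_univ_three, Matrix.one_apply]
  fin_cases e <;> fin_cases e' <;> simp <;> norm_num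

theorem entropy_third : vonNeumannEntropy
    (((1 / 3 : ℝ) : ℂ) • (1 : Matrix (Fin 3 × Fin 1) (Fin 3 × Fin 1) ℂ))
    = -Real.logb 2 (1 / 3) := by
  apply entropy_of_sq
  · unfold Matrix.IsHermitian
    rw [Matrix.conjTranspose_smul, Matrix.conjTranspose_one]
    simp
  · simp
  · simp [Matrix.trace_smul, Matrix.trace_one]

theorem trivExt_condMutualInfo : condMutualInfo trivExt = Real.logb 2 3 := by
  unfold condMutualInfo
  rw [trivExt_AE, trivExt_BE, trivExt_E, entropy_third,
    entropy_of_sq trivExt (1 / 3) trivExt_herm trivExt_sq trivExt_trace,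
    entropy_of_sq (1 : Matrix (Fin 1) (Fin 1) ℂ) 1 Matrix.isHermitian_one (by simp) (by simp)]
  simp

/-- The squashed entanglement of the totally antisymmetric two-qutrit state
is at most `(1/2) log₂ 3`. -/
theorem squashedEntanglement_antisym_le :
    Esq antisymState ≤ (1 / 2) * Real.logb 2 3 := by
  have hmem : (1 / 2) * Real.logb 2 3 ∈ { x : ℝ | ∃ (d : ℕ)
      (ρE : Matrix (Fin 3 × Fin 3 × Fin d) (Fin 3 × Fin 3 × Fin d) ℂ),
      IsState ρE ∧ margAB ρE = antisymState ∧ x = (1 / 2) * condMutualInfo ρE } :=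
    ⟨1, trivExt, trivExt_state, trivExt_AB, by rw [trivExt_condMutualInfo]⟩
  unfold Esq
  by_cases hb : BddBelow { x : ℝ | ∃ (d : ℕ)
      (ρE : Matrix (Fin 3 × Fin 3 × Fin d) (Fin 3 × Fin 3 × Fin d) ℂ),
      IsState ρE ∧ margAB ρE = antisymState ∧ x = (1 / 2) * condMutualInfo ρE }
  · exact csInf_le hb hmem
  · rw [Real.sInf_of_not_bddBelow hb]
    have : 0 ≤ Real.logb 2 3 := Real.logb_nonneg (by norm_num) (by norm_num)
    positivity

end
end

section
/- For every state ρ^{AB} on H_A ⊗ H_B and every extension ρ^{ABE} of it on H_A ⊗ H_B ⊗ H_E, the quantum conditional mutual information satisfies I(A;B|E) ≥ I(A;B) - 2 S(AB), where I(A;B) = S(A) + S(B) - S(AB) is the quantum mutual information and S(AB) the entropy of ρ^{AB}. -/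
open Matrix BigOperators Kronecker
open scoped Classical ComplexOrder

noncomputable section

variable {A B E : Type*} [Fintype A] [Fintype B] [Fintype E]

section helpers

lemma vN_eq_roots {n : Type*} [Fintype n] [inst : DecidableEq n] (ρ : Matrix n n ℂ) (h : ρ.IsHermitian) :
    vonNeumannEntropy ρ =
      ((ρ.charpoly.roots.map (fun z : ℂ => Real.negMulLog z.re)).sum) / Real.log 2 := by
  obtain rfl : inst = fun a b => Classical.propDecidable (a = b) := Subsingleton.elim _ _
  rw [vonNeumannEntropy, dif_pos h, h.roots_charpoly_eq_eigenvalues, Multiset.map_map]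
  change _ = (∑ i, _) / _
  rw [Finset.sum_div]
  simp only [Real.logb, Real.negMulLog]
  refine Finset.sum_congr rfl fun i _ => ?_
  simp
  ring

lemma vN_eq_of_charpoly {n m : Type*} [Fintype n] [DecidableEq n] [Fintype m] [DecidableEq m]
    (ρ : Matrix n n ℂ) (σ : Matrix m m ℂ) (h : ρ.IsHermitian) (h' : σ.IsHermitian)
    (hc : ρ.charpoly = σ.charpoly) : vonNeumannEntropy ρ = vonNeumannEntropy σ := by
  rw [vN_eq_roots ρ h, vN_eq_roots σ h', hc]

lemma vN_submatrix {n m : Type*} [Fintype n] [Fintype m]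
    (ρ : Matrix n n ℂ) (h : ρ.IsHermitian) (e : m ≃ n) :
    vonNeumannEntropy (ρ.submatrix e e) = vonNeumannEntropy ρ := by
  apply vN_eq_of_charpoly _ _ (h.submatrix _) h
  exact charpoly_reindex e.symm ρ

lemma vN_transpose {n : Type*} [Fintype n]
    (ρ : Matrix n n ℂ) (h : ρ.IsHermitian) :
    vonNeumannEntropy ρᵀ = vonNeumannEntropy ρ :=
  vN_eq_of_charpoly _ _ h.transpose h (charpoly_transpose ρ)

lemma vN_mul_comm {n m : Type*} [Fintype n] [Fintype m] (M : Matrix n m ℂ) :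
    vonNeumannEntropy (M * Mᴴ) = vonNeumannEntropy (Mᴴ * M) := by
  rw [vN_eq_roots _ (isHermitian_mul_conjTranspose_self M),
    vN_eq_roots _ (isHermitian_conjTranspose_mul_self M)]
  have h := congrArg Polynomial.roots (charpoly_mul_comm' M Mᴴ)
  rw [Polynomial.roots_mul, Polynomial.roots_mul, Polynomial.roots_X_pow,
    Polynomial.roots_X_pow] at h
  · have h2 := congrArg (fun s : Multiset ℂ => (s.map (fun z : ℂ => Real.negMulLog z.re)).sum) h
    simp [Multiset.map_nsmul, Multiset.sum_nsmul] at h2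
    rw [h2]
  · exact mul_ne_zero (pow_ne_zero _ Polynomial.X_ne_zero) (charpoly_monic _).ne_zero
  · exact mul_ne_zero (pow_ne_zero _ Polynomial.X_ne_zero) (charpoly_monic _).ne_zero

/-- `ρ` is diagonalised by the unitary `U` with eigenvalues `l`. -/
structure Diag {n : Type*} [Fintype n] [DecidableEq n] (ρ U : Matrix n n ℂ) (l : n → ℝ) : Prop where
  left : Uᴴ * U = 1
  right : U * Uᴴ = 1
  eq : ρ = U * diagonal (fun i => (l i : ℂ)) * Uᴴ

lemma diag_exists {n : Type*} [Fintype n] [DecidableEq n] (ρ : Matrix n n ℂ) (h : ρ.IsHermitian) :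
    Diag ρ (h.eigenvectorUnitary : Matrix n n ℂ) h.eigenvalues := by
  refine ⟨?_, ?_, ?_⟩
  · exact Unitary.coe_star_mul_self h.eigenvectorUnitary
  · exact Unitary.coe_mul_star_self h.eigenvectorUnitary
  · conv_lhs => rw [h.spectral_theorem]
    rfl

lemma Diag.isHermitian {n : Type*} [Fintype n] [DecidableEq n] {ρ U : Matrix n n ℂ} {l : n → ℝ}
    (h : Diag ρ U l) : ρ.IsHermitian := by
  rw [h.eq]
  apply isHermitian_mul_mul_conjTranspose
  rw [isHermitian_diagonal_iff]
  intro i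
  simp [isSelfAdjoint_iff]

lemma Diag.vN {n : Type*} [Fintype n] [DecidableEq n] {ρ U : Matrix n n ℂ} {l : n → ℝ}
    (h : Diag ρ U l) : vonNeumannEntropy ρ = (∑ i, Real.negMulLog (l i)) / Real.log 2 := by
  rw [vN_eq_roots ρ h.isHermitian]
  have : ρ.charpoly = (diagonal (fun i => (l i : ℂ))).charpoly := by
    rw [h.eq, charpoly_mul_comm, ← mul_assoc, h.left, one_mul]
  rw [this, charpoly_diagonal]
  have h2 : (∏ i, (Polynomial.X - Polynomial.C (l i : ℂ))) =
      ((Finset.univ.val.map (fun i => (l i : ℂ))).map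
        (fun a => Polynomial.X - Polynomial.C a)).prod := by
    rw [Multiset.map_map]; rfl
  rw [h2, Polynomial.roots_multiset_prod_X_sub_C, Multiset.map_map]
  rfl

lemma Diag.shift {n : Type*} [Fintype n] [DecidableEq n] {ρ U : Matrix n n ℂ} {l : n → ℝ}
    (h : Diag ρ U l) (c : ℝ) : Diag (ρ + (c : ℂ) • 1) U (fun i => l i + c) := by
  refine ⟨h.left, h.right, ?_⟩
  have : (diagonal (fun i => ((l i + c : ℝ) : ℂ))) =
      diagonal (fun i => (l i : ℂ)) + (c : ℂ) • (1 : Matrix n n ℂ) := by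
    ext i j
    by_cases hij : i = j <;> simp [hij, diagonal, one_apply]
  rw [this, mul_add, add_mul, ← h.eq]
  simp [h.right]

lemma Diag.conj_eq {n : Type*} [Fintype n] [DecidableEq n] {ρ U : Matrix n n ℂ} {l : n → ℝ}
    (h : Diag ρ U l) : Uᴴ * ρ * U = diagonal (fun i => (l i : ℂ)) := by
  rw [h.eq]
  simp only [mul_assoc, h.left, mul_one]
  rw [← mul_assoc, h.left, one_mul]

lemma vN_shift_tendsto {n : Type*} [Fintype n] [DecidableEq n] (ρ : Matrix n n ℂ)
    (h : ρ.IsHermitian) (k : ℝ) :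
    Filter.Tendsto (fun ε : ℝ => vonNeumannEntropy (ρ + ((ε * k : ℝ) : ℂ) • 1))
      (nhdsWithin 0 (Set.Ioi 0)) (nhds (vonNeumannEntropy ρ)) := by
  have hd := diag_exists ρ h
  have : (fun ε : ℝ => vonNeumannEntropy (ρ + ((ε * k : ℝ) : ℂ) • 1)) =
      fun ε => (∑ i, Real.negMulLog (h.eigenvalues i + ε * k)) / Real.log 2 := by
    funext ε
    exact (hd.shift (ε * k)).vN
  rw [this, hd.vN]
  apply Filter.Tendsto.mono_left _ nhdsWithin_le_nhds
  have hc : Continuous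
      fun ε : ℝ => (∑ i, Real.negMulLog (h.eigenvalues i + ε * k)) / Real.log 2 := by
    have := Real.continuous_negMulLog
    fun_prop
  simpa using hc.tendsto 0

/-- The variational functional. -/
def Fn {n : Type*} [Fintype n] (ρ σ Y : Matrix n n ℂ) (t : ℝ) : ℝ :=
  2 * (trace (Yᴴ * ρ)).re - (trace ((Y * Yᴴ) * σ)).re - t * (trace ((Yᴴ * Y) * ρ)).re

/-- Overlaps of two bases. -/
def pw {n : Type*} [Fintype n] (V U : Matrix n n ℂ) (j i : n) : ℝ := Complex.normSq ((Vᴴ * U) j i)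

lemma pw_nonneg {n : Type*} [Fintype n] (V U : Matrix n n ℂ) (j i : n) : 0 ≤ pw V U j i :=
  Complex.normSq_nonneg _

/-- The value of the variational functional. -/
def qf {n : Type*} [Fintype n] (V U : Matrix n n ℂ) (l μ : n → ℝ) (t : ℝ) : ℝ :=
  ∑ j, ∑ i, pw V U j i * (l i ^ 2 / (μ j + t * l i))

lemma Fn_eq {n : Type*} [Fintype n] [DecidableEq n] {ρ σ U V : Matrix n n ℂ} {l μ : n → ℝ}
    (hρ : Diag ρ U l) (hσ : Diag σ V μ) (Y : Matrix n n ℂ) (t : ℝ) :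
    Fn ρ σ Y t = ∑ j, ∑ i, (2 * (star ((Vᴴ * Y * U) j i) * (Vᴴ * U) j i).re * l i
      - Complex.normSq ((Vᴴ * Y * U) j i) * (μ j + t * l i)) := by
  have h1 : trace (Yᴴ * ρ) =
      trace ((Vᴴ * Y * U)ᴴ * ((Vᴴ * U) * diagonal (fun i => (l i : ℂ)))) := by
    have : (Vᴴ * Y * U)ᴴ * ((Vᴴ * U) * diagonal (fun i => (l i : ℂ)))
        = Uᴴ * (Yᴴ * ((V * Vᴴ) * (U * diagonal (fun i => (l i : ℂ))))) := by
      simp [conjTranspose_mul, Matrix.mul_assoc]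
    rw [this, hσ.right, one_mul, trace_mul_comm Uᴴ, mul_assoc, ← hρ.eq]
  have h2 : trace ((Y * Yᴴ) * σ) =
      trace ((Vᴴ * Y * U)ᴴ * (diagonal (fun i => (μ i : ℂ)) * (Vᴴ * Y * U))) := by
    have : (Vᴴ * Y * U)ᴴ * (diagonal (fun i => (μ i : ℂ)) * (Vᴴ * Y * U))
        = Uᴴ * (Yᴴ * (V * diagonal (fun i => (μ i : ℂ)) * Vᴴ) * Y * U) := by
      simp [conjTranspose_mul, Matrix.mul_assoc]
    rw [this, trace_mul_comm Uᴴ, ← hσ.eq, mul_assoc (Yᴴ * σ * Y), hρ.right, mul_one,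
      mul_assoc Y, trace_mul_comm Y]
  have h3 : trace ((Yᴴ * Y) * ρ) =
      trace ((Vᴴ * Y * U) * (diagonal (fun i => (l i : ℂ)) * (Vᴴ * Y * U)ᴴ)) := by
    have : (Vᴴ * Y * U) * (diagonal (fun i => (l i : ℂ)) * (Vᴴ * Y * U)ᴴ)
        = Vᴴ * (Y * (U * diagonal (fun i => (l i : ℂ)) * Uᴴ) * Yᴴ * V) := by
      simp [conjTranspose_mul, Matrix.mul_assoc]
    rw [this, trace_mul_comm Vᴴ, ← hρ.eq, mul_assoc (Y * ρ * Yᴴ), hσ.right, mul_one,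
      mul_assoc Yᴴ, trace_mul_comm Yᴴ]
  rw [Fn, h1, h2, h3]
  generalize Vᴴ * Y * U = Z
  generalize Vᴴ * U = W
  have e1 : (trace (Zᴴ * (W * diagonal (fun i => (l i : ℂ))))).re
      = ∑ j, ∑ i, (star (Z j i) * W j i).re * l i := by
    rw [Finset.sum_comm]
    simp only [trace, diag_apply, mul_apply (M := Zᴴ), mul_diagonal, conjTranspose_apply, Complex.re_sum]
    refine Finset.sum_congr rfl fun i _ => Finset.sum_congr rfl fun j _ => ?_
    rw [← mul_assoc, Complex.re_mul_ofReal]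
  have e2 : (trace (Zᴴ * (diagonal (fun i => (μ i : ℂ)) * Z))).re
      = ∑ j, ∑ i, Complex.normSq (Z j i) * μ j := by
    rw [Finset.sum_comm]
    simp only [trace, diag_apply, mul_apply (M := Zᴴ), diagonal_mul, conjTranspose_apply, Complex.re_sum]
    refine Finset.sum_congr rfl fun i _ => Finset.sum_congr rfl fun j _ => ?_
    simp [Complex.normSq_apply]
    ring
  have e3 : (trace (Z * (diagonal (fun i => (l i : ℂ)) * Zᴴ))).re
      = ∑ j, ∑ i, Complex.normSq (Z j i) * l i := by
    simp only [trace, diag_apply, mul_apply (M := Z), diagonal_mul, conjTranspose_apply, Complex.re_sum]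
    refine Finset.sum_congr rfl fun i _ => Finset.sum_congr rfl fun j _ => ?_
    simp [Complex.normSq_apply]
    ring
  rw [e1, e2, e3]
  simp only [Finset.mul_sum, ← Finset.sum_sub_distrib]
  refine Finset.sum_congr rfl fun i _ => Finset.sum_congr rfl fun j _ => ?_
  ring

lemma Fn_le {n : Type*} [Fintype n] [DecidableEq n] {ρ σ U V : Matrix n n ℂ} {l μ : n → ℝ}
    (hρ : Diag ρ U l) (hσ : Diag σ V μ) (hl : ∀ i, 0 ≤ l i) (hμ : ∀ i, 0 < μ i)
    (Y : Matrix n n ℂ) (t : ℝ) (ht : 0 ≤ t) :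
    Fn ρ σ Y t ≤ qf V U l μ t := by
  rw [Fn_eq hρ hσ, qf]
  refine Finset.sum_le_sum fun j _ => Finset.sum_le_sum fun i _ => ?_
  rw [pw]
  generalize (Vᴴ * Y * U) j i = z
  generalize (Vᴴ * U) j i = w
  have hs : 0 < μ j + t * l i := add_pos_of_pos_of_nonneg (hμ j) (mul_nonneg ht (hl i))
  generalize μ j + t * l i = s at hs
  rw [← mul_div_assoc, le_div_iff₀ hs]
  simp only [Complex.normSq_apply, Complex.star_def, Complex.mul_re, Complex.conj_re,
    Complex.conj_im]
  nlinarith [sq_nonneg (s * z.re - l i * w.re), sq_nonneg (s * z.im - l i * w.im)]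

lemma Fn_attained {n : Type*} [Fintype n] [DecidableEq n] {ρ σ U V : Matrix n n ℂ} {l μ : n → ℝ}
    (hρ : Diag ρ U l) (hσ : Diag σ V μ) (hl : ∀ i, 0 ≤ l i) (hμ : ∀ i, 0 < μ i)
    (t : ℝ) (ht : 0 ≤ t) :
    ∃ Y, Fn ρ σ Y t = qf V U l μ t := by
  let Z : Matrix n n ℂ := fun j i => (Vᴴ * U) j i * ((l i / (μ j + t * l i) : ℝ) : ℂ)
  refine ⟨V * Z * Uᴴ, ?_⟩
  have : Vᴴ * (V * Z * Uᴴ) * U = Z := by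
    have : Vᴴ * (V * Z * Uᴴ) * U = (Vᴴ * V) * Z * (Uᴴ * U) := by simp [Matrix.mul_assoc]
    rw [this, hσ.left, hρ.left, one_mul, mul_one]
  rw [Fn_eq hρ hσ, qf, this]
  refine Finset.sum_congr rfl fun j _ => Finset.sum_congr rfl fun i _ => ?_
  simp only [pw, Z]
  generalize (Vᴴ * U) j i = w
  have hs : 0 < μ j + t * l i := add_pos_of_pos_of_nonneg (hμ j) (mul_nonneg ht (hl i))
  generalize μ j + t * l i = s at hs
  simp only [Complex.normSq_apply, Complex.star_def, Complex.mul_re, Complex.mul_im,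
    Complex.conj_re, Complex.conj_im, Complex.ofReal_re, Complex.ofReal_im]
  field_simp
  ring

lemma trace_kron_one_mul {X C : Type*} [Fintype X] [Fintype C] [DecidableEq C]
    (M : Matrix X X ℂ) (ρ : Matrix (X × C) (X × C) ℂ) :
    trace ((M ⊗ₖ (1 : Matrix C C ℂ)) * ρ) = trace (M * ptraceR ρ) := by
  simp only [trace, diag_apply, mul_apply, Fintype.sum_prod_type, kroneckerMap_apply, ptraceR,
    one_apply, mul_ite, mul_one, mul_zero, ite_mul, zero_mul, Finset.sum_ite_eq, Finset.mem_univ,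
    if_true, Finset.mul_sum]
  refine Finset.sum_congr rfl fun i _ => ?_
  rw [Finset.sum_comm]

lemma qf_mono {X C : Type*} [Fintype X] [DecidableEq X] [Fintype C] [DecidableEq C]
    {ρ σ U V : Matrix (X × C) (X × C) ℂ} {l μ : X × C → ℝ}
    {U' V' : Matrix X X ℂ} {l' μ' : X → ℝ}
    (hρ : Diag ρ U l) (hσ : Diag σ V μ) (hl : ∀ i, 0 ≤ l i) (hμ : ∀ i, 0 < μ i)
    (hρ' : Diag (ptraceR ρ) U' l') (hσ' : Diag (ptraceR σ) V' μ') (hl' : ∀ i, 0 ≤ l' i)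
    (hμ' : ∀ i, 0 < μ' i) (t : ℝ) (ht : 0 ≤ t) :
    qf V' U' l' μ' t ≤ qf V U l μ t := by
  obtain ⟨Y, hY⟩ := Fn_attained hρ' hσ' hl' hμ' t ht
  rw [← hY]
  refine le_trans (le_of_eq ?_) (Fn_le hρ hσ hl hμ (Y ⊗ₖ (1 : Matrix C C ℂ)) t ht)
  rw [Fn, Fn, conjTranspose_kronecker, conjTranspose_one, ← mul_kronecker_mul,
    ← mul_kronecker_mul, one_mul, trace_kron_one_mul, trace_kron_one_mul, trace_kron_one_mul]


/-- Primitive of `qf`. -/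
def Gf {n : Type*} [Fintype n] (V U : Matrix n n ℂ) (l μ : n → ℝ) (T : ℝ) : ℝ :=
  ∑ j, ∑ i, pw V U j i * (l i * Real.log (μ j + T * l i))

lemma Gf_hasDerivAt {n : Type*} [Fintype n] (V U : Matrix n n ℂ) (l μ : n → ℝ)
    (hl : ∀ i, 0 ≤ l i) (hμ : ∀ i, 0 < μ i) (T : ℝ) (hT : 0 ≤ T) :
    HasDerivAt (Gf V U l μ) (qf V U l μ T) T := by
  unfold Gf qf
  apply HasDerivAt.fun_sum
  intro j _
  apply HasDerivAt.fun_sum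
  intro i _
  apply HasDerivAt.const_mul
  have hs : 0 < μ j + T * l i := add_pos_of_pos_of_nonneg (hμ j) (mul_nonneg hT (hl i))
  have h1 : HasDerivAt (fun T => μ j + T * l i) (l i) T := by
    simpa using ((hasDerivAt_id T).mul_const (l i)).const_add (μ j)
  have h2 := (h1.log hs.ne').const_mul (l i)
  convert h2 using 1
  ring

lemma pw_sum {n : Type*} [Fintype n] [DecidableEq n] {ρ σ U V : Matrix n n ℂ} {l μ : n → ℝ}
    (hρ : Diag ρ U l) (hσ : Diag σ V μ) (i : n) : ∑ j, pw V U j i = 1 := by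
  have h : (Vᴴ * U)ᴴ * (Vᴴ * U) = 1 := by
    have : (Vᴴ * U)ᴴ * (Vᴴ * U) = Uᴴ * (V * Vᴴ) * U := by
      simp [conjTranspose_mul, Matrix.mul_assoc]
    rw [this, hσ.right, mul_one, hρ.left]
  have h2 := congrArg Complex.re (congrFun (congrFun h i) i)
  rw [mul_apply] at h2
  simp only [conjTranspose_apply, one_apply_eq, Complex.one_re, Complex.re_sum] at h2
  rw [← h2]
  refine Finset.sum_congr rfl fun j _ => ?_
  simp [pw, Complex.normSq_apply]

lemma pw_sum_mul {n : Type*} [Fintype n] [DecidableEq n] {ρ σ U V : Matrix n n ℂ} {l μ : n → ℝ}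
    (hρ : Diag ρ U l) (hσ : Diag σ V μ) (f : n → ℝ) :
    ∑ j, ∑ i, pw V U j i * f i = ∑ i, f i := by
  rw [Finset.sum_comm]
  simp only [← Finset.sum_mul, pw_sum hρ hσ, one_mul]

lemma Diag.trace_eq {n : Type*} [Fintype n] [DecidableEq n] {ρ U : Matrix n n ℂ} {l : n → ℝ}
    (h : Diag ρ U l) : (trace ρ).re = ∑ i, l i := by
  rw [h.eq, trace_mul_comm, ← mul_assoc, h.left, one_mul, trace_diagonal]
  simp

/-- Regularised value of `Gf`. -/
def Kf {n : Type*} [Fintype n] (V U : Matrix n n ℂ) (l μ : n → ℝ) (s : ℝ) : ℝ :=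
  ∑ j, ∑ i, pw V U j i * (l i * Real.log (μ j * s + l i))

lemma Gf_eq_Kf {n : Type*} [Fintype n] [DecidableEq n] {ρ σ U V : Matrix n n ℂ} {l μ : n → ℝ}
    (hρ : Diag ρ U l) (hσ : Diag σ V μ) (hl : ∀ i, 0 ≤ l i) (hμ : ∀ i, 0 < μ i)
    (s : ℝ) (hs : 0 < s) :
    Gf V U l μ s⁻¹ = Kf V U l μ s - Real.log s * (trace ρ).re := by
  rw [hρ.trace_eq, ← pw_sum_mul hρ hσ l, Gf, Kf]
  simp only [Finset.mul_sum, ← Finset.sum_sub_distrib]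
  refine Finset.sum_congr rfl fun j _ => Finset.sum_congr rfl fun i _ => ?_
  have h1 : 0 < μ j * s + l i := add_pos_of_pos_of_nonneg (mul_pos (hμ j) hs) (hl i)
  have : μ j + s⁻¹ * l i = (μ j * s + l i) / s := by field_simp
  rw [this, Real.log_div h1.ne' hs.ne']
  ring

lemma Kf_tendsto {n : Type*} [Fintype n] [DecidableEq n] {ρ σ U V : Matrix n n ℂ} {l μ : n → ℝ}
    (hρ : Diag ρ U l) (hσ : Diag σ V μ) :
    Filter.Tendsto (Kf V U l μ) (nhdsWithin 0 (Set.Ioi 0))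
      (nhds (∑ i, l i * Real.log (l i))) := by
  rw [← pw_sum_mul hρ hσ]
  apply Filter.Tendsto.mono_left _ nhdsWithin_le_nhds
  unfold Kf
  refine tendsto_finsetSum _ fun j _ => tendsto_finsetSum _ fun i _ => ?_
  apply Filter.Tendsto.const_mul
  by_cases h : l i = 0
  · simp [h]
  · have : ContinuousAt (fun s => l i * Real.log (μ j * s + l i)) 0 := by
      apply ContinuousAt.mul continuousAt_const
      apply ContinuousAt.log (by fun_prop)
      simpa using h
    simpa [ContinuousAt] using this

lemma ptraceR_trace {X C : Type*} [Fintype X] [Fintype C] (ρ : Matrix (X × C) (X × C) ℂ) :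
    trace (ptraceR ρ) = trace ρ := by
  simp [trace, ptraceR, Fintype.sum_prod_type]

lemma relent_mono {X C : Type*} [Fintype X] [DecidableEq X] [Fintype C] [DecidableEq C]
    {ρ σ U V : Matrix (X × C) (X × C) ℂ} {l μ : X × C → ℝ}
    {U' V' : Matrix X X ℂ} {l' μ' : X → ℝ}
    (hρ : Diag ρ U l) (hσ : Diag σ V μ) (hl : ∀ i, 0 ≤ l i) (hμ : ∀ i, 0 < μ i)
    (hρ' : Diag (ptraceR ρ) U' l') (hσ' : Diag (ptraceR σ) V' μ') (hl' : ∀ i, 0 ≤ l' i)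
    (hμ' : ∀ i, 0 < μ' i) :
    (∑ i, l' i * Real.log (l' i)) - Gf V' U' l' μ' 0 ≤
      (∑ i, l i * Real.log (l i)) - Gf V U l μ 0 := by
  have hmono : MonotoneOn (fun T => Gf V U l μ T - Gf V' U' l' μ' T) (Set.Ici 0) := by
    have hd : ∀ T, 0 ≤ T → HasDerivAt (fun T => Gf V U l μ T - Gf V' U' l' μ' T)
        (qf V U l μ T - qf V' U' l' μ' T) T := fun T hT =>
      (Gf_hasDerivAt V U l μ hl hμ T hT).sub (Gf_hasDerivAt V' U' l' μ' hl' hμ' T hT)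
    apply monotoneOn_of_deriv_nonneg (convex_Ici 0)
    · exact fun T hT => (hd T hT).continuousAt.continuousWithinAt
    · intro T hT
      rw [interior_Ici] at hT
      exact (hd T (le_of_lt hT)).differentiableAt.differentiableWithinAt
    · intro T hT
      rw [interior_Ici] at hT
      rw [(hd T (le_of_lt hT)).deriv]
      exact sub_nonneg.2 (qf_mono hρ hσ hl hμ hρ' hσ' hl' hμ' T (le_of_lt hT))
  refine le_of_tendsto_of_tendsto ((Kf_tendsto hρ' hσ').sub_const _)
    ((Kf_tendsto hρ hσ).sub_const _) ?_
  filter_upwards [self_mem_nhdsWithin] with s hs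
  have hs : 0 < s := hs
  have h := hmono (Set.mem_Ici.2 le_rfl) (Set.mem_Ici.2 (inv_pos.2 hs).le) (inv_pos.2 hs).le
  simp only [Gf_eq_Kf hρ hσ hl hμ s hs, Gf_eq_Kf hρ' hσ' hl' hμ' s hs, ptraceR_trace] at h
  linarith

lemma Gf_zero {n : Type*} [Fintype n] [DecidableEq n] {ρ U : Matrix n n ℂ} {l : n → ℝ}
    (V : Matrix n n ℂ) (μ : n → ℝ) (hρ : Diag ρ U l) :
    Gf V U l μ 0 = ∑ j, Real.log (μ j) * ((Vᴴ * ρ * V) j j).re := by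
  unfold Gf
  refine Finset.sum_congr rfl fun j _ => ?_
  have : Vᴴ * ρ * V = (Vᴴ * U) * (diagonal (fun i => (l i : ℂ)) * (Vᴴ * U)ᴴ) := by
    rw [hρ.eq]
    simp [conjTranspose_mul, Matrix.mul_assoc]
  rw [this, mul_apply (M := Vᴴ * U), Complex.re_sum, Finset.mul_sum]
  refine Finset.sum_congr rfl fun i _ => ?_
  rw [diagonal_mul, conjTranspose_apply, pw]
  generalize (Vᴴ * U) j i = w
  simp [Complex.normSq_apply]
  ring

lemma Diag.lift {n L K : Type*} [Fintype n] [DecidableEq n] [Fintype L] [DecidableEq L]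
    [Fintype K] [DecidableEq K] (e : n ≃ L × K) {σ V : Matrix K K ℂ} {μ : K → ℝ}
    (h : Diag σ V μ) :
    Diag (((1 : Matrix L L ℂ) ⊗ₖ σ).submatrix e e) (((1 : Matrix L L ℂ) ⊗ₖ V).submatrix e e)
      (fun i => μ (e i).2) := by
  refine ⟨?_, ?_, ?_⟩
  · rw [conjTranspose_submatrix, submatrix_mul_equiv, conjTranspose_kronecker, conjTranspose_one,
      ← mul_kronecker_mul, one_mul, h.left, one_kronecker_one, submatrix_one_equiv]
  · rw [conjTranspose_submatrix, submatrix_mul_equiv, conjTranspose_kronecker, conjTranspose_one,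
      ← mul_kronecker_mul, one_mul, h.right, one_kronecker_one, submatrix_one_equiv]
  · have : diagonal (fun i => ((μ (e i).2 : ℝ) : ℂ)) =
        ((1 : Matrix L L ℂ) ⊗ₖ diagonal (fun k => (μ k : ℂ))).submatrix e e := by
      rw [← diagonal_one, diagonal_kronecker_diagonal, submatrix_diagonal_equiv]
      simp [Function.comp_def]
    rw [this, conjTranspose_submatrix, submatrix_mul_equiv, submatrix_mul_equiv,
      conjTranspose_kronecker, conjTranspose_one, ← mul_kronecker_mul, ← mul_kronecker_mul,
      one_mul, one_mul, ← h.eq]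

lemma ptraceL_conj_s13 {L K : Type*} [Fintype L] [DecidableEq L]
    [Fintype K] (V : Matrix K K ℂ) (ρ : Matrix (L × K) (L × K) ℂ) :
    ptraceL (((1 : Matrix L L ℂ) ⊗ₖ V)ᴴ * ρ * ((1 : Matrix L L ℂ) ⊗ₖ V)) =
      Vᴴ * ptraceL ρ * V := by
  ext k k'
  simp only [ptraceL, mul_apply, Fintype.sum_prod_type, kroneckerMap_apply, conjTranspose_kronecker,
    conjTranspose_one, one_apply, ite_mul, mul_ite, one_mul, mul_zero, zero_mul,
    Finset.sum_ite_irrel, Finset.sum_const_zero, Finset.sum_ite_eq, Finset.sum_ite_eq',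
    Finset.mem_univ, if_true, Finset.sum_mul, Finset.mul_sum]
  rw [Finset.sum_comm]
  refine Finset.sum_congr rfl fun x _ => ?_
  rw [Finset.sum_comm]

lemma Gf_lift {n L K : Type*} [Fintype n] [DecidableEq n] [Fintype L] [DecidableEq L]
    [Fintype K] [DecidableEq K] (e : n ≃ L × K) {σ V : Matrix K K ℂ} {μ : K → ℝ}
    (h : Diag σ V μ) {ρ U : Matrix n n ℂ} {l : n → ℝ} (hρ : Diag ρ U l)
    (hm : ptraceL (ρ.submatrix e.symm e.symm) = σ) :
    Gf (((1 : Matrix L L ℂ) ⊗ₖ V).submatrix e e) U l (fun i => μ (e i).2) 0 =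
      ∑ k, μ k * Real.log (μ k) := by
  rw [Gf_zero _ _ hρ]
  have h1 : (((1 : Matrix L L ℂ) ⊗ₖ V).submatrix e e)ᴴ * ρ *
      (((1 : Matrix L L ℂ) ⊗ₖ V).submatrix e e) =
      (((1 : Matrix L L ℂ) ⊗ₖ V)ᴴ * (ρ.submatrix e.symm e.symm) *
        ((1 : Matrix L L ℂ) ⊗ₖ V)).submatrix e e := by
    rw [← submatrix_mul_equiv _ _ _ e, ← submatrix_mul_equiv _ _ _ e, submatrix_submatrix,
      conjTranspose_submatrix]
    simp
  rw [h1]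
  simp only [submatrix_apply]
  rw [e.sum_comp (fun x : L × K => Real.log (μ x.2) *
    ((((1 : Matrix L L ℂ) ⊗ₖ V)ᴴ * (ρ.submatrix e.symm e.symm) *
        ((1 : Matrix L L ℂ) ⊗ₖ V)) x x).re), Fintype.sum_prod_type_right]
  refine Finset.sum_congr rfl fun k _ => ?_
  change ∑ x : L, Real.log (μ k) * _ = _
  rw [← Finset.mul_sum, ← Complex.re_sum]
  have h2 := congrFun (congrFun (ptraceL_conj_s13 (L := L) V (ρ.submatrix e.symm e.symm)) k) k
  rw [hm, h.conj_eq, diagonal_apply_eq] at h2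
  have h3 := congrArg Complex.re h2
  simp only [ptraceL, Complex.ofReal_re] at h3
  rw [h3, mul_comm]

/-- Reordering of three factors. -/
def eqv3 (K L M : Type*) : (K × L) × M ≃ L × (K × M) where
  toFun x := (x.1.2, (x.1.1, x.2))
  invFun y := ((y.2.1, y.1), y.2.2)
  left_inv _ := rfl
  right_inv _ := rfl

/-- Marginal on first and third factors. -/
def marg13 {K L M : Type*} [Fintype K] [Fintype L] [Fintype M]
    (ρ : Matrix ((K × L) × M) ((K × L) × M) ℂ) : Matrix (K × M) (K × M) ℂ :=
  ptraceL (ρ.submatrix (eqv3 K L M).symm (eqv3 K L M).symm)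

lemma ssa_pd {K L M : Type*} [Fintype K] [Fintype L] [Fintype M]
    [DecidableEq K] [DecidableEq L] [DecidableEq M]
    {ρ U : Matrix ((K × L) × M) ((K × L) × M) ℂ} {l : (K × L) × M → ℝ}
    {U' : Matrix (K × L) (K × L) ℂ} {l' : K × L → ℝ}
    {V : Matrix (K × M) (K × M) ℂ} {μ : K × M → ℝ}
    {V' : Matrix K K ℂ} {μ' : K → ℝ}
    (hρ : Diag ρ U l) (hl : ∀ i, 0 ≤ l i)
    (hρ' : Diag (ptraceR ρ) U' l') (hl' : ∀ i, 0 ≤ l' i)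
    (hσ : Diag (marg13 ρ) V μ) (hμ : ∀ i, 0 < μ i)
    (hσ' : Diag (ptraceR (ptraceR ρ)) V' μ') (hμ' : ∀ i, 0 < μ' i) :
    vonNeumannEntropy (ptraceR (ptraceR ρ)) + vonNeumannEntropy ρ ≤
      vonNeumannEntropy (ptraceR ρ) + vonNeumannEntropy (marg13 ρ) := by
  have hS := hσ.lift (eqv3 K L M)
  have hS' := hσ'.lift (Equiv.prodComm K L)
  have hpt : ptraceR (((1 : Matrix L L ℂ) ⊗ₖ marg13 ρ).submatrix (eqv3 K L M) (eqv3 K L M)) =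
      (((1 : Matrix L L ℂ) ⊗ₖ (ptraceR (ptraceR ρ))).submatrix
        (Equiv.prodComm K L) (Equiv.prodComm K L)) := by
    ext ⟨k, x⟩ ⟨k', x'⟩
    simp only [ptraceR, submatrix_apply, kroneckerMap_apply, eqv3, marg13, ptraceL, Equiv.coe_fn_mk,
      Equiv.coe_fn_symm_mk, Equiv.prodComm_apply, Prod.swap]
    change ∑ b : M, (1 : Matrix L L ℂ) x x' * _ = (1 : Matrix L L ℂ) x x' * _
    rw [← Finset.mul_sum, Finset.sum_comm]
  have hmono := relent_mono hρ hS hl (fun i => hμ _) hρ' (hpt ▸ hS') hl' (fun i => hμ' _)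
  rw [Gf_lift (eqv3 K L M) hσ hρ rfl, Gf_lift (Equiv.prodComm K L) hσ' hρ' rfl] at hmono
  rw [hσ'.vN, hρ.vN, hρ'.vN, hσ.vN, ← add_div, ← add_div]
  apply div_le_div_of_nonneg_right _ (Real.log_nonneg (by norm_num))
  simp only [Real.negMulLog, neg_mul, Finset.sum_neg_distrib]
  linarith

lemma ptraceR_psd_s13 {X C : Type*} [Fintype X] [Fintype C] {ρ : Matrix (X × C) (X × C) ℂ}
    (h : ρ.PosSemidef) : (ptraceR ρ).PosSemidef := by
  have : ptraceR ρ = ∑ c, ρ.submatrix (fun x => (x, c)) (fun x => (x, c)) := by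
    ext i j
    simp [ptraceR, Matrix.sum_apply]
  rw [this]
  exact posSemidef_sum _ fun c _ => h.submatrix _

lemma ptraceL_psd_s13 {X C : Type*} [Fintype X] [Fintype C] {ρ : Matrix (X × C) (X × C) ℂ}
    (h : ρ.PosSemidef) : (ptraceL ρ).PosSemidef := by
  have : ptraceL ρ = ∑ c, ρ.submatrix (fun x => (c, x)) (fun x => (c, x)) := by
    ext i j
    simp [ptraceL, Matrix.sum_apply]
  rw [this]
  exact posSemidef_sum _ fun c _ => h.submatrix _

lemma ptraceR_shift {X C : Type*} [Fintype X] [Fintype C] [DecidableEq X] [DecidableEq C]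
    (ρ : Matrix (X × C) (X × C) ℂ) (c : ℝ) :
    ptraceR (ρ + (c : ℂ) • 1) = ptraceR ρ + ((c * Fintype.card C : ℝ) : ℂ) • 1 := by
  ext i j
  by_cases h : i = j
  · simp [ptraceR, h, Finset.sum_add_distrib, mul_comm]
  · simp [ptraceR, h, one_apply]

lemma ptraceL_shift {X C : Type*} [Fintype X] [Fintype C] [DecidableEq X] [DecidableEq C]
    (ρ : Matrix (X × C) (X × C) ℂ) (c : ℝ) :
    ptraceL (ρ + (c : ℂ) • 1) = ptraceL ρ + ((c * Fintype.card X : ℝ) : ℂ) • 1 := by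
  ext i j
  by_cases h : i = j
  · simp [ptraceL, h, Finset.sum_add_distrib, mul_comm]
  · simp [ptraceL, h, one_apply]

lemma marg13_shift {K L M : Type*} [Fintype K] [Fintype L] [Fintype M]
    [DecidableEq K] [DecidableEq L] [DecidableEq M]
    (ρ : Matrix ((K × L) × M) ((K × L) × M) ℂ) (c : ℝ) :
    marg13 (ρ + (c : ℂ) • 1) = marg13 ρ + ((c * Fintype.card L : ℝ) : ℂ) • 1 := by
  unfold marg13
  rw [← ptraceL_shift]
  congr 1
  rw [submatrix_add, submatrix_smul]
  simp

lemma ssa {K L M : Type*} [Fintype K] [Fintype L] [Fintype M]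
    [Nonempty L] [Nonempty M]
    [DecidableEq K] [DecidableEq L] [DecidableEq M]
    {ρ : Matrix ((K × L) × M) ((K × L) × M) ℂ} (h : ρ.PosSemidef) :
    vonNeumannEntropy (ptraceR (ptraceR ρ)) + vonNeumannEntropy ρ ≤
      vonNeumannEntropy (ptraceR ρ) + vonNeumannEntropy (marg13 ρ) := by
  have h' := ptraceR_psd_s13 h
  have h'' := ptraceR_psd_s13 h'
  have h13 : (marg13 ρ).PosSemidef := ptraceL_psd_s13 (h.submatrix _)
  have hL : (0 : ℝ) < Fintype.card L := by exact_mod_cast Fintype.card_pos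
  have hM : (0 : ℝ) < Fintype.card M := by exact_mod_cast Fintype.card_pos
  have t1 := vN_shift_tendsto ρ h.isHermitian 1
  have t2 := vN_shift_tendsto _ h'.isHermitian (Fintype.card M)
  have t3 := vN_shift_tendsto _ h''.isHermitian (Fintype.card M * Fintype.card L)
  have t4 := vN_shift_tendsto _ h13.isHermitian (Fintype.card L)
  refine le_of_tendsto_of_tendsto (t3.add t1) (t2.add t4) ?_
  filter_upwards [self_mem_nhdsWithin] with ε hε
  have hε : 0 < ε := hε
  have e2 := ptraceR_shift ρ ε
  have e3 : ptraceR (ptraceR (ρ + (ε : ℂ) • 1)) = ptraceR (ptraceR ρ) +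
      ((ε * Fintype.card M * Fintype.card L : ℝ) : ℂ) • 1 := by rw [e2, ptraceR_shift]
  have e4 := marg13_shift ρ ε
  rw [mul_one, ← mul_assoc, ← e2, ← e3, ← e4]
  have d1 := (diag_exists ρ h.isHermitian).shift ε
  have d2 := (diag_exists _ h'.isHermitian).shift (ε * Fintype.card M)
  have d3 := (diag_exists _ h''.isHermitian).shift (ε * Fintype.card M * Fintype.card L)
  have d4 := (diag_exists _ h13.isHermitian).shift (ε * Fintype.card L)
  rw [← e2] at d2
  rw [← e3] at d3
  rw [← e4] at d4
  refine ssa_pd d1 (fun i => ?_) d2 (fun i => ?_) d4 (fun i => ?_) d3 (fun i => ?_)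
  · exact add_nonneg (h.eigenvalues_nonneg i) hε.le
  · exact add_nonneg (h'.eigenvalues_nonneg i) (by positivity)
  · exact add_pos_of_nonneg_of_pos (h13.eigenvalues_nonneg i) (by positivity)
  · exact add_pos_of_nonneg_of_pos (h''.eigenvalues_nonneg i) (by positivity)

lemma vN_one {n : Type*} [Fintype n] [DecidableEq n] : vonNeumannEntropy (1 : Matrix n n ℂ) = 0 := by
  have : Diag (1 : Matrix n n ℂ) 1 (fun _ => 1) := ⟨by simp, by simp, by simp⟩
  rw [this.vN]
  simp

lemma nonempty_of_trace {n : Type*} [Fintype n] {ρ : Matrix n n ℂ} (h : trace ρ = 1) :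
    Nonempty n := by
  by_contra hn
  rw [not_nonempty_iff] at hn
  simp [trace] at h

lemma subadd {X C : Type*} [Fintype X] [Fintype C] {τ : Matrix (X × C) (X × C) ℂ}
    (h : τ.PosSemidef) (ht : trace τ = 1) :
    vonNeumannEntropy τ ≤ vonNeumannEntropy (ptraceR τ) + vonNeumannEntropy (ptraceL τ) := by
  obtain ⟨⟨x0, c0⟩⟩ := nonempty_of_trace ht
  have : Nonempty X := ⟨x0⟩
  have : Nonempty C := ⟨c0⟩
  let p : Unit × X ≃ X := Equiv.punitProd X
  let q : Unit × C ≃ C := Equiv.punitProd C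
  let g : (Unit × X) × C ≃ X × C := p.prodCongr (Equiv.refl C)
  have hs := ssa (K := Unit) (L := X) (M := C) (h.submatrix g)
  have e1 : ptraceR (ptraceR (τ.submatrix g g)) = 1 := by
    ext i j
    rw [← ptraceR_trace] at ht
    exact ht
  have e2 : ptraceR (τ.submatrix g g) = (ptraceR τ).submatrix p p := rfl
  have e3 : marg13 (τ.submatrix g g) = (ptraceL τ).submatrix q q := rfl
  rw [e1, e2, e3, vN_one, vN_submatrix _ h.isHermitian,
    vN_submatrix _ (ptraceR_psd_s13 h).isHermitian, vN_submatrix _ (ptraceL_psd_s13 h).isHermitian] at hs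
  linarith

lemma araki_lieb {X C : Type*} [Fintype X] [Fintype C] {ρ : Matrix (X × C) (X × C) ℂ}
    (h : ρ.PosSemidef) (ht : trace ρ = 1) :
    vonNeumannEntropy (ptraceL ρ) ≤ vonNeumannEntropy (ptraceR ρ) + vonNeumannEntropy ρ := by
  obtain ⟨Y, hY⟩ : ∃ Y : Matrix (X × C) (X × C) ℂ, ρ = Yᴴ * Y := by
    open scoped MatrixOrder in exact CStarAlgebra.nonneg_iff_eq_star_mul_self.1 h.nonneg
  obtain ⟨M, hM⟩ : ∃ M : Matrix C (X × (X × C)) ℂ, ∀ c p, M c p = star (Y p.2 (p.1, c)) :=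
    ⟨Matrix.of fun c p => star (Y p.2 (p.1, c)), fun _ _ => rfl⟩
  have h1 : M * Mᴴ = ptraceL ρ := by
    ext c c'
    rw [hY]
    simp only [mul_apply, ptraceL, conjTranspose_apply, hM, star_star]
    rw [Fintype.sum_prod_type]
  have h2 : ptraceR (Mᴴ * M) = (ptraceR ρ)ᵀ := by
    ext x x'
    rw [hY]
    simp only [mul_apply, ptraceR, conjTranspose_apply, hM, star_star, transpose_apply]
    rw [Finset.sum_comm]
    refine Finset.sum_congr rfl fun c _ => Finset.sum_congr rfl fun r _ => ?_
    rw [mul_comm]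
  have h3 : ptraceL (Mᴴ * M) = Y * Yᴴ := by
    ext r r'
    simp only [mul_apply, ptraceL, conjTranspose_apply, hM, star_star]
    rw [Fintype.sum_prod_type]
  have hps : (Mᴴ * M).PosSemidef := posSemidef_conjTranspose_mul_self M
  have htr : trace (Mᴴ * M) = 1 := by
    rw [← ptraceR_trace, h2, trace_transpose, ptraceR_trace, ht]
  have hs := subadd hps htr
  rw [← vN_mul_comm, h1, h2, h3, vN_transpose _ (ptraceR_psd_s13 h).isHermitian, vN_mul_comm Y,
    ← hY] at hs
  exact hs

end helpers

/-- For every extension `ρ^{ABE}` of a state `ρ^{AB}`,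
`I(A;B|E) ≥ I(A;B) - 2 S(AB)`. -/
theorem condMutualInfo_ge_mutualInfo_sub_two_entropy
    {A B E : Type*} [Fintype A] [Fintype B] [Fintype E]
    (ρ : Matrix (A × B) (A × B) ℂ)
    (ρE : Matrix (A × B × E) (A × B × E) ℂ)
    (hρE : IsState ρE) (hext : margAB ρE = ρ) :
    condMutualInfo ρE ≥
      (vonNeumannEntropy (ptraceR ρ) + vonNeumannEntropy (ptraceL ρ) - vonNeumannEntropy ρ)
        - 2 * vonNeumannEntropy ρ := by
  subst hext
  obtain ⟨hp, ht⟩ := hρE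
  obtain ⟨⟨a0, b0, e0⟩⟩ := nonempty_of_trace ht
  have : Nonempty A := ⟨a0⟩
  have : Nonempty B := ⟨b0⟩
  have : Nonempty E := ⟨e0⟩
  let f : (A × B) × E ≃ A × B × E := Equiv.prodAssoc A B E
  let g : (B × A) × E ≃ A × B × E :=
    ((Equiv.prodComm B A).prodCongr (Equiv.refl E)).trans (Equiv.prodAssoc A B E)
  have hf := hp.submatrix f
  have hab : (margAB ρE).PosSemidef := ptraceR_psd_s13 hf
  have s1 := ssa hf
  have s2 := ssa (hp.submatrix g)
  have htf : trace (ρE.submatrix f f) = 1 := by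
    rw [← ht]
    exact f.sum_comp (fun x => ρE x x)
  have s3 := araki_lieb hf htf
  have a1 : ptraceR (ρE.submatrix f f) = margAB ρE := rfl
  have a2 : marg13 (ρE.submatrix f f) = margAE ρE := rfl
  have a3 : ptraceL (ρE.submatrix f f) = margE ρE := by
    ext x y
    simp only [ptraceL, margE, Fintype.sum_prod_type]
    rfl
  have b1 : ptraceR (ρE.submatrix g g) =
      (margAB ρE).submatrix (Equiv.prodComm B A) (Equiv.prodComm B A) := rfl
  have b2 : marg13 (ρE.submatrix g g) = margBE ρE := rfl
  have b3 : ptraceR ((margAB ρE).submatrix (Equiv.prodComm B A) (Equiv.prodComm B A)) =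
      ptraceL (margAB ρE) := rfl
  rw [a1, a2, vN_submatrix _ hp.isHermitian] at s1
  rw [b1, b2, b3, vN_submatrix _ hp.isHermitian, vN_submatrix _ hab.isHermitian] at s2
  rw [a1, a3, vN_submatrix _ hp.isHermitian] at s3
  rw [condMutualInfo]
  linarith

end
end

section
/- For every state ρ^{AB} on H_A ⊗ H_B, squashed entanglement is lower bounded as (1/2)(I(A;B) - S(AB)) ≤ E_sq(ρ^{AB}), where I(A;B) = S(A) + S(B) - S(AB) is the quantum mutual information of ρ^{AB}. -/
open Matrix BigOperators Kronecker
open scoped Classical ComplexOrder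

noncomputable section

variable {A B E : Type*} [Fintype A] [Fintype B] [Fintype E]

/-! ### Entropy via the characteristic polynomial -/

theorem entropy_eq_roots {n : Type*} [Fintype n] {ρ : Matrix n n ℂ} (h : ρ.IsHermitian) :
    vonNeumannEntropy ρ
      = (ρ.charpoly.roots.map (fun z : ℂ => -(z.re * Real.logb 2 z.re))).sum := by
  rw [vonNeumannEntropy, dif_pos h, h.roots_charpoly_eq_eigenvalues, Multiset.map_map]
  simp only [Function.comp_def, Finset.sum]
  rfl

theorem entropy_submatrix {m n : Type*} [Fintype m] [Fintype n] (e : m ≃ n)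
    {ρ : Matrix n n ℂ} (h : ρ.IsHermitian) :
    vonNeumannEntropy (ρ.submatrix e e) = vonNeumannEntropy ρ := by
  rw [entropy_eq_roots h, entropy_eq_roots (h.submatrix e)]
  have := charpoly_reindex e.symm ρ
  rw [reindex_apply, Equiv.symm_symm] at this
  rw [this]

theorem entropy_transpose {n : Type*} [Fintype n]
    {ρ : Matrix n n ℂ} (h : ρ.IsHermitian) :
    vonNeumannEntropy ρᵀ = vonNeumannEntropy ρ := by
  rw [entropy_eq_roots h, entropy_eq_roots h.transpose, charpoly_transpose]

theorem entropy_mul_comm {m n : Type*} [Fintype m] [Fintype n] (K : Matrix m n ℂ) :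
    vonNeumannEntropy (K * Kᴴ) = vonNeumannEntropy (Kᴴ * K) := by
  rw [entropy_eq_roots (isHermitian_mul_conjTranspose_self K),
    entropy_eq_roots (isHermitian_conjTranspose_mul_self K)]
  have h := congrArg (fun p : Polynomial ℂ =>
    (p.roots.map (fun z : ℂ => -(z.re * Real.logb 2 z.re))).sum) (charpoly_mul_comm' K Kᴴ)
  rw [Polynomial.roots_mul (mul_ne_zero (pow_ne_zero _ Polynomial.X_ne_zero)
      (charpoly_monic _).ne_zero),
    Polynomial.roots_mul (mul_ne_zero (pow_ne_zero _ Polynomial.X_ne_zero)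
      (charpoly_monic _).ne_zero)] at h
  simpa [Polynomial.roots_X_pow, Multiset.map_nsmul, Multiset.sum_nsmul] using h

theorem exists_spectral {n : Type*} [Fintype n] {ρ : Matrix n n ℂ} (h : ρ.PosSemidef) :
    ∃ (U : Matrix n n ℂ) (r : n → ℝ), Uᴴ * U = 1 ∧ U * Uᴴ = 1 ∧ (∀ i, 0 ≤ r i) ∧
      ρ = U * diagonal (fun i => (r i : ℂ)) * Uᴴ ∧
      Real.log 2 * vonNeumannEntropy ρ = - ∑ i, r i * Real.log (r i) := by
  refine ⟨h.1.eigenvectorUnitary, h.1.eigenvalues, ?_, ?_, h.eigenvalues_nonneg, ?_, ?_⟩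
  · exact Unitary.coe_star_mul_self _
  · exact Unitary.coe_mul_star_self _
  · exact h.1.spectral_theorem
  · rw [vonNeumannEntropy, dif_pos h.1, Finset.mul_sum, ← Finset.sum_neg_distrib]
    refine Finset.sum_congr rfl fun i _ => ?_
    have : Real.log 2 ≠ 0 := (Real.log_pos one_lt_two).ne'
    rw [Real.logb]
    field_simp

/-! ### The variational functional -/

/-- The functional whose supremum over `X` is the quasi-entropy at parameter `t`. -/
def qform {n : Type*} [Fintype n] (t : ℝ) (ρ σ X : Matrix n n ℂ) : ℝ :=
  2 * (ρ * X).trace.re - (Xᴴ * σ * X).trace.re - t * (X * ρ * Xᴴ).trace.re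

theorem qform_eq {n : Type*} [Fintype n] (t : ℝ) (U V y : Matrix n n ℂ) (r s : n → ℝ)
    (hU : Uᴴ * U = 1) (hV : Vᴴ * V = 1) :
    qform t (U * diagonal (fun i => (r i : ℂ)) * Uᴴ) (V * diagonal (fun i => (s i : ℂ)) * Vᴴ)
      (V * y * Uᴴ) = ∑ i, ∑ j, (2 * (r j * (star ((Vᴴ * U) i j) * y i j).re)
        - (s i + t * r j) * Complex.normSq (y i j)) := by
  have e1 : (U * diagonal (fun i => (r i : ℂ)) * Uᴴ * (V * y * Uᴴ)).trace
      = ∑ i, ∑ j, (r j : ℂ) * (star ((Vᴴ * U) i j) * y i j) := by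
    have : U * diagonal (fun i => (r i : ℂ)) * Uᴴ * (V * y * Uᴴ)
      = U * (diagonal (fun i => (r i : ℂ)) * ((Vᴴ * U)ᴴ * y) * Uᴴ) := by
      simp [conjTranspose_mul, Matrix.mul_assoc]
    rw [this, trace_mul_comm, Matrix.mul_assoc, hU, Matrix.mul_one, trace, Finset.sum_comm]
    refine Finset.sum_congr rfl fun j _ => ?_
    rw [diag_apply, diagonal_mul, Matrix.mul_apply, Finset.mul_sum]
    rfl
  have e2 : ((V * y * Uᴴ)ᴴ * (V * diagonal (fun i => (s i : ℂ)) * Vᴴ) * (V * y * Uᴴ)).trace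
      = ∑ i, ∑ j, (s i : ℂ) * (Complex.normSq (y i j) : ℂ) := by
    have : (V * y * Uᴴ)ᴴ * (V * diagonal (fun i => (s i : ℂ)) * Vᴴ) * (V * y * Uᴴ)
      = U * (yᴴ * (Vᴴ * V) * (diagonal (fun i => (s i : ℂ)) * ((Vᴴ * V) * y)) * Uᴴ) := by
      simp only [conjTranspose_mul, conjTranspose_conjTranspose, Matrix.mul_assoc]
    rw [this, trace_mul_comm, Matrix.mul_assoc, hU, hV, Matrix.mul_one, Matrix.mul_one,
      Matrix.one_mul, trace, Finset.sum_comm]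
    refine Finset.sum_congr rfl fun j _ => ?_
    rw [diag_apply, Matrix.mul_apply]
    refine Finset.sum_congr rfl fun i _ => ?_
    rw [diagonal_mul, conjTranspose_apply, Complex.normSq_eq_conj_mul_self, starRingEnd_apply]
    ring
  have e3 : ((V * y * Uᴴ) * (U * diagonal (fun i => (r i : ℂ)) * Uᴴ) * (V * y * Uᴴ)ᴴ).trace
      = ∑ i, ∑ j, (r j : ℂ) * (Complex.normSq (y i j) : ℂ) := by
    have : (V * y * Uᴴ) * (U * diagonal (fun i => (r i : ℂ)) * Uᴴ) * (V * y * Uᴴ)ᴴ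
      = V * (y * (Uᴴ * U) * (diagonal (fun i => (r i : ℂ)) * ((Uᴴ * U) * yᴴ)) * Vᴴ) := by
      simp only [conjTranspose_mul, conjTranspose_conjTranspose, Matrix.mul_assoc]
    rw [this, trace_mul_comm, Matrix.mul_assoc, hU, hV, Matrix.mul_one, Matrix.mul_one,
      Matrix.one_mul, trace]
    refine Finset.sum_congr rfl fun j _ => ?_
    rw [diag_apply, Matrix.mul_apply]
    refine Finset.sum_congr rfl fun i _ => ?_
    rw [diagonal_mul, conjTranspose_apply, Complex.normSq_eq_conj_mul_self, starRingEnd_apply]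
    ring
  rw [qform, e1, e2, e3]
  simp only [Complex.re_sum, Complex.re_ofReal_mul, ← Complex.ofReal_mul, Complex.ofReal_re,
    Finset.mul_sum, ← Finset.sum_sub_distrib]
  refine Finset.sum_congr rfl fun j _ => Finset.sum_congr rfl fun i _ => ?_
  ring

theorem term_le (t r s : ℝ) (w y : ℂ) (ht : 0 < t) (hr : 0 ≤ r) (hs : 0 ≤ s) :
    2 * (r * (star w * y).re) - (s + t * r) * Complex.normSq y
      ≤ Complex.normSq w * r * (r / (s + t * r)) := by
  rcases hr.eq_or_lt with h | h
  · subst h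
    have := mul_nonneg hs (Complex.normSq_nonneg y)
    simp [this]
  · have hd : 0 < s + t * r := by positivity
    rw [mul_div_assoc', le_div_iff₀ hd]
    simp only [Complex.normSq_apply, Complex.star_def, Complex.mul_re, Complex.conj_re,
      Complex.conj_im]
    nlinarith [sq_nonneg ((s + t * r) * y.re - r * w.re), sq_nonneg ((s + t * r) * y.im - r * w.im)]

theorem term_eq (t r s : ℝ) (w : ℂ) (ht : 0 < t) (hr : 0 ≤ r) (hs : 0 ≤ s) :
    2 * (r * (star w * (((r / (s + t * r) : ℝ) : ℂ) * w)).re)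
      - (s + t * r) * Complex.normSq (((r / (s + t * r) : ℝ) : ℂ) * w)
      = Complex.normSq w * r * (r / (s + t * r)) := by
  rcases hr.eq_or_lt with h | h
  · subst h; simp
  · have hd : s + t * r ≠ 0 := by positivity
    simp only [Complex.normSq_apply, Complex.star_def, Complex.mul_re, Complex.mul_im,
      Complex.conj_re, Complex.conj_im, Complex.ofReal_re, Complex.ofReal_im]
    field_simp
    ring

theorem qform_le {n : Type*} [Fintype n] (t : ℝ) (ht : 0 < t) (U V X : Matrix n n ℂ) (r s : n → ℝ)
    (hU : Uᴴ * U = 1) (hV : Vᴴ * V = 1) (hU' : U * Uᴴ = 1) (hV' : V * Vᴴ = 1)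
    (hr : ∀ i, 0 ≤ r i) (hs : ∀ i, 0 ≤ s i) :
    qform t (U * diagonal (fun i => (r i : ℂ)) * Uᴴ) (V * diagonal (fun i => (s i : ℂ)) * Vᴴ) X
      ≤ ∑ i, ∑ j, Complex.normSq ((Vᴴ * U) i j) * r j * (r j / (s i + t * r j)) := by
  have hX : X = V * (Vᴴ * X * U) * Uᴴ := by
    calc X = (V * Vᴴ) * X * (U * Uᴴ) := by rw [hU', hV', Matrix.one_mul, Matrix.mul_one]
      _ = _ := by simp only [Matrix.mul_assoc]
  rw [hX, qform_eq t U V _ r s hU hV]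
  exact Finset.sum_le_sum fun i _ => Finset.sum_le_sum fun j _ =>
    term_le t _ _ _ _ ht (hr j) (hs i)

theorem qform_attained {n : Type*} [Fintype n] (t : ℝ) (ht : 0 < t) (U V : Matrix n n ℂ)
    (r s : n → ℝ) (hU : Uᴴ * U = 1) (hV : Vᴴ * V = 1)
    (hr : ∀ i, 0 ≤ r i) (hs : ∀ i, 0 ≤ s i) :
    ∃ X, qform t (U * diagonal (fun i => (r i : ℂ)) * Uᴴ)
        (V * diagonal (fun i => (s i : ℂ)) * Vᴴ) X
      = ∑ i, ∑ j, Complex.normSq ((Vᴴ * U) i j) * r j * (r j / (s i + t * r j)) := by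
  refine ⟨V * (Matrix.of fun i j => ((r j / (s i + t * r j) : ℝ) : ℂ) * (Vᴴ * U) i j) * Uᴴ, ?_⟩
  rw [qform_eq t U V _ r s hU hV]
  exact Finset.sum_congr rfl fun i _ => Finset.sum_congr rfl fun j _ =>
    term_eq t _ _ _ ht (hr j) (hs i)

/-! ### The scalar analysis -/

theorem log_hasDerivAt (p r s t : ℝ) (ht : 0 ≤ t) (h : p ≠ 0 → 0 < s ∧ 0 < r) :
    HasDerivAt (fun t => p * Real.log (s + t * r)) (p * (r / (s + t * r))) t := by
  by_cases hp : p = 0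
  · subst hp; simpa using hasDerivAt_const t (0 : ℝ)
  · obtain ⟨hs, hr⟩ := h hp
    have hd : s + t * r ≠ 0 := by positivity
    have h1 : HasDerivAt (fun t : ℝ => s + t * r) r t := by
      simpa using ((hasDerivAt_id t).mul_const r).const_add s
    exact (h1.log hd).const_mul p

theorem log_tendsto (p r s : ℝ) (h : p ≠ 0 → 0 < s ∧ 0 < r) :
    Filter.Tendsto (fun t => p * Real.log (s + t * r) - p * Real.log t) Filter.atTop
      (nhds (p * Real.log r)) := by
  by_cases hp : p = 0
  · subst hp; simp
  · obtain ⟨hs, hr⟩ := h hp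
    have h1 : Filter.Tendsto (fun t : ℝ => p * Real.log (s * t⁻¹ + r)) Filter.atTop
        (nhds (p * Real.log r)) := by
      have h2 : Filter.Tendsto (fun t : ℝ => s * t⁻¹ + r) Filter.atTop (nhds r) := by
        simpa using (tendsto_inv_atTop_zero.const_mul s).add_const r
      exact (h2.log hr.ne').const_mul p
    refine h1.congr' ?_
    filter_upwards [Filter.eventually_gt_atTop 0] with t ht
    rw [← mul_sub, ← Real.log_div (by positivity) ht.ne']
    congr 2
    field_simp

theorem scalar_mono {ι κ : Type*} [Fintype ι] [Fintype κ] (p r s : ι → ℝ) (p' r' s' : κ → ℝ)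
    (h : ∀ i, p i ≠ 0 → 0 < s i ∧ 0 < r i) (h' : ∀ i, p' i ≠ 0 → 0 < s' i ∧ 0 < r' i)
    (hsum : ∑ i, p i = ∑ i, p' i)
    (hle : ∀ t, 0 < t → ∑ i, p' i * (r' i / (s' i + t * r' i)) ≤ ∑ i, p i * (r i / (s i + t * r i))) :
    ∑ i, p' i * Real.log (r' i) - ∑ i, p' i * Real.log (s' i)
      ≤ ∑ i, p i * Real.log (r i) - ∑ i, p i * Real.log (s i) := by
  set g : ℝ → ℝ := fun t => ∑ i, p i * Real.log (s i + t * r i)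
    - ∑ i, p' i * Real.log (s' i + t * r' i) with hg
  have hd : ∀ t, 0 ≤ t → HasDerivAt g (∑ i, p i * (r i / (s i + t * r i))
      - ∑ i, p' i * (r' i / (s' i + t * r' i))) t := fun t ht =>
    (HasDerivAt.fun_sum fun i _ => log_hasDerivAt _ _ _ t ht (h i)).sub
      (HasDerivAt.fun_sum fun i _ => log_hasDerivAt _ _ _ t ht (h' i))
  have hm : MonotoneOn g (Set.Ici 0) := by
    refine monotoneOn_of_deriv_nonneg (convex_Ici 0)
      (fun t ht => (hd t ht).continuousAt.continuousWithinAt) ?_ ?_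
    · intro t ht
      rw [interior_Ici] at ht
      exact (hd t (le_of_lt ht)).differentiableAt.differentiableWithinAt
    · intro t ht
      rw [interior_Ici] at ht
      rw [(hd t (le_of_lt ht)).deriv]
      exact sub_nonneg.2 (hle t ht)
  have hlim : Filter.Tendsto g Filter.atTop
      (nhds (∑ i, p i * Real.log (r i) - ∑ i, p' i * Real.log (r' i))) := by
    have := (tendsto_finsetSum Finset.univ fun i _ => log_tendsto (p i) (r i) (s i) (h i)).sub
      (tendsto_finsetSum Finset.univ fun i _ => log_tendsto (p' i) (r' i) (s' i) (h' i))
    refine this.congr fun t => ?_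
    simp only [Finset.sum_sub_distrib, ← Finset.sum_mul, hg, hsum]
    ring
  have h0 : g 0 ≤ ∑ i, p i * Real.log (r i) - ∑ i, p' i * Real.log (r' i) := by
    refine ge_of_tendsto hlim ?_
    filter_upwards [Filter.eventually_ge_atTop 0] with t ht
    exact hm (Set.mem_Ici.2 le_rfl) ht ht
  simp only [hg, zero_mul, add_zero] at h0
  linarith

/-! ### Strong subadditivity -/

theorem ptraceL_posSemidef {α γ : Type*} [Fintype α] [Fintype γ]
    {ρ : Matrix (α × γ) (α × γ) ℂ} (h : ρ.PosSemidef) : (ptraceL ρ).PosSemidef := by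
  have : ptraceL ρ = ∑ a, ρ.submatrix (fun c => (a, c)) (fun c => (a, c)) := by
    ext i j
    simp [ptraceL, Matrix.sum_apply]
  rw [this]
  exact posSemidef_sum _ fun a _ => h.submatrix _

theorem conj_diag_eq {n : Type*} [Fintype n] (U V : Matrix n n ℂ) (r : n → ℝ) (i : n) :
    (((∑ j, Complex.normSq ((Vᴴ * U) i j) * r j : ℝ)) : ℂ)
      = (Vᴴ * (U * diagonal (fun i => (r i : ℂ)) * Uᴴ) * V) i i := by
  have : Vᴴ * (U * diagonal (fun i => (r i : ℂ)) * Uᴴ) * V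
      = (Vᴴ * U) * diagonal (fun i => (r i : ℂ)) * (Vᴴ * U)ᴴ := by
    simp only [conjTranspose_mul, conjTranspose_conjTranspose, Matrix.mul_assoc]
  rw [this, Matrix.mul_apply, Complex.ofReal_sum]
  refine Finset.sum_congr rfl fun j _ => ?_
  rw [mul_diagonal, conjTranspose_apply, Complex.ofReal_mul, Complex.normSq_eq_conj_mul_self,
    starRingEnd_apply]
  ring

theorem sum_normSq_eq {n : Type*} [Fintype n] (W : Matrix n n ℂ) (h : Wᴴ * W = 1) (j : n) :
    ∑ i, Complex.normSq (W i j) = 1 := by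
  have h1 := congrFun (congrFun h j) j
  rw [Matrix.mul_apply, Matrix.one_apply_eq] at h1
  have : ((∑ i, Complex.normSq (W i j) : ℝ) : ℂ) = 1 := by
    rw [← h1, Complex.ofReal_sum]
    refine Finset.sum_congr rfl fun i _ => ?_
    rw [conjTranspose_apply, Complex.normSq_eq_conj_mul_self, starRingEnd_apply]
  exact_mod_cast this

theorem one_kron_isometry {α γ : Type*} [Fintype α] [Fintype γ] (W W' : Matrix γ γ ℂ)
    (h : W * W' = 1) :
    ((1 : Matrix α α ℂ) ⊗ₖ W) * ((1 : Matrix α α ℂ) ⊗ₖ W') = 1 := by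
  rw [← mul_kronecker_mul, h, Matrix.one_mul]
  ext i j
  simp [kroneckerMap_apply, Matrix.one_apply, Prod.ext_iff]
  split_ifs <;> simp_all

/-- `diagonal d` with the classical decidability instance. -/
def diagC {n : Type*} (d : n → ℂ) : Matrix n n ℂ := diagonal d

theorem diagC_apply {n : Type*} (d : n → ℂ) (i j : n) :
    diagC d i j = if i = j then d i else 0 := diagonal_apply _ _ _

theorem trace_spectral {n : Type*} [Fintype n] (U : Matrix n n ℂ) (r : n → ℝ)
    (hU : Uᴴ * U = 1) :
    (U * diagonal (fun i => (r i : ℂ)) * Uᴴ).trace.re = ∑ i, r i := by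
  rw [trace_mul_comm, ← Matrix.mul_assoc, hU, Matrix.one_mul, trace_diagonal, Complex.re_sum]
  simp

/-- `M = 1` with the classical decidability instance. -/
def IsOneMat {n : Type*} (M : Matrix n n ℂ) : Prop := M = 1

theorem isOneMat_of_eq {n : Type*} [d : DecidableEq n] {M : Matrix n n ℂ} (h : M = 1) :
    IsOneMat M := by
  rw [IsOneMat, h]
  congr!

theorem isometry_mul {n : Type*} [Fintype n] (U V : Matrix n n ℂ)
    (hU : Uᴴ * U = 1) (hV' : V * Vᴴ = 1) : (Vᴴ * U)ᴴ * (Vᴴ * U) = 1 := by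
  rw [conjTranspose_mul, conjTranspose_conjTranspose]
  calc Uᴴ * V * (Vᴴ * U) = Uᴴ * (V * Vᴴ) * U := by simp only [Matrix.mul_assoc]
    _ = 1 := by rw [hV', Matrix.mul_one, hU]

theorem relent_package {α γ : Type*} [Fintype α] [Fintype γ]
    (ρ : Matrix (α × γ) (α × γ) ℂ) (hρ : ρ.PosSemidef) :
    ∃ p r s : (α × γ) × (α × γ) → ℝ,
      (∀ i, p i ≠ 0 → 0 < s i ∧ 0 < r i) ∧
      (∑ i, p i = ρ.trace.re) ∧
      (∀ t, 0 < t → ∀ X, qform t ρ ((1 : Matrix α α ℂ) ⊗ₖ ptraceL ρ) X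
        ≤ ∑ i, p i * (r i / (s i + t * r i))) ∧
      (∀ t, 0 < t → ∃ X, qform t ρ ((1 : Matrix α α ℂ) ⊗ₖ ptraceL ρ) X
        = ∑ i, p i * (r i / (s i + t * r i))) ∧
      ∑ i, p i * Real.log (r i) = - (Real.log 2 * vonNeumannEntropy ρ) ∧
      ∑ i, p i * Real.log (s i) = - (Real.log 2 * vonNeumannEntropy (ptraceL ρ)) := by
  obtain ⟨U, r, hU, hU', hr, hρU, hSρ⟩ := exists_spectral hρ
  obtain ⟨W, s, hW, hW', hs, hτW, hSτ⟩ := exists_spectral (ptraceL_posSemidef hρ)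
  set V : Matrix (α × γ) (α × γ) ℂ := (1 : Matrix α α ℂ) ⊗ₖ W with hVdef
  have hVH : Vᴴ = (1 : Matrix α α ℂ) ⊗ₖ Wᴴ := by
    rw [hVdef, conjTranspose_kronecker, conjTranspose_one]
  have hV : IsOneMat (Vᴴ * V) := by rw [hVH]; exact isOneMat_of_eq <| one_kron_isometry _ _ hW
  have hV' : IsOneMat (V * Vᴴ) := by rw [hVH]; exact isOneMat_of_eq <| one_kron_isometry _ _ hW'
  have hσ : (1 : Matrix α α ℂ) ⊗ₖ ptraceL ρ
      = V * diagC (fun i : α × γ => (s i.2 : ℂ)) * Vᴴ := by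
    have hd : diagC (fun i : α × γ => (s i.2 : ℂ))
        = (1 : Matrix α α ℂ) ⊗ₖ diagonal (fun i => (s i : ℂ)) := by
      ext i j
      simp only [diagC_apply, diagonal_apply, kroneckerMap_apply, Matrix.one_apply, Prod.ext_iff]
      split_ifs <;> simp_all
    rw [hd, hVH, hVdef, ← mul_kronecker_mul, ← mul_kronecker_mul, ← hτW]
    simp
  have hcol := sum_normSq_eq _ (isometry_mul U V hU hV')
  have hpn : ∀ i j, 0 ≤ Complex.normSq ((Vᴴ * U) i j) * r j := fun i j =>
    mul_nonneg (Complex.normSq_nonneg _) (hr j)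
  have hrow : ∀ c, ∑ a : α, ∑ j, Complex.normSq ((Vᴴ * U) (a, c) j) * r j = s c := by
    intro c
    have e : ((∑ a : α, ∑ j, Complex.normSq ((Vᴴ * U) (a, c) j) * r j : ℝ) : ℂ) = (s c : ℂ) := by
      rw [Complex.ofReal_sum]
      simp_rw [conj_diag_eq]
      rw [← hρU]
      have h1 : (Wᴴ * ptraceL ρ * W) c c = (s c : ℂ) := by
        rw [hτW]
        have : Wᴴ * (W * diagonal (fun i => (s i : ℂ)) * Wᴴ) * W
          = (Wᴴ * W) * diagonal (fun i => (s i : ℂ)) * (Wᴴ * W) := by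
          simp only [Matrix.mul_assoc]
        rw [this, hW, Matrix.one_mul, Matrix.mul_one, diagonal_apply_eq]
      rw [← h1, hVH, hVdef]
      simp only [Matrix.mul_apply, kroneckerMap_apply, Matrix.one_apply, ptraceL,
        Fintype.sum_prod_type, ite_mul, one_mul, zero_mul, mul_ite, mul_zero,
        Finset.sum_ite_irrel, Finset.sum_const_zero, Finset.sum_ite_eq, Finset.sum_ite_eq',
        Finset.mem_univ, if_true]
      rw [Finset.sum_comm]
      refine Finset.sum_congr rfl fun k _ => ?_
      rw [← Finset.sum_mul, Finset.sum_comm]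
      congr 1
      refine Finset.sum_congr rfl fun l _ => ?_
      rw [Finset.mul_sum]
    exact_mod_cast e
  refine ⟨fun x => Complex.normSq ((Vᴴ * U) x.1 x.2) * r x.2, fun x => r x.2, fun x => s x.1.2,
    ?_, ?_, ?_, ?_, ?_, ?_⟩
  · rintro ⟨⟨a, c⟩, j⟩ hp
    simp only at hp ⊢
    refine ⟨(hs c).lt_of_ne' fun h0 => hp ?_, (hr j).lt_of_ne' fun h0 => hp (by rw [h0, mul_zero])⟩
    have h1 := hrow c
    rw [h0, Finset.sum_eq_zero_iff_of_nonneg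
      (fun a _ => Finset.sum_nonneg fun j _ => hpn (a, c) j)] at h1
    have h2 := h1 a (Finset.mem_univ _)
    rw [Finset.sum_eq_zero_iff_of_nonneg (fun j _ => hpn (a, c) j)] at h2
    exact h2 j (Finset.mem_univ _)
  · rw [Fintype.sum_prod_type, Finset.sum_comm]
    simp only [← Finset.sum_mul, hcol, one_mul]
    rw [hρU, trace_spectral U r hU]
  · intro t ht X
    rw [hσ, Fintype.sum_prod_type]
    have := qform_le t ht U V X r (fun i => s i.2) hU hV hU' hV' hr (fun i => hs i.2)
    rw [← hρU] at this
    exact this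
  · intro t ht
    rw [hσ, Fintype.sum_prod_type]
    have := qform_attained t ht U V r (fun i => s i.2) hU hV hr (fun i => hs i.2)
    rw [← hρU] at this
    exact this
  · rw [Fintype.sum_prod_type, Finset.sum_comm, hSρ, neg_neg]
    simp only [← Finset.sum_mul, hcol, one_mul]
  · rw [Fintype.sum_prod_type, hSτ, neg_neg]
    simp only [← Finset.sum_mul]
    rw [Fintype.sum_prod_type, Finset.sum_comm]
    simp only [← Finset.sum_mul, hrow]

theorem qform_ext {α β γ : Type*} [Fintype α] [Fintype β] [Fintype γ] (t : ℝ)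
    (ρ : Matrix (α × β × γ) (α × β × γ) ℂ) (X : Matrix (α × β) (α × β) ℂ) :
    ∃ Y, qform t ρ ((1 : Matrix α α ℂ) ⊗ₖ ptraceL ρ) Y
      = qform t (margAB ρ) ((1 : Matrix α α ℂ) ⊗ₖ ptraceL (margAB ρ)) X := by
  -- `Y = X ⊗ 1`
  have key : ∀ (τ : Matrix (α × β × γ) (α × β × γ) ℂ) (Z : Matrix (α × β) (α × β) ℂ),
      (τ * (Matrix.of fun x y : α × β × γ =>
        if x.2.2 = y.2.2 then Z (x.1, x.2.1) (y.1, y.2.1) else 0)).trace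
        = (margAB τ * Z).trace := by
    intro τ Z
    simp only [trace, diag_apply, Matrix.mul_apply, margAB, of_apply, Fintype.sum_prod_type,
      mul_ite, mul_zero, Finset.sum_ite_eq', Finset.mem_univ, if_true,
      Finset.sum_mul]
    refine Finset.sum_congr rfl fun a _ => Finset.sum_congr rfl fun b _ => ?_
    rw [Finset.sum_comm]
    refine Finset.sum_congr rfl fun a' _ => ?_
    rw [Finset.sum_comm]
  have hmul : ∀ Z Z' : Matrix (α × β) (α × β) ℂ,
      (Matrix.of fun x y : α × β × γ =>
        if x.2.2 = y.2.2 then Z (x.1, x.2.1) (y.1, y.2.1) else 0)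
      * (Matrix.of fun x y : α × β × γ =>
        if x.2.2 = y.2.2 then Z' (x.1, x.2.1) (y.1, y.2.1) else 0)
      = (Matrix.of fun x y : α × β × γ =>
        if x.2.2 = y.2.2 then (Z * Z') (x.1, x.2.1) (y.1, y.2.1) else 0) := by
    intro Z Z'
    ext ⟨a, b, c⟩ ⟨a', b', c'⟩
    simp only [Matrix.mul_apply, of_apply, Fintype.sum_prod_type, ite_mul, zero_mul,
      mul_ite, mul_zero]
    by_cases hc : c = c' <;> simp [hc]
  have hct : (Matrix.of fun x y : α × β × γ =>
        if x.2.2 = y.2.2 then X (x.1, x.2.1) (y.1, y.2.1) else 0)ᴴ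
      = (Matrix.of fun x y : α × β × γ =>
        if x.2.2 = y.2.2 then Xᴴ (x.1, x.2.1) (y.1, y.2.1) else 0) := by
    ext x y
    simp only [conjTranspose_apply, of_apply, eq_comm (a := y.2.2)]
    split_ifs <;> simp
  have hσ : margAB ((1 : Matrix α α ℂ) ⊗ₖ ptraceL ρ)
      = (1 : Matrix α α ℂ) ⊗ₖ ptraceL (margAB ρ) := by
    ext ⟨a, b⟩ ⟨a', b'⟩
    simp only [margAB, kroneckerMap_apply, ptraceL]
    rw [Finset.sum_comm, Finset.mul_sum]
  refine ⟨Matrix.of fun x y : α × β × γ =>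
        if x.2.2 = y.2.2 then X (x.1, x.2.1) (y.1, y.2.1) else 0, ?_⟩
  unfold qform
  rw [trace_mul_cycle (Matrix.of _)ᴴ, trace_mul_cycle (Matrix.of _) ρ]
  rw [trace_mul_comm _ ((1 : Matrix α α ℂ) ⊗ₖ ptraceL ρ), trace_mul_comm _ ρ, hct, hmul, hmul,
    key, key, key, hσ, trace_mul_cycle Xᴴ, trace_mul_cycle X (margAB ρ),
    trace_mul_comm _ ((1 : Matrix α α ℂ) ⊗ₖ ptraceL (margAB ρ)), trace_mul_comm _ (margAB ρ)]

theorem margAB_posSemidef {α β γ : Type*} [Fintype α] [Fintype β] [Fintype γ]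
    {ρ : Matrix (α × β × γ) (α × β × γ) ℂ} (h : ρ.PosSemidef) : (margAB ρ).PosSemidef := by
  have : margAB ρ = ∑ e, ρ.submatrix (fun c => (c.1, c.2, e)) (fun c => (c.1, c.2, e)) := by
    ext i j
    simp [margAB, Matrix.sum_apply]
  rw [this]
  exact posSemidef_sum _ fun a _ => h.submatrix _

theorem trace_margAB {α β γ : Type*} [Fintype α] [Fintype β] [Fintype γ]
    (ρ : Matrix (α × β × γ) (α × β × γ) ℂ) : (margAB ρ).trace = ρ.trace := by
  simp [trace, margAB, Fintype.sum_prod_type]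

/-- Strong subadditivity. -/
theorem ssa_s14 {α β γ : Type*} [Fintype α] [Fintype β] [Fintype γ]
    {ρ : Matrix (α × β × γ) (α × β × γ) ℂ} (h : ρ.PosSemidef) :
    vonNeumannEntropy ρ + vonNeumannEntropy (ptraceL (margAB ρ))
      ≤ vonNeumannEntropy (margAB ρ) + vonNeumannEntropy (margBE ρ) := by
  obtain ⟨p, r, s, h1, h2, h3, -, h5, h6⟩ := relent_package ρ h
  obtain ⟨p', r', s', h1', h2', -, h4', h5', h6'⟩ :=
    relent_package (margAB ρ) (margAB_posSemidef h)
  have := scalar_mono p r s p' r' s' h1 h1' (by rw [h2, h2', trace_margAB]) (by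
    intro t ht
    obtain ⟨X, hX⟩ := h4' t ht
    obtain ⟨Y, hY⟩ := qform_ext t ρ X
    rw [← hX, ← hY]
    exact h3 t ht Y)
  rw [h5, h6, h5', h6'] at this
  have hBE : margBE ρ = ptraceL ρ := rfl
  rw [hBE]
  have hl : 0 < Real.log 2 := Real.log_pos one_lt_two
  nlinarith

/-! ### Weak monotonicity by purification, and the main theorem -/

theorem exists_factor {n : Type*} [Fintype n] {ρ : Matrix n n ℂ} (h : ρ.PosSemidef) :
    ∃ M : Matrix n n ℂ, ρ = M * Mᴴ := by
  obtain ⟨U, r, hU, hU', hr, hρU, -⟩ := exists_spectral h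
  refine ⟨U * diagonal (fun i => ((Real.sqrt (r i) : ℝ) : ℂ)), ?_⟩
  have hd : diagonal (fun i => ((Real.sqrt (r i) : ℝ) : ℂ))
      * (diagonal (fun i => ((Real.sqrt (r i) : ℝ) : ℂ)))ᴴ = diagonal (fun i => (r i : ℂ)) := by
    rw [diagonal_conjTranspose, diagonal_mul_diagonal]
    congr 1
    funext i
    simp [← Complex.ofReal_mul, Real.mul_self_sqrt (hr i)]
  rw [conjTranspose_mul, Matrix.mul_assoc, ← Matrix.mul_assoc (diagonal _), hd,
    ← Matrix.mul_assoc, ← hρU]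

theorem margAE_hermitian {α β γ : Type*} [Fintype α] [Fintype β] [Fintype γ]
    {ρ : Matrix (α × β × γ) (α × β × γ) ℂ} (h : ρ.IsHermitian) : (margAE ρ).IsHermitian := by
  ext x y
  simp [margAE, conjTranspose_apply, ← h.apply (_, _, _) (y.1, _, y.2)]

theorem margBE_hermitian {α β γ : Type*} [Fintype α] [Fintype β] [Fintype γ]
    {ρ : Matrix (α × β × γ) (α × β × γ) ℂ} (h : ρ.IsHermitian) : (margBE ρ).IsHermitian := by
  ext x y
  simp [margBE, conjTranspose_apply, ← h.apply (_, _, _) (_, y.1, y.2)]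

theorem margE_hermitian {α β γ : Type*} [Fintype α] [Fintype β] [Fintype γ]
    {ρ : Matrix (α × β × γ) (α × β × γ) ℂ} (h : ρ.IsHermitian) : (margE ρ).IsHermitian := by
  ext x y
  simp [margE, conjTranspose_apply, ← h.apply (_, _, _) (_, _, y)]

theorem weak_mono {α β γ : Type*} [Fintype α] [Fintype β] [Fintype γ]
    {ρ : Matrix (α × β × γ) (α × β × γ) ℂ} (h : ρ.PosSemidef) :
    vonNeumannEntropy (margE ρ) + vonNeumannEntropy (ptraceL (margAB ρ))
      ≤ vonNeumannEntropy (margAB ρ) + vonNeumannEntropy (margAE ρ) := by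
  obtain ⟨M, hM⟩ := exists_factor h
  have hMe : ∀ x y, ρ x y = ∑ f, M x f * star (M y f) := by
    intro x y
    rw [hM, Matrix.mul_apply]
    rfl
  set K : Matrix (α × β × (α × β × γ)) γ ℂ :=
    Matrix.of fun x e => M (x.1, x.2.1, e) x.2.2 with hK
  set L : Matrix (β × (α × β × γ)) (α × γ) ℂ :=
    Matrix.of fun x y => M (y.1, x.1, y.2) x.2 with hL
  have hE : Kᴴ * K = (margE ρ)ᵀ := by
    ext e e'
    simp only [hK, Matrix.mul_apply, conjTranspose_apply, of_apply, transpose_apply, margE, hMe]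
    rw [Fintype.sum_prod_type]
    refine Finset.sum_congr rfl fun a _ => ?_
    rw [Fintype.sum_prod_type]
    refine Finset.sum_congr rfl fun b _ => Finset.sum_congr rfl fun f _ => ?_
    rw [mul_comm]
  have hAE : Lᴴ * L = (margAE ρ)ᵀ := by
    ext e e'
    simp only [hL, Matrix.mul_apply, conjTranspose_apply, of_apply, transpose_apply, margAE, hMe]
    rw [Fintype.sum_prod_type]
    refine Finset.sum_congr rfl fun b _ => Finset.sum_congr rfl fun f _ => ?_
    rw [mul_comm]
  have hAB : margAB (K * Kᴴ) = margAB ρ := by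
    ext x y
    simp only [hK, Matrix.mul_apply, conjTranspose_apply, of_apply, margAB, hMe]
    rw [Finset.sum_comm]
  have hBF : margBE (K * Kᴴ) = L * Lᴴ := by
    ext x y
    simp only [hK, hL, Matrix.mul_apply, conjTranspose_apply, of_apply, margBE]
    rw [Fintype.sum_prod_type]
  have := ssa_s14 (posSemidef_self_mul_conjTranspose K)
  rw [hAB, hBF, entropy_mul_comm K, entropy_mul_comm L, hE, hAE,
    entropy_transpose (margE_hermitian h.1), entropy_transpose (margAE_hermitian h.1)] at this
  exact this

theorem condMutualInfo_ge {α β γ : Type*} [Fintype α] [Fintype β] [Fintype γ]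
    {ρ : Matrix (α × β × γ) (α × β × γ) ℂ} (h : ρ.PosSemidef) :
    2 * (vonNeumannEntropy (ptraceL (margAB ρ)) - vonNeumannEntropy (margAB ρ))
      ≤ condMutualInfo ρ := by
  have h1 := ssa_s14 h
  have h2 := weak_mono h
  unfold condMutualInfo
  linarith

/-- Swap of the first two factors. -/
def swapEquiv (α β γ : Type*) : β × α × γ ≃ α × β × γ where
  toFun x := (x.2.1, x.1, x.2.2)
  invFun x := (x.2.1, x.1, x.2.2)
  left_inv _ := rfl
  right_inv _ := rfl

theorem condMutualInfo_ge' {α β γ : Type*} [Fintype α] [Fintype β] [Fintype γ]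
    {ρ : Matrix (α × β × γ) (α × β × γ) ℂ} (h : ρ.PosSemidef) :
    2 * (vonNeumannEntropy (ptraceR (margAB ρ)) - vonNeumannEntropy (margAB ρ))
      ≤ condMutualInfo ρ := by
  have h1 := condMutualInfo_ge (h.submatrix (swapEquiv α β γ))
  have e1 : margAE (ρ.submatrix (swapEquiv α β γ) (swapEquiv α β γ)) = margBE ρ := rfl
  have e2 : margBE (ρ.submatrix (swapEquiv α β γ) (swapEquiv α β γ)) = margAE ρ := rfl
  have e3 : margE (ρ.submatrix (swapEquiv α β γ) (swapEquiv α β γ)) = margE ρ := by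
    ext x y
    simp only [margE]
    rw [Finset.sum_comm]
    rfl
  have e4 : margAB (ρ.submatrix (swapEquiv α β γ) (swapEquiv α β γ))
    = (margAB ρ).submatrix (Equiv.prodComm β α) (Equiv.prodComm β α) := rfl
  have e5 : ptraceL ((margAB ρ).submatrix (Equiv.prodComm β α) (Equiv.prodComm β α))
    = ptraceR (margAB ρ) := rfl
  unfold condMutualInfo at h1 ⊢
  rw [e1, e2, e3, e4, e5, entropy_submatrix _ h.1,
    entropy_submatrix _ (margAB_posSemidef h).1] at h1
  linarith

theorem exists_extension {α β : Type*} [Fintype α] [Fintype β]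
    (ρ : Matrix (α × β) (α × β) ℂ) (hρ : IsState ρ) :
    ∃ ρE : Matrix (α × β × Fin 1) (α × β × Fin 1) ℂ, IsState ρE ∧ margAB ρE = ρ := by
  have h : margAB (ρ.submatrix (fun x : α × β × Fin 1 => (x.1, x.2.1))
      (fun x : α × β × Fin 1 => (x.1, x.2.1))) = ρ := by
    ext x y
    simp [margAB]
  refine ⟨_, ⟨hρ.1.submatrix _, ?_⟩, h⟩
  rw [← trace_margAB, h, hρ.2]

/-- For every state `ρ^{AB}`,
`(1/2)(I(A;B) - S(AB)) ≤ E_sq(ρ^{AB})`, where `I(A;B) = S(A) + S(B) - S(AB)`. -/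
theorem half_mutualInfo_sub_entropy_le_squashedEntanglement
    {A B : Type*} [Fintype A] [Fintype B]
    (ρ : Matrix (A × B) (A × B) ℂ) (hρ : IsState ρ) :
    (1 / 2) * ((vonNeumannEntropy (ptraceR ρ) + vonNeumannEntropy (ptraceL ρ)
        - vonNeumannEntropy ρ) - vonNeumannEntropy ρ)
      ≤ Esq ρ := by
  refine le_csInf ?_ ?_
  · obtain ⟨ρE, h1, h2⟩ := exists_extension ρ hρ
    exact ⟨_, 1, ρE, h1, h2, rfl⟩
  · rintro x ⟨d, ρE, h1, h2, rfl⟩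
    have h3 := condMutualInfo_ge h1.1
    have h4 := condMutualInfo_ge' h1.1
    rw [h2] at h3 h4
    linarith

end
end
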